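/- Let φ satisfy: φ : ℝ → [0,∞) continuous, C² on (0,∞), φ = 0 on (−∞,0], φ > 0 on (0,∞), φ' > 0 on (0,∞), and φ(η) = C η^k + O(η^{k+δ}) as η → 0+ with C > 0, 0 < k < 3/2, δ > 0; set a = (k + 1/2)/2. For κ > 0 let (f_κ, λ_κ, μ_κ) be the induced Einstein–Vlasov steady state with central redshift κ, with particle energy E(x,v) = e^{μ_κ(r)}⟨v⟩ and cut-off energy E₀ = e^{lim_{r→∞} y_κ(r)}, and let D = {f_κ > 0}. Then there exist constants C* > 0 and κ* > 0 such that for every 0 < κ ≤ κ* and every spherically symmetric function h ∈ C¹(D̄) which is odd in v, the quadratic form satisfies A(f_h, f_h) ≥ C* ∬ |φ'(E)| ( (rw)² |{E, h/(rw)}|² + κ^{1+2a} |h|² ) dv dx, where f_h is the linearly dynamically accessible perturbation generated by h. -/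

import Mathlib

/-!
The form `A(f_h, f_h)` is a positive transport term minus a nonnegative metric term, so
the point is that the transport term wins with a margin of order `κ^(1+2a)`.

Everything is written in terms of the normalised energy `S = E/E₀ = e^{-y}⟨v⟩`, which is constant
along its Hamiltonian vector field `X`. Since `h` is odd in `v` and invariant under rotations, the
half-turn about the axis `x` shows that `h` is odd in the part of `v` parallel to `x` alone, so
`|h| ≤ C|w|` (`gen_exists`) and the quotient `h/(rw)` has only a `1/r` singularity.

Put `G = {rw, S}`. Then `{G, S} = -rw Q` for an explicit potential `Q`, and
`{h, S} = rw {h/(rw), S} + (h/(rw)) G`. Squaring and integrating the divergence of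
`|φ'| G h²/(rw) X`, which is justified with cut-offs near the boundary of the support and near
`rw = 0` (`ibp_aux`, `ibp`), yields

  `∬ |φ'| {h, S}² = ∬ |φ'| (rw)² {h/(rw), S}² + ∬ |φ'| h² Q`.

Two facts decide the sign.
* By Cauchy–Schwarz in `v` and the identity `∫ |φ'| w² dv = e^y (g(y) + h(y))` (`cs`, `psi_w2`,
  `Lam_sq`), the metric term is at most the contribution to `Q` of the local density
  `4π e^{-2y} g(y)`, up to an error `O(κ · κ^(1+2a)) h²`.
* By the field equations, `Q` exceeds that contribution by a multiple of the mean density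
  `m(r)/r³`. This is at least a multiple of `κ^(1+2a)` on the support (`Q_ge`,
  `steady_bounds`), because the support has radius `O(κ^{-a})`.

The radius bound compares the mass with a superlinear differential inequality (`radius_ineq`); it
is here that `k < 3/2`, in the form `2a < 2`, enters. The remaining terms, which couple `{h, S}`
to `λ_h`, are `O(κ · κ^(1+2a)) h²` (`err_ge`, `first_ge`) and are absorbed for small `κ`. This
gives `Regime.core`, and `Aform_eq` and `rhs_le` restate it for the energy–Casimir functional.
-/

open MeasureTheory Set Filter Topology
open scoped ENNReal RealInnerProductSpace

noncomputable section

/-- Position/momentum space `ℝ³`. -/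
abbrev V3 : Type := EuclideanSpace ℝ (Fin 3)

/-- A rotation: a linear isometry of `ℝ³` with determinant `1` (an element of SO(3)). -/
def IsRot (A : V3 ≃ₗᵢ[ℝ] V3) : Prop :=
  LinearMap.det (A.toLinearEquiv : V3 →ₗ[ℝ] V3) = 1

/-- Spherical symmetry of a phase-space function. -/
def SphSym (h : V3 × V3 → ℝ) : Prop :=
  ∀ A : V3 ≃ₗᵢ[ℝ] V3, IsRot A → ∀ x v : V3, h (A x, A v) = h (x, v)

/-- The Poisson bracket `{g,h} = ∂_x g · ∂_v h − ∂_v g · ∂_x h`. -/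
def pbracket (g h : V3 × V3 → ℝ) (z : V3 × V3) : ℝ :=
  ⟪gradient (fun x => g (x, z.2)) z.1, gradient (fun v => h (z.1, v)) z.2⟫
  - ⟪gradient (fun v => g (z.1, v)) z.2, gradient (fun x => h (x, z.2)) z.1⟫

/-- `⟨v⟩ = √(1+|v|²)`. -/
def jap (v : V3) : ℝ := Real.sqrt (1 + ‖v‖ ^ 2)

/-- `w = x·v/r`. -/
def wfun (z : V3 × V3) : ℝ := ⟪z.1, z.2⟫ / ‖z.1‖

/-- The unit vector `e₁ ∈ ℝ³`. -/
def e1 : V3 := EuclideanSpace.single (0 : Fin 3) (1 : ℝ)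

/-- Einstein–Vlasov density profile `g`. -/
def gEV (φ : ℝ → ℝ) (y : ℝ) : ℝ :=
  if 0 < y then 4 * Real.pi * Real.exp (4 * y) *
    ∫ η in (0 : ℝ)..(1 - Real.exp (-y)),
      φ η * (1 - η) ^ 2 * Real.sqrt ((1 - η) ^ 2 - Real.exp (-2 * y))
  else 0

/-- Einstein–Vlasov pressure profile `h`. -/
def hEV (φ : ℝ → ℝ) (y : ℝ) : ℝ :=
  if 0 < y then 4 * Real.pi / 3 * Real.exp (4 * y) *
    ∫ η in (0 : ℝ)..(1 - Real.exp (-y)),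
      φ η * ((1 - η) ^ 2 - Real.exp (-2 * y)) ^ ((3 : ℝ) / 2)
  else 0

/-- The mass function `m(r) = 4π ∫₀^r g(y(s)) s² ds`. -/
def mEV (φ : ℝ → ℝ) (y : ℝ → ℝ) (r : ℝ) : ℝ :=
  4 * Real.pi * ∫ s in (0 : ℝ)..r, gEV φ (y s) * s ^ 2

/-- `y` solves the stationary Einstein–Vlasov equation with `y(0) = κ`. -/
def IsEVSteady (φ : ℝ → ℝ) (κ : ℝ) (y : ℝ → ℝ) : Prop :=
  ContDiffOn ℝ 2 y (Ici 0) ∧ y 0 = κ ∧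
  ∀ r : ℝ, 0 < r → 2 * mEV φ y r < r ∧
    deriv y r = -(1 - 2 * mEV φ y r / r)⁻¹ *
      (mEV φ y r / r ^ 2 + 4 * Real.pi * r * hEV φ (y r))

/-- The particle energy `E(x,v) = e^{μ(r)}⟨v⟩`. -/
def Epart (μf : ℝ → ℝ) (z : V3 × V3) : ℝ := Real.exp (μf ‖z.1‖) * jap z.2

/-- `φ'(E)`, the derivative of `E ↦ φ(1 − E/E₀)`. -/
def phiE (φ : ℝ → ℝ) (E0 e : ℝ) : ℝ := deriv (fun s => φ (1 - s / E0)) e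

/-- `λ_h(x) = 4π r e^{μ+λ} ∫ φ'(E) h(x,v) w dv` with `r = |x|`. -/
def lamh (μf lamf : ℝ → ℝ) (E0 : ℝ) (φ : ℝ → ℝ) (h : V3 × V3 → ℝ) (x : V3) : ℝ :=
  4 * Real.pi * ‖x‖ * Real.exp (μf ‖x‖ + lamf ‖x‖) *
    ∫ v : V3, phiE φ E0 (Epart μf (x, v)) * h (x, v) * wfun (x, v)

/-- The linearly dynamically accessible perturbation
`f_h = φ'(E)(e^{−λ}{h,E} + e^{μ} λ_h w²/⟨v⟩)` generated by `h`. -/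
def fh (μf lamf : ℝ → ℝ) (E0 : ℝ) (φ : ℝ → ℝ) (h : V3 × V3 → ℝ) (z : V3 × V3) : ℝ :=
  phiE φ E0 (Epart μf z) *
    (Real.exp (-(lamf ‖z.1‖)) * pbracket h (Epart μf) z +
      Real.exp (μf ‖z.1‖) * lamh μf lamf E0 φ h z.1 * (wfun z) ^ 2 / jap z.2)

/-- The second variation of the energy–Casimir functional,
`A(δf,δf) = (1/2)∬ e^{λ} δf²/|φ'(E)| dv dx − (1/2)∫₀^∞ e^{μ−λ}(2rμ'+1) δλ² dr`. -/
def Aform (μf lamf : ℝ → ℝ) (E0 : ℝ) (φ : ℝ → ℝ) (δf : V3 × V3 → ℝ) (dl : ℝ → ℝ) : ℝ :=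
  (1 / 2) * (∫ z : V3 × V3,
      Real.exp (lamf ‖z.1‖) * (δf z) ^ 2 / |phiE φ E0 (Epart μf z)|) -
    (1 / 2) * ∫ r in Ioi (0 : ℝ),
      Real.exp (μf r - lamf r) * (2 * r * deriv μf r + 1) * (dl r) ^ 2

/-! ### The profiles `g` and `h` -/

/-- The square root `√((1-η)² - e^{-2y})`; it vanishes for `η ∈ [0,1]` beyond `1 - e^{-y}`. -/
def rt (y η : ℝ) : ℝ := Real.sqrt ((1 - η) ^ 2 - Real.exp (-2 * y))

lemma rt_nonneg (y η : ℝ) : 0 ≤ rt y η := Real.sqrt_nonneg _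

lemma rt_cont : Continuous (fun p : ℝ × ℝ => rt p.1 p.2) := by
  unfold rt; fun_prop

lemma rt_cont_right (y : ℝ) : Continuous (rt y) := by
  unfold rt; fun_prop

lemma rt_zero {y η : ℝ} (h1 : η ≤ 1) (h2 : 1 - Real.exp (-y) ≤ η) : rt y η = 0 := by
  apply Real.sqrt_eq_zero_of_nonpos
  have : Real.exp (-2 * y) = Real.exp (-y) ^ 2 := by
    rw [← Real.exp_nat_mul]; congr 1; push_cast; ring
  rw [this]
  nlinarith [Real.exp_pos (-y)]

lemma rt_mono {y1 y2 : ℝ} (h : y1 ≤ y2) (η : ℝ) : rt y1 η ≤ rt y2 η := by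
  apply Real.sqrt_le_sqrt
  have := Real.exp_le_exp.2 (show -2 * y2 ≤ -2 * y1 by linarith)
  linarith

lemma integral_cut {f : ℝ → ℝ} (hf : Continuous f) {y : ℝ} (_hy : 0 < y)
    (h0 : ∀ η, η ≤ 1 → 1 - Real.exp (-y) ≤ η → f η = 0) :
    ∫ η in (0:ℝ)..(1 - Real.exp (-y)), f η = ∫ η in (0:ℝ)..1, f η := by
  rw [← intervalIntegral.integral_add_adjacent_intervals (b := 1 - Real.exp (-y)) (c := 1)
    (hf.intervalIntegrable _ _) (hf.intervalIntegrable _ _)]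
  have : ∫ η in (1 - Real.exp (-y))..1, f η = 0 := by
    rw [intervalIntegral.integral_congr (g := fun _ => 0)]
    · simp
    · intro η hη
      rw [uIcc_of_le (by linarith [Real.exp_pos (-y)])] at hη
      exact h0 η hη.2 hη.1
  rw [this, add_zero]

/-- For `y ≤ 0` the root vanishes on `[0,1]`, so the unified integrals below reproduce the zero
branch of `gEV` and `hEV`. -/
lemma integral_rt_zero {f : ℝ → ℝ} {y : ℝ} (hy : y ≤ 0) (h0 : ∀ η, rt y η = 0 → f η = 0) :
    ∫ η in (0:ℝ)..1, f η = 0 := by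
  rw [intervalIntegral.integral_congr (g := fun _ => 0)]
  · simp
  · intro η hη
    rw [uIcc_of_le (by norm_num)] at hη
    apply h0
    apply rt_zero hη.2
    have := Real.one_le_exp (show 0 ≤ -y by linarith)
    linarith [hη.1]

/-- The density profile as an integral over the fixed interval `[0,1]`, valid for every `y`. -/
lemma gEV_eq {φ : ℝ → ℝ} (hφ : Continuous φ) (y : ℝ) :
    gEV φ y = 4 * Real.pi * Real.exp (4 * y) *
      ∫ η in (0:ℝ)..1, φ η * (1 - η) ^ 2 * rt y η := by
  unfold gEV
  split_ifs with hy
  · congr 1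
    apply integral_cut (f := fun η => φ η * (1 - η) ^ 2 * rt y η) _ hy
    · intro η h1 h2; simp [rt_zero h1 h2]
    · have := rt_cont_right y; fun_prop
  · rw [integral_rt_zero (y := y) (by linarith)]
    · simp
    · intro η h; simp [h]

lemma hEV_eq {φ : ℝ → ℝ} (hφ : Continuous φ) (y : ℝ) :
    hEV φ y = 4 * Real.pi / 3 * Real.exp (4 * y) *
      ∫ η in (0:ℝ)..1, φ η * rt y η ^ 3 := by
  unfold hEV
  split_ifs with hy
  · congr 1
    rw [← integral_cut (f := fun η => φ η * rt y η ^ 3) _ hy]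
    · apply intervalIntegral.integral_congr
      intro η hη
      have hpos : 0 ≤ 1 - Real.exp (-y) := by
        have := Real.exp_le_one_iff.2 (show -y ≤ 0 by linarith); linarith
      rw [uIcc_of_le hpos] at hη
      have h0 : 0 ≤ (1 - η) ^ 2 - Real.exp (-2 * y) := by
        have : Real.exp (-2 * y) = Real.exp (-y) ^ 2 := by
          rw [← Real.exp_nat_mul]; congr 1; push_cast; ring
        rw [this]
        have := hη.2
        nlinarith [Real.exp_pos (-y)]
      simp only [rt]
      congr 1
      rw [Real.sqrt_eq_rpow, ← Real.rpow_natCast (_ ^ ((1:ℝ)/2)), ← Real.rpow_mul h0]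
      norm_num
    · intro η h1 h2; simp [rt_zero h1 h2]
    · have := rt_cont_right y; fun_prop
  · rw [integral_rt_zero (y := y) (by linarith)]
    · simp
    · intro η h; simp [h]

lemma gEV_cont {φ : ℝ → ℝ} (hφ : Continuous φ) : Continuous (gEV φ) := by
  have : gEV φ = fun y => 4 * Real.pi * Real.exp (4 * y) *
      ∫ η in (0:ℝ)..1, φ η * (1 - η) ^ 2 * rt y η := funext (gEV_eq hφ)
  rw [this]
  have h1 : Continuous (fun y => ∫ η in (0:ℝ)..1, φ η * (1 - η) ^ 2 * rt y η) := by
    apply intervalIntegral.continuous_parametric_intervalIntegral_of_continuous'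
    have := rt_cont
    simp only [Function.uncurry_def]
    fun_prop
  fun_prop

section pos
variable {φ : ℝ → ℝ} (hnn : ∀ η, 0 ≤ φ η)
include hnn

lemma gInt_nonneg (y : ℝ) : 0 ≤ ∫ η in (0:ℝ)..1, φ η * (1 - η) ^ 2 * rt y η := by
  apply intervalIntegral.integral_nonneg (by norm_num)
  intro η _
  have := hnn η; have := rt_nonneg y η; positivity

lemma hInt_nonneg (y : ℝ) : 0 ≤ ∫ η in (0:ℝ)..1, φ η * rt y η ^ 3 := by
  apply intervalIntegral.integral_nonneg (by norm_num)
  intro η _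
  have := hnn η; have := rt_nonneg y η; positivity

variable (hφ : Continuous φ)
include hφ

lemma gEV_nonneg (y : ℝ) : 0 ≤ gEV φ y := by
  rw [gEV_eq hφ]
  have := gInt_nonneg hnn y
  have := Real.pi_pos
  positivity

lemma hEV_nonneg (y : ℝ) : 0 ≤ hEV φ y := by
  rw [hEV_eq hφ]
  have := hInt_nonneg hnn y
  have := Real.pi_pos
  positivity

lemma gEV_mono : Monotone (gEV φ) := by
  intro y1 y2 h
  rw [gEV_eq hφ, gEV_eq hφ]
  have h0 := gInt_nonneg hnn y1
  have := Real.pi_pos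
  have h1 : ∫ η in (0:ℝ)..1, φ η * (1 - η) ^ 2 * rt y1 η ≤
      ∫ η in (0:ℝ)..1, φ η * (1 - η) ^ 2 * rt y2 η := by
    have c1 := rt_cont_right y1
    have c2 := rt_cont_right y2
    apply intervalIntegral.integral_mono_on (by norm_num)
      (Continuous.intervalIntegrable (by fun_prop) _ _)
      (Continuous.intervalIntegrable (by fun_prop) _ _)
    intro η _
    have := hnn η
    exact mul_le_mul_of_nonneg_left (rt_mono h η) (by positivity)
  have : Real.exp (4 * y1) ≤ Real.exp (4 * y2) := Real.exp_le_exp.2 (by linarith)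
  gcongr

/-- The integrand is supported in `[0, κ]`, where the root is at most of order `√κ`. -/
lemma rtInt_le {κ B : ℝ} (hκ0 : 0 < κ) (hκ1 : κ ≤ 1) (hB : ∀ η, 0 ≤ η → η ≤ κ → φ η ≤ B)
    {y : ℝ} (hy : y ≤ κ) :
    ∫ η in (0:ℝ)..1, φ η * rt y η ≤ 2 * (κ * (B * Real.sqrt κ)) := by
  have c1 := rt_cont_right y
  have hB0 : 0 ≤ B := (hnn 0).trans (hB 0 le_rfl hκ0.le)
  rw [← intervalIntegral.integral_add_adjacent_intervals (b := κ)
    (Continuous.intervalIntegrable (by fun_prop) _ _)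
    (Continuous.intervalIntegrable (by fun_prop) _ _)]
  have h2 : ∫ η in κ..1, φ η * rt y η = 0 := by
    rw [intervalIntegral.integral_congr (g := fun _ => 0)]
    · simp
    · intro η hη
      rw [uIcc_of_le hκ1] at hη
      have : rt y η = 0 := by
        apply rt_zero hη.2
        have := Real.add_one_le_exp (-y)
        linarith [hη.1]
      simp [this]
  rw [h2, add_zero]
  have h3 : ∫ η in (0:ℝ)..κ, φ η * rt y η ≤ ∫ η in (0:ℝ)..κ, B * (2 * Real.sqrt κ) := by
    apply intervalIntegral.integral_mono_on hκ0.le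
      (Continuous.intervalIntegrable (by fun_prop) _ _)
      (Continuous.intervalIntegrable (by fun_prop) _ _)
    intro η hη
    apply mul_le_mul (hB η hη.1 hη.2) _ (rt_nonneg _ _) hB0
    have : 2 * Real.sqrt κ = Real.sqrt (4 * κ) := by
      rw [Real.sqrt_mul (by norm_num)]
      congr 1
      rw [show (4:ℝ) = 2 ^ 2 by norm_num, Real.sqrt_sq (by norm_num)]
    rw [this]
    apply Real.sqrt_le_sqrt
    have := Real.add_one_le_exp (-2 * y)
    nlinarith [hη.1, hη.2]
  refine h3.trans (le_of_eq ?_)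
  rw [intervalIntegral.integral_const]; simp; ring

lemma gEV_le {κ B : ℝ} (hκ0 : 0 < κ) (hκ1 : κ ≤ 1) (hB : ∀ η, 0 ≤ η → η ≤ κ → φ η ≤ B)
    {y : ℝ} (hy : y ≤ κ) :
    gEV φ y ≤ 4 * Real.pi * Real.exp 4 * (2 * (κ * (B * Real.sqrt κ))) := by
  rw [gEV_eq hφ]
  have := Real.pi_pos
  have h0 := gInt_nonneg hnn y
  have h1 : ∫ η in (0:ℝ)..1, φ η * (1 - η) ^ 2 * rt y η ≤ ∫ η in (0:ℝ)..1, φ η * rt y η := by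
    have c1 := rt_cont_right y
    apply intervalIntegral.integral_mono_on (by norm_num)
      (Continuous.intervalIntegrable (by fun_prop) _ _)
      (Continuous.intervalIntegrable (by fun_prop) _ _)
    intro η hη
    have := mul_nonneg (hnn η) (rt_nonneg y η)
    have h2 : (1 - η) ^ 2 ≤ 1 := by nlinarith [hη.1, hη.2]
    nlinarith
  have h2 := rtInt_le hnn hφ hκ0 hκ1 hB hy
  have h3 : Real.exp (4 * y) ≤ Real.exp 4 := Real.exp_le_exp.2 (by linarith)
  have h4 := h1.trans h2
  gcongr

/-- As the map `t ↦ t^(3/2)` has derivative `(3/2) √t`, differences of the pressure integral are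
controlled by the integral of the root itself, which has the size of the density. -/
lemma hInt_lip {κ B : ℝ} (hκ0 : 0 < κ) (hκ1 : κ ≤ 1) (hB : ∀ η, 0 ≤ η → η ≤ κ → φ η ≤ B)
    {y1 y2 : ℝ} (h0 : 0 ≤ y1) (h12 : y1 ≤ y2) (h2 : y2 ≤ κ) :
    (∫ η in (0:ℝ)..1, φ η * rt y2 η ^ 3) - (∫ η in (0:ℝ)..1, φ η * rt y1 η ^ 3) ≤
      6 * (κ * (B * Real.sqrt κ)) * (y2 - y1) := by
  have c1 := rt_cont_right y1
  have c2 := rt_cont_right y2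
  rw [← intervalIntegral.integral_sub
      (Continuous.intervalIntegrable (by fun_prop) _ _)
      (Continuous.intervalIntegrable (by fun_prop) _ _)]
  have h3 : ∫ η in (0:ℝ)..1, (φ η * rt y2 η ^ 3 - φ η * rt y1 η ^ 3) ≤
      ∫ η in (0:ℝ)..1, (3 * (y2 - y1)) * (φ η * rt y2 η) := by
    apply intervalIntegral.integral_mono_on (by norm_num)
      (Continuous.intervalIntegrable (by fun_prop) _ _)
      (Continuous.intervalIntegrable (by fun_prop) _ _)
    intro η _
    have a1 := rt_nonneg y1 η
    have a2 := rt_nonneg y2 η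
    have a12 := rt_mono h12 η
    have hsq : rt y2 η ^ 2 - rt y1 η ^ 2 ≤ 2 * (y2 - y1) := by
      have e12 : Real.exp (-2 * y1) - Real.exp (-2 * y2) ≤ 2 * (y2 - y1) := by
        have e1 : Real.exp (-2 * y1) ≤ 1 := Real.exp_le_one_iff.2 (by linarith)
        have e2 : Real.exp (-2 * y2) = Real.exp (-2 * y1) * Real.exp (-2 * (y2 - y1)) := by
          rw [← Real.exp_add]; congr 1; ring
        have e3 := Real.add_one_le_exp (-2 * (y2 - y1))
        have e4 : Real.exp (-2 * (y2 - y1)) ≤ 1 := Real.exp_le_one_iff.2 (by linarith)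
        rw [e2]
        nlinarith [Real.exp_pos (-2 * y1)]
      rcases le_or_gt 0 ((1 - η) ^ 2 - Real.exp (-2 * y2)) with hp | hn
      · have s2 : rt y2 η ^ 2 = (1 - η) ^ 2 - Real.exp (-2 * y2) := Real.sq_sqrt hp
        have s1 : (1 - η) ^ 2 - Real.exp (-2 * y1) ≤ rt y1 η ^ 2 := by
          rcases le_or_gt 0 ((1 - η) ^ 2 - Real.exp (-2 * y1)) with hp1 | hn1
          · exact (Real.sq_sqrt hp1).ge
          · nlinarith [sq_nonneg (rt y1 η)]
        linarith
      · have s2 : rt y2 η = 0 := Real.sqrt_eq_zero_of_nonpos hn.le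
        rw [s2]; nlinarith [sq_nonneg (rt y1 η)]
    have key : rt y2 η ^ 3 - rt y1 η ^ 3 ≤ 3 * (y2 - y1) * rt y2 η := by
      have k1 : rt y2 η ^ 3 - rt y1 η ^ 3 ≤ 3 / 2 * rt y2 η * (rt y2 η ^ 2 - rt y1 η ^ 2) := by
        nlinarith [mul_nonneg (sub_nonneg.2 a12) (mul_nonneg a1 a2),
          mul_nonneg (sub_nonneg.2 a12) (mul_nonneg (sub_nonneg.2 a12) a2),
          mul_nonneg (sub_nonneg.2 a12) (mul_nonneg (sub_nonneg.2 a12) a1)]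
      nlinarith
    have := mul_le_mul_of_nonneg_left key (hnn η)
    linarith
  refine h3.trans ?_
  rw [intervalIntegral.integral_const_mul]
  have := rtInt_le hnn hφ hκ0 hκ1 hB h2
  nlinarith

/-- The pressure is Lipschitz in `y`, with a constant of the size of the density at `κ`. -/
lemma hEV_lip {κ B : ℝ} (hκ0 : 0 < κ) (hκ1 : κ ≤ 1) (hB : ∀ η, 0 ≤ η → η ≤ κ → φ η ≤ B)
    {y1 y2 : ℝ} (h0 : 0 ≤ y1) (h12 : y1 ≤ y2) (h2 : y2 ≤ κ) :
    hEV φ y2 - hEV φ y1 ≤ 40 * Real.pi * Real.exp 4 * (κ * (B * Real.sqrt κ)) * (y2 - y1) := by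
  have hB0 : 0 ≤ B := (hnn 0).trans (hB 0 le_rfl hκ0.le)
  rw [hEV_eq hφ, hEV_eq hφ]
  set I1 := ∫ η in (0:ℝ)..1, φ η * rt y1 η ^ 3
  set I2 := ∫ η in (0:ℝ)..1, φ η * rt y2 η ^ 3
  set Q := κ * (B * Real.sqrt κ) with hQ
  have hQ0 : 0 ≤ Q := by positivity
  have hI := hInt_lip hnn hφ hκ0 hκ1 hB h0 h12 h2
  have hI1 : I1 ≤ 6 * Q := by
    have := hInt_lip hnn hφ hκ0 hκ1 hB le_rfl h0 (h12.trans h2)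
    rw [integral_rt_zero (f := fun η => φ η * rt 0 η ^ 3) (y := 0) le_rfl
      (by intro η h; simp [h])] at this
    have : I1 ≤ 6 * Q * y1 := by linarith
    nlinarith
  have hI10 : 0 ≤ I1 := hInt_nonneg hnn y1
  have e2 : Real.exp (4 * y2) ≤ Real.exp 4 := Real.exp_le_exp.2 (by linarith)
  have e12 : Real.exp (4 * y2) - Real.exp (4 * y1) ≤ Real.exp 4 * (4 * (y2 - y1)) := by
    have e3 : Real.exp (4 * y1) = Real.exp (4 * y2) * Real.exp (-(4 * (y2 - y1))) := by
      rw [← Real.exp_add]; congr 1; ring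
    have e4 := Real.add_one_le_exp (-(4 * (y2 - y1)))
    have e5 : Real.exp (4 * y2) - Real.exp (4 * y1) ≤ Real.exp (4 * y2) * (4 * (y2 - y1)) := by
      rw [e3]; nlinarith [Real.exp_pos (4 * y2)]
    exact e5.trans (mul_le_mul_of_nonneg_right e2 (by linarith))
  have hpi := Real.pi_pos
  have he := Real.exp_pos 4
  have hd : 0 ≤ y2 - y1 := by linarith
  have k1 : Real.exp (4 * y2) * (I2 - I1) ≤ Real.exp 4 * (6 * Q * (y2 - y1)) := by
    calc _ ≤ Real.exp (4 * y2) * (6 * Q * (y2 - y1)) :=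
          mul_le_mul_of_nonneg_left hI (Real.exp_pos _).le
      _ ≤ _ := mul_le_mul_of_nonneg_right e2 (by positivity)
  have k2 : (Real.exp (4 * y2) - Real.exp (4 * y1)) * I1 ≤
      Real.exp 4 * (4 * (y2 - y1)) * (6 * Q) :=
    mul_le_mul e12 hI1 hI10 (by positivity)
  have : 4 * Real.pi / 3 * Real.exp (4 * y2) * I2 - 4 * Real.pi / 3 * Real.exp (4 * y1) * I1 =
      4 * Real.pi / 3 * (Real.exp (4 * y2) * (I2 - I1) +
        (Real.exp (4 * y2) - Real.exp (4 * y1)) * I1) := by ring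
  rw [this]
  have : 40 * Real.pi * Real.exp 4 * Q * (y2 - y1) =
    4 * Real.pi / 3 * (Real.exp 4 * (6 * Q * (y2 - y1)) +
      Real.exp 4 * (4 * (y2 - y1)) * (6 * Q)) := by ring
  rw [this]
  gcongr

/-- A lower bound for the density from the part `[y/8, y/4]` of the integration interval, where the
root is at least of order `√y`. -/
lemma gEV_ge {b y : ℝ} (hy : 0 < y) (hy1 : y ≤ 1 / 8)
    (hb : ∀ η, y / 8 ≤ η → η ≤ y / 4 → b ≤ φ η) (_hb0 : 0 ≤ b) :
    y / 8 * (b * (1 / 2) * Real.sqrt y) ≤ gEV φ y := by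
  rw [gEV_eq hφ]
  have c1 := rt_cont_right y
  have hpi := Real.pi_gt_three
  have h1 : y / 8 * (b * (1 / 2) * Real.sqrt y) ≤
      ∫ η in (0:ℝ)..1, φ η * (1 - η) ^ 2 * rt y η := by
    have hsub : ∫ η in (y/8)..(y/4), φ η * (1 - η) ^ 2 * rt y η ≤
        ∫ η in (0:ℝ)..1, φ η * (1 - η) ^ 2 * rt y η := by
      apply intervalIntegral.integral_mono_interval (by linarith) (by linarith) (by linarith)
      · refine Filter.Eventually.of_forall fun η => ?_
        have := hnn η; have := rt_nonneg y η
        show 0 ≤ φ η * (1 - η) ^ 2 * rt y η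
        positivity
      · exact Continuous.intervalIntegrable (by fun_prop) _ _
    have hlow : ∫ η in (y/8)..(y/4), b * (1 / 2) * Real.sqrt y ≤
        ∫ η in (y/8)..(y/4), φ η * (1 - η) ^ 2 * rt y η := by
      apply intervalIntegral.integral_mono_on (by linarith)
        (Continuous.intervalIntegrable (by fun_prop) _ _)
        (Continuous.intervalIntegrable (by fun_prop) _ _)
      intro η hη
      have hr : Real.sqrt y ≤ rt y η := by
        apply Real.sqrt_le_sqrt
        have e0 := Real.add_one_le_exp (2 * y)
        have e1 : Real.exp (-2 * y) * Real.exp (2 * y) = 1 := by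
          rw [← Real.exp_add]; simp
        have e2 : Real.exp (-2 * y) ≤ 1 - 2 * y + 4 * y ^ 2 * Real.exp (-2 * y) := by
          nlinarith [Real.exp_pos (-2 * y)]
        have e3 : Real.exp (-2 * y) * (1 + 2 * y) ≤ 1 := by
          nlinarith [Real.exp_pos (-2 * y)]
        have e4 : (1 - y / 4) ^ 2 ≤ (1 - η) ^ 2 := by nlinarith [hη.1, hη.2]
        have e5 : 1 ≤ ((1 - y / 4) ^ 2 - y) * (1 + 2 * y) := by nlinarith
        have e6 : Real.exp (-2 * y) ≤ (1 - y / 4) ^ 2 - y := by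
          by_contra hc
          push Not at hc
          nlinarith
        linarith
      have h2 : (1:ℝ) / 2 ≤ (1 - η) ^ 2 := by nlinarith [hη.1, hη.2]
      have := hb η hη.1 hη.2
      have := hnn η
      gcongr
    rw [intervalIntegral.integral_const] at hlow
    refine le_trans (le_of_eq ?_) (hlow.trans hsub)
    rw [smul_eq_mul]; ring
  have h2 : 1 ≤ 4 * Real.pi * Real.exp (4 * y) := by
    have := Real.one_le_exp (show 0 ≤ 4 * y by linarith)
    nlinarith
  have := gInt_nonneg hnn y
  nlinarith

end pos

/-! ### Power laws for the profiles and the field equations -/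

/-- Power-law bounds for the profiles, with the exponent `1 + 2a = k + 3/2`. -/
lemma profile_bounds (φ : ℝ → ℝ) (hφcont : Continuous φ)
    (hφ0 : ∀ η : ℝ, η ≤ 0 → φ η = 0) (hφpos : ∀ η : ℝ, 0 < η → 0 < φ η)
    (Cc k δ : ℝ) (hCc : 0 < Cc) (hk : 0 < k) (hδ : 0 < δ)
    (hO : ∃ C₁ : ℝ, 0 < C₁ ∧ ∃ η₁ : ℝ, 0 < η₁ ∧
      ∀ η : ℝ, 0 < η → η < η₁ → |φ η - Cc * η ^ k| ≤ C₁ * η ^ (k + δ))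
    (a : ℝ) (ha : a = (k + 1 / 2) / 2) :
    ∃ M c κ0 : ℝ, 1 ≤ M ∧ 0 < c ∧ 0 < κ0 ∧ κ0 ≤ 1 ∧ ∀ κ, 0 < κ → κ ≤ κ0 →
      (∀ y ≤ κ, gEV φ y ≤ M * κ ^ (1 + 2 * a)) ∧ c * κ ^ (1 + 2 * a) ≤ gEV φ κ ∧
      (∀ y1 y2, 0 ≤ y1 → y1 ≤ y2 → y2 ≤ κ →
        hEV φ y2 - hEV φ y1 ≤ M * κ ^ (1 + 2 * a) * (y2 - y1)) := by
  obtain ⟨C₁, hC₁, η₁, hη₁, hO⟩ := hO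
  have hnn : ∀ η, 0 ≤ φ η := fun η => by
    rcases le_or_gt η 0 with h | h
    · exact (hφ0 η h).ge
    · exact (hφpos η h).le
  set η₂ := (Cc / (2 * C₁)) ^ (1 / δ) with hη₂
  have hη₂0 : 0 < η₂ := by positivity
  have two : ∀ η, 0 < η → η < η₁ → η ≤ η₂ → Cc / 2 * η ^ k ≤ φ η ∧ φ η ≤ 2 * Cc * η ^ k := by
    intro η h0 h1 h2
    have h := hO η h0 h1
    have e : η ^ δ ≤ Cc / (2 * C₁) := by
      calc η ^ δ ≤ η₂ ^ δ := Real.rpow_le_rpow h0.le h2 hδ.le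
        _ = _ := by
          rw [hη₂, ← Real.rpow_mul (by positivity)]
          rw [one_div, inv_mul_cancel₀ hδ.ne', Real.rpow_one]
    rw [Real.rpow_add h0] at h
    have hk0 : 0 < η ^ k := Real.rpow_pos_of_pos h0 k
    have e2 : C₁ * (η ^ k * η ^ δ) ≤ Cc / 2 * η ^ k := by
      calc C₁ * (η ^ k * η ^ δ) ≤ C₁ * (η ^ k * (Cc / (2 * C₁))) := by gcongr
        _ = _ := by field_simp
    have := abs_le.1 (h.trans e2)
    constructor <;> nlinarith [this.1, this.2]
  have pw : ∀ y : ℝ, 0 < y → y * (y ^ k * Real.sqrt y) = y ^ (1 + 2 * a) := by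
    intro y hy
    rw [Real.sqrt_eq_rpow, ← Real.rpow_add hy]
    nth_rewrite 1 [← Real.rpow_one y]
    rw [← Real.rpow_add hy]
    congr 1; rw [ha]; ring
  have hpi := Real.pi_pos
  refine ⟨1 + 80 * Real.pi * Real.exp 4 * Cc, Cc / (32 * 8 ^ k), min (η₁ / 2) (min η₂ (1 / 8)),
    ?_, by positivity, by positivity, ?_, ?_⟩
  · have : 0 < 80 * Real.pi * Real.exp 4 * Cc := by positivity
    linarith
  · exact (min_le_right _ _).trans ((min_le_right _ _).trans (by norm_num))
  intro κ hκ hκ0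
  have hk1 : κ < η₁ := by
    have := hκ0.trans (min_le_left _ _); linarith
  have hk2 : κ ≤ η₂ := hκ0.trans ((min_le_right _ _).trans (min_le_left _ _))
  have hk3 : κ ≤ 1 / 8 := hκ0.trans ((min_le_right _ _).trans (min_le_right _ _))
  have hB : ∀ η, 0 ≤ η → η ≤ κ → φ η ≤ 2 * Cc * κ ^ k := by
    intro η h0 h1
    rcases h0.eq_or_lt with h | h
    · rw [← h, hφ0 0 le_rfl]; positivity
    · refine (two η h (h1.trans_lt hk1) (h1.trans hk2)).2.trans ?_
      have := Real.rpow_le_rpow h.le h1 hk.le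
      gcongr
  have hN : 0 < κ ^ (1 + 2 * a) := by positivity
  refine ⟨?_, ?_, ?_⟩
  · intro y hy
    refine (gEV_le hnn hφcont hκ (by linarith) hB hy).trans ?_
    have : 4 * Real.pi * Real.exp 4 * (2 * (κ * (2 * Cc * κ ^ k * Real.sqrt κ))) =
      16 * Real.pi * Real.exp 4 * Cc * (κ * (κ ^ k * Real.sqrt κ)) := by ring
    rw [this, pw κ hκ]
    gcongr
    have : 0 < Real.pi * Real.exp 4 * Cc := by positivity
    nlinarith
  · have := gEV_ge hnn hφcont hκ hk3 (b := Cc / 2 * (κ / 8) ^ k) ?_ (by positivity)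
    · refine le_trans (le_of_eq ?_) this
      rw [← pw κ hκ, Real.div_rpow hκ.le (by norm_num)]
      field_simp; norm_num
    · intro η h1 h2
      have h0 : 0 < η := by linarith
      refine le_trans ?_ (two η h0 (by linarith) (by linarith)).1
      have := Real.rpow_le_rpow (by positivity) h1 hk.le
      gcongr
  · intro y1 y2 h0 h12 h2
    refine (hEV_lip hnn hφcont hκ (by linarith) hB h0 h12 h2).trans ?_
    have : 40 * Real.pi * Real.exp 4 * (κ * (2 * Cc * κ ^ k * Real.sqrt κ)) =
      80 * Real.pi * Real.exp 4 * Cc * (κ * (κ ^ k * Real.sqrt κ)) := by ring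
    rw [this, pw κ hκ]
    have : 0 ≤ y2 - y1 := by linarith
    gcongr
    linarith

section ode
variable {φ : ℝ → ℝ} {κ : ℝ} {Y : ℝ → ℝ}

lemma Y_cont (hs : IsEVSteady φ κ Y) : ContinuousOn Y (Ici 0) := hs.1.continuousOn

lemma Y_C2 (hs : IsEVSteady φ κ Y) {r : ℝ} (hr : 0 < r) : ContDiffAt ℝ 2 Y r :=
  hs.1.contDiffAt (Ici_mem_nhds hr)

lemma Y_diff (hs : IsEVSteady φ κ Y) {r : ℝ} (hr : 0 < r) : DifferentiableAt ℝ Y r :=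
  (Y_C2 hs hr).differentiableAt (by norm_num)

lemma Y'_diff (hs : IsEVSteady φ κ Y) {r : ℝ} (hr : 0 < r) : DifferentiableAt ℝ (deriv Y) r := by
  have h : ContDiffAt ℝ 1 (deriv Y) r := by
    have := (Y_C2 hs hr)
    rw [show (2 : WithTop ℕ∞) = 1 + 1 by norm_num] at this
    have h2 : ContDiffAt ℝ 1 (fderiv ℝ Y) r := this.fderiv_right le_rfl
    exact h2.clm_apply (contDiffAt_const (c := (1 : ℝ)))
  exact h.differentiableAt (by norm_num)

lemma m_zero : mEV φ Y 0 = 0 := by simp [mEV]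

variable (hnn : ∀ η, 0 ≤ φ η) (hφ : Continuous φ) (hs : IsEVSteady φ κ Y)
include hφ hs

lemma gY_cont : Continuous (fun s => gEV φ (Y (max s 0)) * s ^ 2) := by
  have h1 : Continuous (fun s => Y (max s 0)) :=
    (Y_cont hs).comp_continuous (by fun_prop) (fun s => mem_Ici.2 (le_max_right _ _))
  have := (gEV_cont hφ).comp h1
  simp only [Function.comp_def] at this
  fun_prop

omit hφ hs in
lemma m_eq {r : ℝ} (hr : 0 ≤ r) :
    mEV φ Y r = 4 * Real.pi * ∫ s in (0:ℝ)..r, gEV φ (Y (max s 0)) * s ^ 2 := by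
  unfold mEV
  congr 1
  apply intervalIntegral.integral_congr
  intro s h
  rw [uIcc_of_le hr] at h
  simp [max_eq_left h.1]

lemma m_deriv {r : ℝ} (hr : 0 < r) :
    HasDerivAt (mEV φ Y) (4 * Real.pi * (gEV φ (Y r) * r ^ 2)) r := by
  have hc := gY_cont hφ hs
  have h := (hc.integral_hasStrictDerivAt 0 r).hasDerivAt.const_mul (4 * Real.pi)
  rw [max_eq_left hr.le] at h
  apply h.congr_of_eventuallyEq
  filter_upwards [Ioi_mem_nhds hr] with t ht
  exact m_eq (le_of_lt ht)

lemma m_contOn : ContinuousOn (mEV φ Y) (Ici 0) := by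
  have hc := gY_cont hφ hs
  have : Continuous (fun r => 4 * Real.pi * ∫ s in (0:ℝ)..r, gEV φ (Y (max s 0)) * s ^ 2) := by
    have := intervalIntegral.continuous_primitive (μ := volume)
      (fun a b => hc.intervalIntegrable a b) 0
    fun_prop
  exact this.continuousOn.congr fun r hr => m_eq hr

/-- If `g(y) ≤ G` on `(0, b)` then `m(r) ≤ (4π/3) G r³` there. -/
lemma m_le {b G : ℝ} (hG : ∀ s, 0 < s → s < b → gEV φ (Y s) ≤ G) {r : ℝ} (hr : 0 ≤ r)
    (hrb : r ≤ b) : mEV φ Y r ≤ 4 * Real.pi / 3 * G * r ^ 3 := by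
  have hanti : AntitoneOn (fun r => mEV φ Y r - 4 * Real.pi / 3 * G * r ^ 3) (Icc 0 b) := by
    have hd : ∀ s, 0 < s → HasDerivAt (fun r => mEV φ Y r - 4 * Real.pi / 3 * G * r ^ 3)
        (4 * Real.pi * (gEV φ (Y s) * s ^ 2) - 4 * Real.pi / 3 * G * (3 * s ^ 2)) s := by
      intro s h
      have := (m_deriv hφ hs h).sub ((hasDerivAt_pow 3 s).const_mul (4 * Real.pi / 3 * G))
      exact this.congr_deriv (by push_cast; ring)
    apply antitoneOn_of_deriv_nonpos (convex_Icc 0 b)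
    · exact ((m_contOn hφ hs).mono Icc_subset_Ici_self).sub (by fun_prop)
    · intro s h
      rw [interior_Icc] at h
      exact (hd s h.1).differentiableAt.differentiableWithinAt
    · intro s h
      rw [interior_Icc] at h
      rw [(hd s h.1).deriv]
      have := hG s h.1 h.2
      have : 0 ≤ Real.pi * s ^ 2 := by have := Real.pi_pos; positivity
      nlinarith
  have := hanti ⟨le_rfl, hr.trans hrb⟩ ⟨hr, hrb⟩ hr
  simp only [m_zero] at this
  linarith

/-- A lower bound on the density up to radius `b` bounds the mass below by that of a
uniform ball. -/
lemma m_ge {b G : ℝ} (hG : ∀ s, 0 < s → s < b → G ≤ gEV φ (Y s)) {r : ℝ} (hr : 0 ≤ r)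
    (hrb : r ≤ b) : 4 * Real.pi / 3 * G * r ^ 3 ≤ mEV φ Y r := by
  have hanti : MonotoneOn (fun r => mEV φ Y r - 4 * Real.pi / 3 * G * r ^ 3) (Icc 0 b) := by
    have hd : ∀ s, 0 < s → HasDerivAt (fun r => mEV φ Y r - 4 * Real.pi / 3 * G * r ^ 3)
        (4 * Real.pi * (gEV φ (Y s) * s ^ 2) - 4 * Real.pi / 3 * G * (3 * s ^ 2)) s := by
      intro s h
      have := (m_deriv hφ hs h).sub ((hasDerivAt_pow 3 s).const_mul (4 * Real.pi / 3 * G))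
      exact this.congr_deriv (by push_cast; ring)
    apply monotoneOn_of_deriv_nonneg (convex_Icc 0 b)
    · exact ((m_contOn hφ hs).mono Icc_subset_Ici_self).sub (by fun_prop)
    · intro s h
      rw [interior_Icc] at h
      exact (hd s h.1).differentiableAt.differentiableWithinAt
    · intro s h
      rw [interior_Icc] at h
      rw [(hd s h.1).deriv]
      have := hG s h.1 h.2
      have : 0 ≤ Real.pi * s ^ 2 := by have := Real.pi_pos; positivity
      nlinarith
  have := hanti ⟨le_rfl, hr.trans hrb⟩ ⟨hr, hrb⟩ hr
  simp only [m_zero] at this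
  linarith

include hnn

lemma m_mono : MonotoneOn (mEV φ Y) (Ici 0) := by
  apply monotoneOn_of_deriv_nonneg (convex_Ici 0) (m_contOn hφ hs)
  · intro s h
    rw [interior_Ici] at h
    exact (m_deriv hφ hs h).differentiableAt.differentiableWithinAt
  · intro s h
    rw [interior_Ici] at h
    rw [(m_deriv hφ hs h).deriv]
    have := gEV_nonneg hnn hφ (Y s)
    have := Real.pi_pos
    positivity

lemma m_nonneg {r : ℝ} (hr : 0 ≤ r) : 0 ≤ mEV φ Y r := by
  have := m_mono hnn hφ hs (mem_Ici.2 le_rfl) (mem_Ici.2 hr) hr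
  rwa [m_zero] at this

omit hnn hφ in
lemma b_pos {r : ℝ} (hr : 0 < r) : 0 < 1 - 2 * mEV φ Y r / r := by
  have := (hs.2.2 r hr).1
  rw [sub_pos, div_lt_one hr]; exact this

lemma b_le {r : ℝ} (hr : 0 < r) : 1 - 2 * mEV φ Y r / r ≤ 1 := by
  have := m_nonneg hnn hφ hs hr.le
  have : 0 ≤ 2 * mEV φ Y r / r := by positivity
  linarith

/-- `-y' ≥ m/r²`. -/
lemma Y'_le {r : ℝ} (hr : 0 < r) : deriv Y r ≤ -(mEV φ Y r / r ^ 2) := by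
  rw [(hs.2.2 r hr).2]
  have hb := b_pos hs hr
  have hb1 := b_le hnn hφ hs hr
  have h1 := (one_le_inv₀ hb).2 hb1
  have hm := m_nonneg hnn hφ hs hr.le
  have hh := hEV_nonneg hnn hφ (Y r)
  have hpi := Real.pi_pos
  have h2 : 0 ≤ mEV φ Y r / r ^ 2 := by positivity
  have h3 : 0 ≤ 4 * Real.pi * r * hEV φ (Y r) := by positivity
  nlinarith [mul_nonneg (sub_nonneg.2 h1) (add_nonneg h2 h3)]

lemma Y'_nonpos {r : ℝ} (hr : 0 < r) : deriv Y r ≤ 0 := by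
  have := Y'_le hnn hφ hs hr
  have hm := m_nonneg hnn hφ hs hr.le
  have h2 : 0 ≤ mEV φ Y r / r ^ 2 := by positivity
  linarith

lemma Y_anti : AntitoneOn Y (Ici 0) := by
  apply antitoneOn_of_deriv_nonpos (convex_Ici 0) (Y_cont hs)
  · intro s h
    rw [interior_Ici] at h
    exact (Y_diff hs h).differentiableWithinAt
  · intro s h
    rw [interior_Ici] at h
    exact Y'_nonpos hnn hφ hs h

lemma Y_le {r : ℝ} (hr : 0 ≤ r) : Y r ≤ κ := by
  have := Y_anti hnn hφ hs (mem_Ici.2 le_rfl) (mem_Ici.2 hr) hr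
  rwa [hs.2.1] at this

/-- Monotonicity of `s ↦ y(s) - m(r)/s` gives the drop of `y` between `r` and `2r`. -/
lemma Y_drop {r : ℝ} (hr : 0 < r) : mEV φ Y r / (2 * r) ≤ Y r - Y (2 * r) := by
  have hd : ∀ s, 0 < s → HasDerivAt (fun s => Y s - mEV φ Y r * s⁻¹)
      (deriv Y s - mEV φ Y r * (-(s ^ 2)⁻¹)) s := fun s h =>
    (Y_diff hs h).hasDerivAt.sub ((hasDerivAt_inv h.ne').const_mul _)
  have : AntitoneOn (fun s => Y s - mEV φ Y r * s⁻¹) (Ici r) := by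
    apply antitoneOn_of_deriv_nonpos (convex_Ici r)
    · intro s h
      exact (hd s (hr.trans_le h)).continuousAt.continuousWithinAt
    · intro s h
      rw [interior_Ici] at h
      exact (hd s (hr.trans h)).differentiableAt.differentiableWithinAt
    · intro s h
      rw [interior_Ici] at h
      have h0 : 0 < s := hr.trans h
      rw [(hd s h0).deriv]
      have h1 := Y'_le hnn hφ hs h0
      have h2 := m_mono hnn hφ hs (mem_Ici.2 hr.le) (mem_Ici.2 h0.le) (le_of_lt h)
      have h3 : mEV φ Y r * (s ^ 2)⁻¹ ≤ mEV φ Y s * (s ^ 2)⁻¹ := by gcongr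
      rw [div_eq_mul_inv] at h1
      linarith
  have := this (mem_Ici.2 le_rfl) (mem_Ici.2 (show r ≤ 2 * r by linarith)) (by linarith)
  simp only at this
  have e : mEV φ Y r * r⁻¹ = 2 * (mEV φ Y r / (2 * r)) := by field_simp
  have e2 : mEV φ Y r * (2 * r)⁻¹ = mEV φ Y r / (2 * r) := by field_simp
  linarith

omit hφ hs hnn in
/-- Solving the differentiated field equation for `-(y'' + 2y'/r)`. -/
lemma second_deriv_alg {r m g K A B P p' y' y'' : ℝ} (hr : 0 < r) (hm0 : 0 ≤ m) (hg0 : 0 ≤ g)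
    (hK : 0 ≤ K) (hB0 : 0 ≤ B) (hP0 : 0 ≤ P) (hy : y' ≤ 0) (hA : -(r * y') ≤ A)
    (hB : m ≤ B * r ^ 3) (hb : 1 / 2 ≤ 1 - 2 * m / r) (hp : K * y' ≤ p')
    (heq : y'' * (r ^ 2 - 2 * m * r) +
      y' * (2 * r - (2 * (4 * Real.pi * (g * r ^ 2)) * r + 2 * m)) =
      -(4 * Real.pi * (g * r ^ 2) + (4 * Real.pi * (3 * r ^ 2) * P + 4 * Real.pi * r ^ 3 * p'))) :
    4 * Real.pi * g - 2 * (4 * Real.pi * K * A + 2 * A * B) ≤ -(y'' + 2 * y' / r) := by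
  have hpi := Real.pi_pos
  set X := -(y'' + 2 * y' / r) with hX
  have hbX : X * (1 - 2 * m / r) = 4 * Real.pi * g + 12 * Real.pi * P + 4 * Real.pi * r * p'
      + -y' * (8 * Real.pi * r * g - 2 * m / r ^ 2) := by
    have : r ^ 2 * (X * (1 - 2 * m / r)) = r ^ 2 * (4 * Real.pi * g + 12 * Real.pi * P +
        4 * Real.pi * r * p' + -y' * (8 * Real.pi * r * g - 2 * m / r ^ 2)) := by
      have e1 : r ^ 2 * (X * (1 - 2 * m / r)) = -(y'' * r + 2 * y') * (r - 2 * m) := by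
        rw [hX]; field_simp
      have e2 : r ^ 2 * (4 * Real.pi * g + 12 * Real.pi * P +
        4 * Real.pi * r * p' + -y' * (8 * Real.pi * r * g - 2 * m / r ^ 2)) =
        r ^ 2 * (4 * Real.pi * g + 12 * Real.pi * P +
        4 * Real.pi * r * p') + -y' * (8 * Real.pi * r ^ 3 * g - 2 * m) := by
        field_simp
      rw [e1, e2]
      linear_combination -heq
    exact mul_left_cancel₀ (by positivity) this
  have hA0 : 0 ≤ A := le_trans (by nlinarith) hA
  have t1 : -(4 * Real.pi * K * A) ≤ 4 * Real.pi * r * p' := by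
    have h1 : r * (K * -y') ≤ K * A := by
      have := mul_le_mul_of_nonneg_left hA hK
      linarith
    have h2 : r * (K * y') ≤ r * p' := by gcongr
    nlinarith
  have t2 : -(2 * A * B) ≤ -y' * (8 * Real.pi * r * g - 2 * m / r ^ 2) := by
    have hu0 : 0 ≤ -y' := by linarith
    have h1 : 0 ≤ -y' * (8 * Real.pi * r * g) := by positivity
    have h2 : 2 * m / r ^ 2 ≤ 2 * (B * r) := by
      rw [div_le_iff₀ (by positivity)]; linarith
    have h3 : -y' * (2 * m / r ^ 2) ≤ -y' * (2 * (B * r)) := by gcongr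
    have h4 : -y' * (2 * (B * r)) ≤ 2 * A * B := by
      have := mul_le_mul_of_nonneg_right hA hB0
      linarith
    linarith
  have t3 : 0 ≤ 12 * Real.pi * P := by positivity
  set Z := 4 * Real.pi * K * A + 2 * A * B with hZ
  have hZ0 : 0 ≤ Z := by positivity
  have h5 : 4 * Real.pi * g - Z ≤ X * (1 - 2 * m / r) := by rw [hbX]; linarith
  have hb1 : 1 - 2 * m / r ≤ 1 := by
    have : 0 ≤ 2 * m / r := by positivity
    linarith
  set β := 1 - 2 * m / r
  have : 4 * Real.pi * g * β ≤ 4 * Real.pi * g := by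
    have : 0 ≤ 4 * Real.pi * g := by positivity
    nlinarith
  have h6 : 0 ≤ (X - 4 * Real.pi * g + 2 * Z) * β := by nlinarith
  have := nonneg_of_mul_nonneg_left h6 (by linarith)
  linarith

/-- Lower bound for `μ'' + 2μ'/r` at points of the support, where `μ' = -y'`: up to a term of
relative size `κ` it is at least `4πρ`. -/
lemma second_deriv_bound {K A B : ℝ} (hK : 0 ≤ K)
    (hlip : ∀ y1 y2, 0 ≤ y1 → y1 ≤ y2 → y2 ≤ κ → hEV φ y2 - hEV φ y1 ≤ K * (y2 - y1))
    {r : ℝ} (hr : 0 < r) (hY : 0 < Y r) (hb : 1 / 2 ≤ 1 - 2 * mEV φ Y r / r)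
    (hA : -(r * deriv Y r) ≤ A) (hB : mEV φ Y r ≤ B * r ^ 3) (hB0 : 0 ≤ B) :
    4 * Real.pi * gEV φ (Y r) - 2 * (4 * Real.pi * K * A + 2 * A * B) ≤
      -(deriv (deriv Y) r + 2 * deriv Y r / r) := by
  have hpi := Real.pi_pos
  set m := mEV φ Y with hm
  have hm0 := m_nonneg hnn hφ hs hr.le
  have hYn := Y'_nonpos hnn hφ hs hr
  -- the pressure, expressed through `y'` and `m`
  set P : ℝ → ℝ := fun s => ((1 - 2 * m s / s) * (-deriv Y s) - m s / s ^ 2) / (4 * Real.pi * s)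
    with hP
  have hPh : ∀ s, 0 < s → P s = hEV φ (Y s) := by
    intro s h
    have h1 := (hs.2.2 s h).2
    have h2 := b_pos hs h
    rw [← hm] at h1 h2
    simp only [hP]
    rw [h1]
    have h3 : (1 - 2 * m s / s) *
        -(-(1 - 2 * m s / s)⁻¹ * (m s / s ^ 2 + 4 * Real.pi * s * hEV φ (Y s)))
      = m s / s ^ 2 + 4 * Real.pi * s * hEV φ (Y s) := by
      rw [neg_mul, neg_neg, ← mul_assoc, mul_inv_cancel₀ h2.ne', one_mul]
    rw [h3]
    field_simp
    ring
  have hPd : DifferentiableAt ℝ P r := by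
    have d1 := (m_deriv hφ hs hr).differentiableAt
    have d2 := Y'_diff hs hr
    rw [← hm] at d1
    have : r ≠ 0 := hr.ne'
    have : 4 * Real.pi * r ≠ 0 := by positivity
    have : r ^ 2 ≠ 0 := by positivity
    simp only [hP]
    fun_prop (disch := assumption)
  have hPder : K * deriv Y r ≤ deriv P r := by
    -- `K y - p(y)` is nondecreasing in `y`, hence nonincreasing in `r`
    have hnear : ∀ᶠ s in 𝓝 r, 0 < Y s ∧ 0 < s :=
      ((Y_diff hs hr).continuousAt.eventually (lt_mem_nhds hY)).and (lt_mem_nhds hr)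
    have hD : HasDerivAt (fun s => K * Y s - P s) (K * deriv Y r - deriv P r) r :=
      ((Y_diff hs hr).hasDerivAt.const_mul K).sub hPd.hasDerivAt
    have ht := hD.tendsto_slope.mono_left (nhdsWithin_mono r (show Ioi r ⊆ {r}ᶜ from
      fun x hx => ne_of_gt hx))
    have : K * deriv Y r - deriv P r ≤ 0 := by
      refine le_of_tendsto ht ?_
      filter_upwards [self_mem_nhdsWithin, mem_nhdsWithin_of_mem_nhds hnear] with s hsr h
      rw [slope_def_field]
      apply div_nonpos_of_nonpos_of_nonneg _ (sub_nonneg.2 (le_of_lt hsr))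
      rw [hPh s h.2, hPh r hr]
      have hle := Y_anti hnn hφ hs (mem_Ici.2 hr.le) (mem_Ici.2 h.2.le) (le_of_lt hsr)
      have := hlip (Y s) (Y r) h.1.le hle (Y_le hnn hφ hs hr.le)
      linarith
    linarith
  set p' := deriv P r
  set g := gEV φ (Y r) with hg
  have hP0 : 0 ≤ P r := by rw [hPh r hr]; exact hEV_nonneg hnn hφ _
  -- differentiate `r² y' (1 - 2m/r) = -(m + 4πr³p)`
  have hid : ∀ s, 0 < s →
      deriv Y s * (s ^ 2 - 2 * m s * s) = -(m s + 4 * Real.pi * s ^ 3 * P s) := by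
    intro s h
    simp only [hP]
    field_simp
    ring
  have hL : HasDerivAt (fun s => deriv Y s * (s ^ 2 - 2 * m s * s))
      (deriv (deriv Y) r * (r ^ 2 - 2 * m r * r) + deriv Y r * (2 * r -
        (2 * (4 * Real.pi * (g * r ^ 2)) * r + 2 * m r))) r := by
    have h1 := (Y'_diff hs hr).hasDerivAt
    have h2 := (((m_deriv hφ hs hr).const_mul 2).mul (hasDerivAt_id r))
    have h3 := h1.mul ((hasDerivAt_pow 2 r).sub h2)
    exact h3.congr_deriv (by simp [hm, hg])
  have hR : HasDerivAt (fun s => -(m s + 4 * Real.pi * s ^ 3 * P s))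
      (-(4 * Real.pi * (g * r ^ 2) +
        (4 * Real.pi * (3 * r ^ 2) * P r + 4 * Real.pi * r ^ 3 * p'))) r := by
    have h1 := ((hasDerivAt_pow 3 r).const_mul (4 * Real.pi)).mul hPd.hasDerivAt
    have := ((m_deriv hφ hs hr).add h1).neg
    exact this.congr_deriv (by push_cast; ring)
  have heq := hL.unique (hR.congr_of_eventuallyEq (by
    filter_upwards [lt_mem_nhds hr] with s h using hid s h))
  exact second_deriv_alg hr hm0 (gEV_nonneg hnn hφ _) hK hB0 hP0 (by linarith) hA hB hb hPder heq

end ode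

/-! ### Size of the support and of the mass -/

section bounds
variable {φ : ℝ → ℝ} {κ M N : ℝ} {Y : ℝ → ℝ}

lemma hEV_of_nonpos {y : ℝ} (hy : y ≤ 0) : hEV φ y = 0 := by
  rw [hEV, if_neg hy.not_gt]

lemma gEV_of_nonpos {y : ℝ} (hy : y ≤ 0) : gEV φ y = 0 := by
  rw [gEV, if_neg hy.not_gt]

lemma hY_le (hκ : 0 < κ) (hM : 0 ≤ M) (hN : 0 ≤ N)
    (hl : ∀ y1 y2, 0 ≤ y1 → y1 ≤ y2 → y2 ≤ κ → hEV φ y2 - hEV φ y1 ≤ M * N * (y2 - y1))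
    {y : ℝ} (hy : y ≤ κ) : hEV φ y ≤ M * N * κ := by
  rcases le_or_gt y 0 with h | h
  · rw [hEV_of_nonpos h]; positivity
  · have := hl 0 y le_rfl h.le hy
    rw [hEV_of_nonpos le_rfl, sub_zero, sub_zero] at this
    have h2 : M * N * y ≤ M * N * κ := by gcongr
    linarith

/-- Upper bounds for `2m/r` and `-y'` while `N r²` stays small. -/
lemma near_bounds (hnn : ∀ η, 0 ≤ φ η) (hφ : Continuous φ) (hs : IsEVSteady φ κ Y)
    (hκ : 0 < κ) (hκ1 : κ ≤ 1) (hM : 0 ≤ M) (hN : 0 ≤ N) (hg : ∀ y ≤ κ, gEV φ y ≤ M * N)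
    (hl : ∀ y1 y2, 0 ≤ y1 → y1 ≤ y2 → y2 ≤ κ → hEV φ y2 - hEV φ y1 ≤ M * N * (y2 - y1))
    {r : ℝ} (hr : 0 < r) (hrN : 40 * M * (N * r ^ 2) ≤ 1) :
    mEV φ Y r ≤ 4 * Real.pi / 3 * (M * N) * r ^ 3 ∧ 2 * mEV φ Y r / r ≤ 10 * M * (N * r ^ 2) ∧
      1 / 2 ≤ 1 - 2 * mEV φ Y r / r ∧ -deriv Y r ≤ 40 * M * N * r := by
  have hpi := Real.pi_pos
  have hpi' := Real.pi_lt_d2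
  have h1 : mEV φ Y r ≤ 4 * Real.pi / 3 * (M * N) * r ^ 3 :=
    m_le hφ hs (b := r) (fun s h0 h1 => hg _ (Y_le hnn hφ hs h0.le)) hr.le le_rfl
  have hP : 0 ≤ M * N * r ^ 2 := by positivity
  have h2 : 2 * mEV φ Y r / r ≤ 10 * M * (N * r ^ 2) := by
    rw [div_le_iff₀ hr]
    have : 0 ≤ M * N * r ^ 3 := by positivity
    nlinarith
  have h3 : 1 / 2 ≤ 1 - 2 * mEV φ Y r / r := by nlinarith
  refine ⟨h1, h2, h3, ?_⟩
  rw [(hs.2.2 r hr).2]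
  have hb := b_pos hs hr
  have hi : (1 - 2 * mEV φ Y r / r)⁻¹ ≤ 2 := by
    rw [inv_le_comm₀ hb (by norm_num)]; linarith
  have hm := m_nonneg hnn hφ hs hr.le
  have hh0 := hEV_nonneg hnn hφ (Y r)
  have hh := hY_le hκ hM hN hl (Y_le hnn hφ hs hr.le)
  have e1 : mEV φ Y r / r ^ 2 ≤ 4 * Real.pi / 3 * (M * N) * r := by
    rw [div_le_iff₀ (by positivity)]; linarith
  have e2 : 4 * Real.pi * r * hEV φ (Y r) ≤ 4 * Real.pi * r * (M * N) := by
    have : M * N * κ ≤ M * N := mul_le_of_le_one_right (by positivity) hκ1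
    have := hh.trans this
    gcongr
  have e3 : 0 ≤ mEV φ Y r / r ^ 2 + 4 * Real.pi * r * hEV φ (Y r) := by positivity
  have e4 : Real.pi * (r * (M * N)) ≤ 3.15 * (r * (M * N)) := by gcongr
  have e5 : 0 ≤ r * (M * N) := by positivity
  calc -(-(1 - 2 * mEV φ Y r / r)⁻¹ * (mEV φ Y r / r ^ 2 + 4 * Real.pi * r * hEV φ (Y r)))
      = (1 - 2 * mEV φ Y r / r)⁻¹ * (mEV φ Y r / r ^ 2 + 4 * Real.pi * r * hEV φ (Y r)) := by ring
    _ ≤ 2 * (mEV φ Y r / r ^ 2 + 4 * Real.pi * r * hEV φ (Y r)) := by gcongr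
    _ ≤ 40 * M * N * r := by nlinarith

/-- Near the centre, `y` drops from its central value `κ` by at most `O(N r²)`. -/
lemma Y_ge_near (hnn : ∀ η, 0 ≤ φ η) (hφ : Continuous φ) (hs : IsEVSteady φ κ Y)
    (hκ : 0 < κ) (hκ1 : κ ≤ 1) (hM : 0 ≤ M) (hN : 0 ≤ N) (hg : ∀ y ≤ κ, gEV φ y ≤ M * N)
    (hl : ∀ y1 y2, 0 ≤ y1 → y1 ≤ y2 → y2 ≤ κ → hEV φ y2 - hEV φ y1 ≤ M * N * (y2 - y1))
    {r : ℝ} (hr : 0 ≤ r) (hrN : 40 * M * (N * r ^ 2) ≤ 1) :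
    κ - 20 * M * N * r ^ 2 ≤ Y r := by
  have hd : ∀ s, 0 < s → HasDerivAt (fun s => Y s + 20 * M * N * s ^ 2)
      (deriv Y s + 20 * M * N * (2 * s)) s := fun s h =>
    ((Y_diff hs h).hasDerivAt.add ((hasDerivAt_pow 2 s).const_mul (20 * M * N))).congr_deriv
      (by push_cast; ring)
  have : MonotoneOn (fun s => Y s + 20 * M * N * s ^ 2) (Icc 0 r) := by
    apply monotoneOn_of_deriv_nonneg (convex_Icc 0 r)
    · exact ((Y_cont hs).mono Icc_subset_Ici_self).add (by fun_prop)
    · intro s h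
      rw [interior_Icc] at h
      exact (hd s h.1).differentiableAt.differentiableWithinAt
    · intro s h
      rw [interior_Icc] at h
      rw [(hd s h.1).deriv]
      have h2 : 40 * M * (N * s ^ 2) ≤ 1 := by
        refine le_trans ?_ hrN
        have := h.1.le
        have := h.2.le
        gcongr
      have := (near_bounds hnn hφ hs hκ hκ1 hM hN hg hl h.1 h2).2.2.2
      linarith
  have := this ⟨le_rfl, hr⟩ ⟨hr, le_rfl⟩ hr
  simp only [hs.2.1] at this
  linarith

/-- If `y > 0` on `[0, 2r₂]`, then the mass satisfies a superlinear differential inequality on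
`[r₁, r₂]`, which bounds `r₂`. -/
lemma radius_ineq (hnn : ∀ η, 0 ≤ φ η) (hφ : Continuous φ) (hs : IsEVSteady φ κ Y)
    {b c : ℝ} (hb : 0 < b) (hb2 : b < 2) (hc : 0 < c)
    (hg : ∀ y, 0 < y → y ≤ κ → 8 * c * y ^ (1 + b) ≤ gEV φ y)
    {r1 r2 : ℝ} (h1 : 0 < r1) (h12 : r1 ≤ r2) (hY : 0 < Y (2 * r2)) (hm : 0 < mEV φ Y r1) :
    4 * Real.pi * b * c / (2 - b) * r2 ^ (2 - b) ≤
      mEV φ Y r1 ^ (-b) + 4 * Real.pi * b * c / (2 - b) * r1 ^ (2 - b) := by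
  set c3 := 4 * Real.pi * b * c / (2 - b) with hc3
  have hpi := Real.pi_pos
  have hmpos : ∀ s, r1 ≤ s → 0 < mEV φ Y s := fun s h =>
    hm.trans_le (m_mono hnn hφ hs (mem_Ici.2 h1.le) (mem_Ici.2 (h1.le.trans h)) h)
  have hd : ∀ s, r1 ≤ s → HasDerivAt (fun s => mEV φ Y s ^ (-b) + c3 * s ^ (2 - b))
      (4 * Real.pi * (gEV φ (Y s) * s ^ 2) * -b * mEV φ Y s ^ (-b - 1) +
        c3 * ((2 - b) * s ^ (2 - b - 1))) s := fun s h =>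
    ((m_deriv hφ hs (h1.trans_le h)).rpow_const (Or.inl (hmpos s h).ne')).add
      ((Real.hasDerivAt_rpow_const (Or.inl (h1.trans_le h).ne')).const_mul c3)
  have hanti : AntitoneOn (fun s => mEV φ Y s ^ (-b) + c3 * s ^ (2 - b)) (Icc r1 r2) := by
    apply antitoneOn_of_deriv_nonpos (convex_Icc r1 r2)
    · exact fun s h => (hd s h.1).continuousAt.continuousWithinAt
    · intro s h
      rw [interior_Icc] at h
      exact (hd s h.1.le).differentiableAt.differentiableWithinAt
    · intro s h
      rw [interior_Icc] at h
      have hs0 : 0 < s := h1.trans h.1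
      rw [(hd s h.1.le).deriv]
      have hms := hmpos s h.1.le
      have hdrop := Y_drop hnn hφ hs hs0
      have hY2 : Y (2 * r2) ≤ Y (2 * s) :=
        Y_anti hnn hφ hs (mem_Ici.2 (by linarith)) (mem_Ici.2 (by linarith [h.2]))
          (by linarith [h.2])
      have hz : mEV φ Y s / (2 * s) ≤ Y s := by linarith
      have hz0 : 0 < mEV φ Y s / (2 * s) := by positivity
      have hYk := Y_le hnn hφ hs hs0.le
      have h3 : 8 * c * (mEV φ Y s / (2 * s)) ^ (1 + b) ≤ gEV φ (Y s) :=
        (hg _ hz0 (hz.trans hYk)).trans (gEV_mono hnn hφ hz)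
      have h4 : (mEV φ Y s / (2 * s)) ^ (1 + b) * 8 ≥ mEV φ Y s ^ (1 + b) * s ^ (-(1 + b)) := by
        rw [Real.div_rpow hms.le (by positivity), Real.mul_rpow (by norm_num) hs0.le,
          Real.rpow_neg hs0.le]
        have : (2:ℝ) ^ (1 + b) ≤ 8 := by
          calc (2:ℝ) ^ (1 + b) ≤ 2 ^ (3:ℝ) :=
                Real.rpow_le_rpow_of_exponent_le (by norm_num) (by linarith)
            _ = 8 := by norm_num
        have p1 : 0 < mEV φ Y s ^ (1 + b) := by positivity
        have p2 : 0 < s ^ (1 + b) := by positivity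
        have p3 : 0 < (2:ℝ) ^ (1 + b) := by positivity
        rw [ge_iff_le, div_mul_eq_mul_div, le_div_iff₀ (by positivity)]
        have : mEV φ Y s ^ (1 + b) * (s ^ (1 + b))⁻¹ * (2 ^ (1 + b) * s ^ (1 + b)) =
          mEV φ Y s ^ (1 + b) * 2 ^ (1 + b) := by field_simp
        rw [this]; gcongr
      have h5 : c * (mEV φ Y s ^ (1 + b) * s ^ (-(1 + b))) ≤ gEV φ (Y s) := by
        refine le_trans ?_ h3
        have := mul_le_mul_of_nonneg_left h4.le hc.le
        linarith
      have h6 : mEV φ Y s ^ (1 + b) * mEV φ Y s ^ (-b - 1) = 1 := by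
        rw [← Real.rpow_add hms, show 1 + b + (-b - 1) = 0 by ring, Real.rpow_zero]
      have h7 : s ^ (-(1 + b)) * s ^ 2 = s ^ (2 - b - 1) := by
        rw [← Real.rpow_natCast, ← Real.rpow_add hs0]; congr 1; push_cast; ring
      have h8 : 0 < mEV φ Y s ^ (-b - 1) := by positivity
      have h9 : c * s ^ (2 - b - 1) ≤ gEV φ (Y s) * s ^ 2 * mEV φ Y s ^ (-b - 1) := by
        calc c * s ^ (2 - b - 1)
            = c * (mEV φ Y s ^ (1 + b) * s ^ (-(1 + b))) * s ^ 2 * mEV φ Y s ^ (-b - 1) := by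
              rw [← h7]; linear_combination (-c * (s ^ (-(1 + b)) * s ^ 2)) * h6
          _ ≤ _ := by gcongr
      have h10 : c3 * (2 - b) = 4 * Real.pi * b * c := by
        rw [hc3]; field_simp [show (2 - b) ≠ 0 by linarith]
      have h11 : 4 * Real.pi * b * (c * s ^ (2 - b - 1)) ≤
        4 * Real.pi * b * (gEV φ (Y s) * s ^ 2 * mEV φ Y s ^ (-b - 1)) := by gcongr
      have h12 : c3 * ((2 - b) * s ^ (2 - b - 1)) = 4 * Real.pi * b * (c * s ^ (2 - b - 1)) := by
        rw [← mul_assoc, h10]; ring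
      rw [h12]
      linarith
  have := hanti ⟨le_rfl, h12⟩ ⟨h12, le_rfl⟩ h12
  simp only at this
  have h0 : 0 ≤ mEV φ Y r2 ^ (-b) := by have := hmpos r2 h12; positivity
  linarith

/-- Outside the support `y` can only drop by `2m(R)/R`. -/
lemma Y_far (hnn : ∀ η, 0 ≤ φ η) (hφ : Continuous φ) (hs : IsEVSteady φ κ Y)
    {R : ℝ} (hR : 0 < R) (hY : Y R ≤ 0) (hb : 1 / 2 ≤ 1 - 2 * mEV φ Y R / R) {r : ℝ} (hr : R ≤ r) :
    Y R - 1 / 2 ≤ Y r := by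
  have hY0 : ∀ s, R ≤ s → Y s ≤ 0 := fun s h =>
    (Y_anti hnn hφ hs (mem_Ici.2 hR.le) (mem_Ici.2 (hR.le.trans h)) h).trans hY
  have hm0 := m_nonneg hnn hφ hs hR.le
  have hmanti : ∀ s, R ≤ s → mEV φ Y s ≤ mEV φ Y R := by
    have : AntitoneOn (mEV φ Y) (Ici R) := by
      apply antitoneOn_of_deriv_nonpos (convex_Ici R)
      · exact (m_contOn hφ hs).mono (Ici_subset_Ici.2 hR.le)
      · intro s h
        rw [interior_Ici] at h
        exact (m_deriv hφ hs (hR.trans h)).differentiableAt.differentiableWithinAt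
      · intro s h
        rw [interior_Ici] at h
        rw [(m_deriv hφ hs (hR.trans h)).deriv, gEV_of_nonpos (hY0 s (le_of_lt h))]
        simp
    exact fun s h => this (mem_Ici.2 le_rfl) (mem_Ici.2 h) h
  set m0 := mEV φ Y R with hm0d
  have hd : ∀ s, R ≤ s → HasDerivAt (fun s => Y s - 2 * m0 * s⁻¹)
      (deriv Y s - 2 * m0 * (-(s ^ 2)⁻¹)) s := fun s h =>
    (Y_diff hs (hR.trans_le h)).hasDerivAt.sub
      ((hasDerivAt_inv (hR.trans_le h).ne').const_mul _)
  have : MonotoneOn (fun s => Y s - 2 * m0 * s⁻¹) (Ici R) := by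
    apply monotoneOn_of_deriv_nonneg (convex_Ici R)
    · exact fun s h => (hd s h).continuousAt.continuousWithinAt
    · intro s h
      rw [interior_Ici] at h
      exact (hd s (le_of_lt h)).differentiableAt.differentiableWithinAt
    · intro s h
      rw [interior_Ici] at h
      have h0 : 0 < s := hR.trans h
      have hle : R ≤ s := le_of_lt h
      rw [(hd s hle).deriv, (hs.2.2 s h0).2, hEV_of_nonpos (hY0 s hle)]
      have hms := m_nonneg hnn hφ hs h0.le
      have hb' : 1 / 2 ≤ 1 - 2 * mEV φ Y s / s := by
        have : 2 * mEV φ Y s / s ≤ 2 * m0 / R := by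
          have := hmanti s hle
          gcongr
        linarith
      have hi : (1 - 2 * mEV φ Y s / s)⁻¹ ≤ 2 := by
        rw [inv_le_comm₀ (by linarith) (by norm_num)]; linarith
      have : (1 - 2 * mEV φ Y s / s)⁻¹ * (mEV φ Y s / s ^ 2) ≤ 2 * (m0 / s ^ 2) := by
        have := hmanti s hle
        gcongr
      rw [div_eq_mul_inv m0] at this
      rw [mul_zero, add_zero]
      linarith
  have := this (mem_Ici.2 le_rfl) (mem_Ici.2 hr) hr
  simp only at this
  have e1 : 2 * m0 * R⁻¹ ≤ 1 / 2 := by rw [← div_eq_mul_inv]; linarith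
  have e2 : 0 ≤ 2 * m0 * r⁻¹ := by have := hR.trans_le hr; positivity
  linarith

end bounds

/-! ### Small-redshift asymptotics -/

/-- The quantitative facts about a steady state of small central redshift `κ` on which the
coercivity estimate rests; `N` stands for `κ^(1+2a)`, the size of the density. The bounds on
`2m/r`, `y'` and `y''` are only claimed inside the support, i.e. where `y > 0`. -/
structure SteadyBounds (φ : ℝ → ℝ) (κ M c N : ℝ) (Y : ℝ → ℝ) (yinf : ℝ) : Prop where
  yinf_ge : -1 ≤ yinf
  yinf_le : yinf ≤ 0
  Y_le : ∀ r, 0 ≤ r → Y r ≤ κ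
  radius : ∃ R, 0 < R ∧ ∀ r, 0 ≤ r → 0 < Y r → r < R
  r2_le : ∀ r, 0 < r → 0 < Y r → N * r ^ 2 ≤ M * κ
  mu'_nonneg : ∀ r, 0 < r → 0 < Y r → 0 ≤ -deriv Y r
  mu'_le : ∀ r, 0 < r → 0 < Y r → -(r * deriv Y r) ≤ M * κ
  mu'_ge : ∀ r, 0 < r → 0 < Y r → c * N * r ≤ -deriv Y r
  m_nonneg : ∀ r, 0 < r → 0 ≤ 2 * mEV φ Y r / r
  m_le : ∀ r, 0 < r → 0 < Y r → 2 * mEV φ Y r / r ≤ M * κ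
  g_nonneg : ∀ y, 0 ≤ gEV φ y
  h_nonneg : ∀ y, 0 ≤ hEV φ y
  g_le : ∀ y, y ≤ κ → gEV φ y ≤ M * N
  h_le : ∀ y, y ≤ κ → hEV φ y ≤ M * κ * N
  mu''_ge : ∀ r, 0 < r → 0 < Y r →
    4 * Real.pi * gEV φ (Y r) - M * κ * N ≤ -(deriv (deriv Y) r + 2 * deriv Y r / r)

set_option maxHeartbeats 1000000 in
/-- Small-redshift asymptotics of the steady states: the radius of the support is of order
`κ^{-a}`, and the density and mean density inside are of order `κ^(1+2a)`. -/
lemma steady_bounds (φ : ℝ → ℝ) (hφcont : Continuous φ)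
    (hφ0 : ∀ η : ℝ, η ≤ 0 → φ η = 0) (hφpos : ∀ η : ℝ, 0 < η → 0 < φ η)
    (Cc k δ : ℝ) (hCc : 0 < Cc) (hk : 0 < k) (hk' : k < 3 / 2) (hδ : 0 < δ)
    (hO : ∃ C₁ : ℝ, 0 < C₁ ∧ ∃ η₁ : ℝ, 0 < η₁ ∧
      ∀ η : ℝ, 0 < η → η < η₁ → |φ η - Cc * η ^ k| ≤ C₁ * η ^ (k + δ))
    (a : ℝ) (ha : a = (k + 1 / 2) / 2) :
    ∃ M c κ0 : ℝ, 1 ≤ M ∧ 0 < c ∧ 0 < κ0 ∧ κ0 ≤ 1 ∧ ∀ κ, 0 < κ → κ ≤ κ0 →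
      ∀ Y, IsEVSteady φ κ Y → ∀ yinf, Tendsto Y atTop (𝓝 yinf) →
        SteadyBounds φ κ M c (κ ^ (1 + 2 * a)) Y yinf := by
  have hnn : ∀ η, 0 ≤ φ η := fun η => by
    rcases le_or_gt η 0 with h | h
    · exact (hφ0 η h).ge
    · exact (hφpos η h).le
  obtain ⟨M, c0, κ0, hM1, hc0, hκ0, hκ01, hP⟩ :=
    profile_bounds φ hφcont hφ0 hφpos Cc k δ hCc hk hδ hO a ha
  have hM : 0 < M := by linarith
  have hpi := Real.pi_pos
  have hpi4 := Real.pi_le_four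
  have hpi3 := Real.pi_gt_three
  set b := 2 * a with hb
  have hb0 : 0 < b := by rw [hb, ha]; linarith
  have hb2 : b < 2 := by rw [hb, ha]; linarith
  set c2 := c0 / 8 with hc2
  have hc20 : 0 < c2 := by positivity
  set c1 := 1 / (40 * M) with hc1
  have hc10 : 0 < c1 := by positivity
  have hc1M : M * c1 = 1 / 40 := by rw [hc1]; field_simp
  have hc11 : c1 ≤ 1 / 40 := by rw [← hc1M]; nlinarith
  set c3 := 4 * Real.pi * b * c2 / (2 - b) with hc3
  have hb2' : 0 < 2 - b := by linarith
  have hc30 : 0 < c3 := by positivity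
  -- in units of `κ^{-a}` the support has radius below `K = 2 q`
  set W := (c2 * c1 ^ 3) ^ (-b) + c3 * c1 ^ (2 - b) with hW
  have hW0 : 0 < W := by positivity
  set q := ((W + 1) / c3) ^ (1 / (2 - b)) + c1 with hq
  have hqc : c1 ≤ q := by
    have : 0 < ((W + 1) / c3) ^ (1 / (2 - b)) := by positivity
    linarith
  have hq0 : 0 < q := hc10.trans_le hqc
  have hqW : W + 1 ≤ c3 * q ^ (2 - b) := by
    have h1 : ((W + 1) / c3) ≤ q ^ (2 - b) := by
      calc (W + 1) / c3 = (((W + 1) / c3) ^ (1 / (2 - b))) ^ (2 - b) := by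
            rw [← Real.rpow_mul (by positivity), one_div, inv_mul_cancel₀ hb2'.ne', Real.rpow_one]
        _ ≤ _ := Real.rpow_le_rpow (by positivity) (by linarith) hb2'.le
    rw [div_le_iff₀ hc30] at h1
    linarith
  have hKc : c1 / (2 * q) ≤ 1 := by rw [div_le_one (by positivity)]; linarith
  clear_value b c2 c1 c3 W q
  set κ1 := min κ0 (1 / (160 * M * q ^ 2)) with hκ1
  refine ⟨M + 160 * M * q ^ 2 + 4 * q ^ 2 + 2 * (4 * Real.pi * M * (160 * M * q ^ 2) +
      2 * (160 * M * q ^ 2) * (4 * Real.pi / 3 * M)), c2 * (c1 / (2 * q)) ^ 3, κ1,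
    ?_, by positivity, by positivity, (min_le_left _ _).trans hκ01, ?_⟩
  · have : 0 ≤ 160 * M * q ^ 2 + 4 * q ^ 2 + 2 * (4 * Real.pi * M * (160 * M * q ^ 2) +
      2 * (160 * M * q ^ 2) * (4 * Real.pi / 3 * M)) := by positivity
    linarith
  intro κ hκ hκle Y hs yinf hlim
  have hκκ0 : κ ≤ κ0 := hκle.trans (min_le_left _ _)
  have hκ1' : κ ≤ 1 := hκκ0.trans hκ01
  have hκq : 160 * M * q ^ 2 * κ ≤ 1 := by
    have := hκle.trans (min_le_right _ _)
    rwa [le_div_iff₀ (by positivity), mul_comm] at this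
  set N := κ ^ (1 + b) with hN
  have hN0 : 0 < N := by positivity
  obtain ⟨hg, -, hl⟩ := hP κ hκ hκκ0
  rw [← hN] at hg hl
  have hglow : ∀ y, 0 < y → y ≤ κ → 8 * c2 * y ^ (1 + b) ≤ gEV φ y := by
    intro y h0 h1
    have := (hP y h0 (h1.trans hκκ0)).2.1
    rw [hc2]; linarith
  set ρ := κ ^ (-(b / 2)) with hρ
  have hρ0 : 0 < ρ := by positivity
  have hρN : N * ρ ^ 2 = κ := by
    rw [hN, hρ, ← Real.rpow_natCast, ← Real.rpow_mul hκ.le, ← Real.rpow_add hκ]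
    conv_rhs => rw [← Real.rpow_one κ]
    congr 1; push_cast; ring
  have hρb : (κ * ρ) ^ (-b) = ρ ^ (2 - b) := by
    have : κ * ρ = κ ^ (1 - b / 2) := by
      rw [hρ]; nth_rewrite 1 [← Real.rpow_one κ]; rw [← Real.rpow_add hκ]; congr 1
    rw [this, hρ, ← Real.rpow_mul hκ.le, ← Real.rpow_mul hκ.le]
    congr 1; ring
  set r1 := c1 * ρ with hr1
  set R := 2 * (q * ρ) with hR
  have hr10 : 0 < r1 := by positivity
  have hR0 : 0 < R := by positivity
  have hr1R : r1 ≤ q * ρ := by rw [hr1]; gcongr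
  have hNr : ∀ r, 0 ≤ r → r ≤ R → N * r ^ 2 ≤ 4 * q ^ 2 * κ := by
    intro r h0 h1
    calc N * r ^ 2 ≤ N * R ^ 2 := by gcongr
      _ = 4 * q ^ 2 * (N * ρ ^ 2) := by rw [hR]; ring
      _ = _ := by rw [hρN]
  have hNr' : ∀ r, 0 ≤ r → r ≤ R → 40 * M * (N * r ^ 2) ≤ 1 := by
    intro r h0 h1
    calc 40 * M * (N * r ^ 2) ≤ 40 * M * (4 * q ^ 2 * κ) :=
          mul_le_mul_of_nonneg_left (hNr r h0 h1) (by positivity)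
      _ = 160 * M * q ^ 2 * κ := by ring
      _ ≤ 1 := hκq
  clear_value N ρ r1 R
  have near := fun r (h0 : 0 < r) (h1 : r ≤ R) =>
    near_bounds hnn hφcont hs hκ hκ1' hM.le hN0.le hg hl h0 (hNr' r h0.le h1)
  have Yge := fun r (h0 : 0 ≤ r) (h1 : r ≤ R) =>
    Y_ge_near hnn hφcont hs hκ hκ1' hM.le hN0.le hg hl h0 (hNr' r h0 h1)
  -- on `[0, r₁]` the density is comparable to `κ^(1+2a)`
  have hm_r1 : ∀ r, 0 ≤ r → r ≤ r1 → c2 * N * r ^ 3 ≤ mEV φ Y r := by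
    intro r h0 h1
    have hgs : ∀ s, 0 < s → s < r1 → c2 * N ≤ gEV φ (Y s) := by
      intro s hs0 hs1
      have hY2 : κ / 2 ≤ Y s := by
        refine le_trans ?_ (Yge s hs0.le (by rw [hR]; linarith [hs1.le, hr1R]))
        have : 20 * M * N * s ^ 2 ≤ κ / 2 := by
          calc 20 * M * N * s ^ 2 ≤ 20 * M * N * r1 ^ 2 := by gcongr
            _ = 20 * (M * c1) * c1 * (N * ρ ^ 2) := by rw [hr1]; ring
            _ = c1 / 2 * κ := by rw [hρN, hc1M]; ring
            _ ≤ κ / 2 := by nlinarith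
        linarith
      refine le_trans ?_ ((hglow (κ / 2) (by positivity) (by linarith)).trans
        (gEV_mono hnn hφcont hY2))
      have : (2:ℝ) ^ (1 + b) ≤ 8 := by
        calc (2:ℝ) ^ (1 + b) ≤ 2 ^ (3:ℝ) :=
              Real.rpow_le_rpow_of_exponent_le (by norm_num) (by linarith)
          _ = 8 := by norm_num
      have p3 : 0 < (2:ℝ) ^ (1 + b) := by positivity
      rw [Real.div_rpow hκ.le (by norm_num), ← hN, mul_comm (8:ℝ), mul_assoc]
      gcongr
      rw [mul_div_assoc', le_div_iff₀ p3, mul_comm N]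
      gcongr
    refine le_trans ?_ (m_ge hφcont hs hgs h0 h1)
    have : 0 ≤ c2 * N * r ^ 3 := by positivity
    have : c2 * N * r ^ 3 * 1 ≤ c2 * N * r ^ 3 * (4 * Real.pi / 3) := by
      gcongr; linarith
    linarith
  have hm1 : 0 < mEV φ Y r1 := lt_of_lt_of_le (by positivity) (hm_r1 r1 hr10.le le_rfl)
  have hYR : Y R ≤ 0 := by
    by_contra! hpos
    have h := radius_ineq hnn hφcont hs hb0 hb2 hc20 hglow hr10 hr1R (hR ▸ hpos) hm1
    have e1 : mEV φ Y r1 ^ (-b) ≤ (c2 * c1 ^ 3) ^ (-b) * ρ ^ (2 - b) := by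
      rw [← hρb, ← Real.mul_rpow (by positivity) (by positivity)]
      refine Real.rpow_le_rpow_of_nonpos (by positivity) ?_ (by linarith)
      refine le_trans (le_of_eq ?_) (hm_r1 r1 hr10.le le_rfl)
      rw [hr1, ← hρN]; ring
    rw [← hc3, Real.mul_rpow hq0.le hρ0.le, hr1, Real.mul_rpow hc10.le hρ0.le] at h
    have hρ2 : 0 < ρ ^ (2 - b) := by positivity
    have h2 : (c3 * q ^ (2 - b)) * ρ ^ (2 - b) ≤ W * ρ ^ (2 - b) := by
      rw [hW]; rw [← hr1] at h; linarith
    have := le_of_mul_le_mul_right h2 hρ2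
    linarith
  have inR : ∀ r, 0 ≤ r → 0 < Y r → r < R := by
    intro r h0 hY
    by_contra! hle
    have := Y_anti hnn hφcont hs (mem_Ici.2 hR0.le) (mem_Ici.2 h0) hle
    linarith
  set L := M + 160 * M * q ^ 2 + 4 * q ^ 2 + 2 * (4 * Real.pi * M * (160 * M * q ^ 2) +
      2 * (160 * M * q ^ 2) * (4 * Real.pi / 3 * M)) with hL
  have hLpos : 0 < 4 * Real.pi * M * (160 * M * q ^ 2) +
      2 * (160 * M * q ^ 2) * (4 * Real.pi / 3 * M) := by positivity
  have p1 : 0 < 160 * M * q ^ 2 := by positivity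
  have p2 : 0 < 4 * q ^ 2 := by positivity
  have hmu : ∀ r, 0 < r → r ≤ R → -(r * deriv Y r) ≤ 160 * M * q ^ 2 * κ := by
    intro r h0 h1
    calc -(r * deriv Y r) = r * -deriv Y r := by ring
      _ ≤ r * (40 * M * N * r) := by gcongr; exact (near r h0 h1).2.2.2
      _ = 40 * M * (N * r ^ 2) := by ring
      _ ≤ 40 * M * (4 * q ^ 2 * κ) := mul_le_mul_of_nonneg_left (hNr r h0.le h1) (by positivity)
      _ = _ := by ring
  refine ⟨?_, ?_, fun r h => Y_le hnn hφcont hs h, ⟨R, hR0, inR⟩, ?_, ?_, ?_, ?_, ?_, ?_,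
    fun y => gEV_nonneg hnn hφcont y, fun y => hEV_nonneg hnn hφcont y, ?_, ?_, ?_⟩
  · refine ge_of_tendsto hlim ?_
    filter_upwards [eventually_ge_atTop R] with r hr
    have h1 := Y_far hnn hφcont hs hR0 hYR (near R hR0 le_rfl).2.2.1 hr
    have h2 := Yge R hR0.le le_rfl
    have h3 := hNr' R hR0.le le_rfl
    linarith
  · refine le_of_tendsto hlim ?_
    filter_upwards [eventually_ge_atTop R] with r hr
    exact (Y_anti hnn hφcont hs (mem_Ici.2 hR0.le) (mem_Ici.2 (hR0.le.trans hr)) hr).trans hYR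
  · intro r h0 hY
    refine (hNr r h0.le (inR r h0.le hY).le).trans ?_
    gcongr; linarith
  · intro r h0 _
    have := Y'_nonpos hnn hφcont hs h0
    linarith
  · intro r h0 hY
    refine (hmu r h0 (inR r h0.le hY).le).trans ?_
    gcongr; linarith
  · intro r h0 hY
    have hle := (inR r h0.le hY).le
    have hY' := Y'_le hnn hφcont hs h0
    have key : c2 * (c1 / (2 * q)) ^ 3 * N * r ^ 3 ≤ mEV φ Y r := by
      rcases le_total r r1 with h | h
      · refine le_trans ?_ (hm_r1 r h0.le h)
        have : (c1 / (2 * q)) ^ 3 ≤ 1 := pow_le_one₀ (by positivity) hKc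
        calc c2 * (c1 / (2 * q)) ^ 3 * N * r ^ 3 ≤ c2 * 1 * N * r ^ 3 := by gcongr
          _ = _ := by ring
      · refine le_trans ?_ ((hm_r1 r1 hr10.le le_rfl).trans
          (m_mono hnn hφcont hs (mem_Ici.2 hr10.le) (mem_Ici.2 h0.le) h))
        calc c2 * (c1 / (2 * q)) ^ 3 * N * r ^ 3 ≤ c2 * (c1 / (2 * q)) ^ 3 * N * R ^ 3 := by
              gcongr
          _ = c2 * N * r1 ^ 3 := by rw [hR, hr1]; field_simp
    have : c2 * (c1 / (2 * q)) ^ 3 * N * r ≤ mEV φ Y r / r ^ 2 := by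
      rw [le_div_iff₀ (by positivity)]; linarith
    linarith
  · intro r h0
    have := m_nonneg hnn hφcont hs h0.le
    positivity
  · intro r h0 hY
    have hle := (inR r h0.le hY).le
    refine (near r h0 hle).2.1.trans ?_
    have : 10 * M * (N * r ^ 2) ≤ 10 * M * (4 * q ^ 2 * κ) :=
      mul_le_mul_of_nonneg_left (hNr r h0.le hle) (by positivity)
    refine this.trans ?_
    have : 40 * M * q ^ 2 * κ ≤ L * κ := by
      gcongr
      have : 0 ≤ M * q ^ 2 := by positivity
      linarith
    linarith
  · intro y hy
    refine (hg y hy).trans ?_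
    gcongr; linarith
  · intro y hy
    have := hY_le hκ hM.le hN0.le hl hy
    have : M * κ * N ≤ L * κ * N := by gcongr; linarith
    linarith
  · intro r h0 hY
    have hle := (inR r h0.le hY).le
    have := second_deriv_bound hnn hφcont hs (K := M * N) (A := 160 * M * q ^ 2 * κ)
      (B := 4 * Real.pi / 3 * (M * N)) (by positivity) hl h0 hY (near r h0 hle).2.2.1
      (hmu r h0 hle) (near r h0 hle).1 (by positivity)
    refine le_trans ?_ this
    have : 2 * (4 * Real.pi * M * (160 * M * q ^ 2) +
      2 * (160 * M * q ^ 2) * (4 * Real.pi / 3 * M)) * (κ * N) ≤ L * (κ * N) := by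
      gcongr; linarith
    linarith

/-! ### The ansatz function and radial momentum integrals -/

/-- The standing assumptions on the ansatz function `φ`. -/
structure Prof (φ : ℝ → ℝ) : Prop where
  cont : Continuous φ
  c2 : ContDiffOn ℝ 2 φ (Ioi 0)
  zero : ∀ η, η ≤ 0 → φ η = 0
  pos : ∀ η, 0 < η → 0 < φ η
  dpos : ∀ η, 0 < η → 0 < deriv φ η

namespace Prof
variable {φ : ℝ → ℝ} (hp : Prof φ)
include hp

lemma nonneg (η : ℝ) : 0 ≤ φ η := by
  rcases le_or_gt η 0 with h | h
  · exact (hp.zero η h).ge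
  · exact (hp.pos η h).le

/-- At `η ≤ 0` the function attains its minimum, so `deriv φ` vanishes there, whether or not `φ`
is differentiable at `0`. -/
lemma deriv_zero {η : ℝ} (h : η ≤ 0) : deriv φ η = 0 := by
  apply IsLocalMin.deriv_eq_zero
  exact Eventually.of_forall fun y => by rw [hp.zero η h]; exact hp.nonneg y

lemma deriv_nonneg (η : ℝ) : 0 ≤ deriv φ η := by
  rcases le_or_gt η 0 with h | h
  · exact (hp.deriv_zero h).ge
  · exact (hp.dpos η h).le

lemma deriv_c1 : ContDiffOn ℝ 1 (deriv φ) (Ioi 0) :=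
  hp.c2.deriv_of_isOpen isOpen_Ioi (by norm_num)

lemma hasDeriv {η : ℝ} (h : 0 < η) : HasDerivAt φ (deriv φ η) η :=
  ((hp.c2.contDiffAt (Ioi_mem_nhds h)).differentiableAt (by norm_num)).hasDerivAt

lemma mono : Monotone φ := by
  intro x y h
  rcases le_or_gt x 0 with h0 | h0
  · rw [hp.zero x h0]; exact hp.nonneg y
  · have : MonotoneOn φ (Ioi 0) := by
      apply monotoneOn_of_deriv_nonneg (convex_Ioi 0) hp.cont.continuousOn
      · intro s hs
        rw [interior_Ioi] at hs
        exact (hp.hasDeriv hs).differentiableAt.differentiableWithinAt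
      · intro s _; exact hp.deriv_nonneg s
    exact this h0 (h0.trans_le h) h

end Prof

/-- `⟨p⟩` for a scalar `p`. -/
def jp (p : ℝ) : ℝ := Real.sqrt (1 + p ^ 2)

lemma jp_pos (p : ℝ) : 0 < jp p := Real.sqrt_pos.2 (by positivity)
lemma jp_sq (p : ℝ) : jp p ^ 2 = 1 + p ^ 2 := Real.sq_sqrt (by positivity)
lemma jp_cont : Continuous jp := by unfold jp; fun_prop
lemma one_le_jp (p : ℝ) : 1 ≤ jp p := Real.one_le_sqrt.2 (by nlinarith)

lemma jp_deriv (p : ℝ) : HasDerivAt jp (p / jp p) p := by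
  have h : HasDerivAt (fun p : ℝ => 1 + p ^ 2) (2 * p) p := by
    simpa using (hasDerivAt_pow 2 p).const_add 1
  exact (h.sqrt (by positivity)).congr_deriv (by unfold jp; field_simp)

section radial
variable {φ : ℝ → ℝ} (hp : Prof φ) {s P : ℝ} (hs : 0 < s) (hs1 : s < 1) (hP : 0 < P)
  (hPs : s * jp P = 1)
include hP hPs hs hs1

omit hs1 in
lemma sjp_lt {p : ℝ} (h0 : 0 ≤ p) (h : p < P) : s * jp p < 1 := by
  rw [← hPs]
  have : jp p < jp P := Real.sqrt_lt_sqrt (by positivity) (by nlinarith)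
  gcongr

omit hs1 in
lemma sjp_ge {p : ℝ} (h : P ≤ p) : 1 ≤ s * jp p := by
  rw [← hPs]
  have : jp P ≤ jp p := Real.sqrt_le_sqrt (by nlinarith)
  gcongr

include hp

omit hs1 in
lemma u_deriv {p : ℝ} (hp0 : 0 < p) (hpP : p < P) :
    HasDerivAt (fun p => φ (1 - s * jp p)) (-(deriv φ (1 - s * jp p) * (s * (p / jp p)))) p := by
  have h1 := sjp_lt hs hP hPs hp0.le hpP
  have h2 := (hp.hasDeriv (sub_pos.2 h1)).comp p (((jp_deriv p).const_mul s).const_sub 1)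
  exact h2.congr_deriv (by ring)

omit hs1 in
/-- Integrability holds although `deriv φ` may blow up at `0`, because the integrand has a sign. -/
lemma u'_int : IntervalIntegrable (fun p => deriv φ (1 - s * jp p) * (s * (p / jp p)))
    volume 0 P := by
  apply intervalIntegral.intervalIntegrable_deriv_of_nonneg (g := fun p => -φ (1 - s * jp p))
  · have := hp.cont; have := jp_cont; fun_prop
  · intro p h
    rw [min_eq_left hP.le, max_eq_right hP.le] at h
    exact ((u_deriv hp hs hP hPs h.1 h.2).neg).congr_deriv (by ring)
  · intro p h
    rw [min_eq_left hP.le, max_eq_right hP.le] at h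
    have := hp.deriv_nonneg (1 - s * jp p)
    have := jp_pos p
    have := h.1
    positivity

omit hs1 in
lemma rad_int : IntervalIntegrable (fun p => p ^ 2 * deriv φ (1 - s * jp p)) volume 0 P := by
  have h1 := (u'_int hp hs hP hPs).continuousOn_mul (g := fun p => p * jp p / s)
    (by have := jp_cont; fun_prop)
  refine h1.congr ?_
  intro p _
  have := jp_pos p
  simp only
  field_simp

omit hs1 in
/-- The substitution `η = 1 - s⟨p⟩` turns the `φ'`-integral into at most `φ 1`, although `φ'` itself
may blow up at the cut-off energy. -/
lemma rad_le : ∫ p in (0:ℝ)..P, p ^ 2 * deriv φ (1 - s * jp p) ≤ P * jp P / s * φ 1 := by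
  have h1 := u'_int hp hs hP hPs
  have h2 : ∫ p in (0:ℝ)..P, deriv φ (1 - s * jp p) * (s * (p / jp p)) ≤ φ 1 := by
    have h := intervalIntegral.integral_eq_sub_of_hasDerivAt_of_le hP.le
      (f := fun p => -φ (1 - s * jp p)) (by have := hp.cont; have := jp_cont; fun_prop)
      (fun p h => ((u_deriv hp hs hP hPs h.1 h.2).neg).congr_deriv (neg_neg _)) h1
    rw [h]
    have e1 : φ (1 - s * jp P) = 0 := hp.zero _ (by rw [hPs]; simp)
    have e2 : φ (1 - s * jp 0) ≤ φ 1 := hp.mono (by have := jp_pos 0; nlinarith)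
    linarith
  calc ∫ p in (0:ℝ)..P, p ^ 2 * deriv φ (1 - s * jp p)
      ≤ ∫ p in (0:ℝ)..P, P * jp P / s * (deriv φ (1 - s * jp p) * (s * (p / jp p))) := by
        apply intervalIntegral.integral_mono_on hP.le (rad_int hp hs hP hPs) (h1.const_mul _)
        intro p h
        have h3 : jp p ≤ jp P := Real.sqrt_le_sqrt (by nlinarith [h.1, h.2])
        have h4 := jp_pos p
        have h6 := jp_pos P
        have h5 := hp.deriv_nonneg (1 - s * jp p)
        have e : p ^ 2 * deriv φ (1 - s * jp p) =
          p * jp p / s * (deriv φ (1 - s * jp p) * (s * (p / jp p))) := by field_simp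
        rw [e]
        have := h.1
        have := h.2
        gcongr
    _ ≤ _ := by
        rw [intervalIntegral.integral_const_mul]
        have := jp_pos P
        gcongr

/-- Integrating by parts in `p` expresses the fourth radial moment of `φ'` through the density and
the pressure. -/
lemma rad4 : 4 * Real.pi / 3 * ∫ p in (0:ℝ)..P, p ^ 4 * deriv φ (1 - s * jp p) =
    1 / s * (gEV φ (-Real.log s) + hEV φ (-Real.log s)) := by
  have hjc := jp_cont
  have hpc := hp.cont
  have hj0 : ∀ p, jp p ≠ 0 := fun p => (jp_pos p).ne'
  set u : ℝ → ℝ := fun p => φ (1 - s * jp p) with hu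
  have huc : Continuous u := by fun_prop
  -- integration by parts against `p³⟨p⟩`
  have hV : ∀ p, HasDerivAt (fun p => p ^ 3 * jp p) (3 * p ^ 2 * jp p + p ^ 4 / jp p) p := fun p =>
    ((hasDerivAt_pow 3 p).mul (jp_deriv p)).congr_deriv (by push_cast; ring)
  have hV' : Continuous (fun p => 3 * p ^ 2 * jp p + p ^ 4 / jp p) := by
    fun_prop (disch := exact hj0 _)
  have ibp := intervalIntegral.integral_mul_deriv_eq_deriv_mul_of_hasDerivAt (a := 0) (b := P)
    (u := fun p => p ^ 3 * jp p) (v := u) (u' := fun p => 3 * p ^ 2 * jp p + p ^ 4 / jp p)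
    (v' := fun p => -(deriv φ (1 - s * jp p) * (s * (p / jp p))))
    (by fun_prop) huc.continuousOn (fun p _ => hV p)
    (fun p h => by
      rw [min_eq_left hP.le, max_eq_right hP.le] at h
      exact u_deriv hp hs hP hPs h.1 h.2)
    (hV'.intervalIntegrable _ _) (u'_int hp hs hP hPs).neg
  have uP : u P = 0 := hp.zero _ (by rw [hPs]; simp)
  rw [uP] at ibp
  have e1 : ∫ p in (0:ℝ)..P, p ^ 3 * jp p * -(deriv φ (1 - s * jp p) * (s * (p / jp p))) =
      -(s * ∫ p in (0:ℝ)..P, p ^ 4 * deriv φ (1 - s * jp p)) := by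
    rw [← intervalIntegral.integral_const_mul, ← intervalIntegral.integral_neg]
    congr 1; funext p
    have := hj0 p
    field_simp
  have e2 : ∫ p in (0:ℝ)..P, (3 * p ^ 2 * jp p + p ^ 4 / jp p) * u p =
      3 * (∫ p in (0:ℝ)..P, p ^ 2 * jp p * u p) + ∫ p in (0:ℝ)..P, p ^ 4 / jp p * u p := by
    rw [← intervalIntegral.integral_const_mul, ← intervalIntegral.integral_add]
    · congr 1; funext p; ring
    · exact Continuous.intervalIntegrable (by fun_prop) _ _
    · exact Continuous.intervalIntegrable (by fun_prop (disch := exact hj0 _)) _ _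
  -- substitution `η = 1 - s⟨p⟩` in the defining integrals of `g` and `h`
  have hsub : ∀ Gf : ℝ → ℝ, Continuous Gf →
      ∫ η in (0:ℝ)..(1 - s), Gf η = ∫ p in (0:ℝ)..P, Gf (1 - s * jp p) * (s * (p / jp p)) := by
    intro Gf hG
    have h := intervalIntegral.integral_comp_mul_deriv (a := 0) (b := P)
      (f := fun p => 1 - s * jp p) (f' := fun p => -(s * (p / jp p))) (g := Gf)
      (fun p _ => ((jp_deriv p).const_mul s).const_sub 1)
      (Continuous.continuousOn (by fun_prop (disch := exact hj0 _))) hG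
    have j0 : jp 0 = 1 := by simp [jp]
    simp only [Function.comp_apply, hPs, j0, mul_one, sub_self] at h
    rw [intervalIntegral.integral_symm, ← h, ← intervalIntegral.integral_neg]
    congr 1; funext p; ring
  have hlog : 0 < -Real.log s := by have := Real.log_neg hs hs1; linarith
  have ex1 : Real.exp (-(-Real.log s)) = s := by rw [neg_neg, Real.exp_log hs]
  have ex2 : Real.exp (4 * -Real.log s) = 1 / s ^ 4 := by
    rw [show 4 * -Real.log s = -(Real.log s * (4:ℕ)) by push_cast; ring, Real.exp_neg,
      mul_comm, Real.exp_nat_mul, Real.exp_log hs, one_div]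
  have hrt : ∀ p, 0 ≤ p → rt (-Real.log s) (1 - s * jp p) = s * p := by
    intro p h0
    unfold rt
    have : Real.exp (-2 * -Real.log s) = s ^ 2 := by
      rw [show -2 * -Real.log s = (2:ℕ) * Real.log s by push_cast; ring,
        Real.exp_nat_mul, Real.exp_log hs]
    rw [this, show (1 - (1 - s * jp p)) ^ 2 - s ^ 2 = (s * p) ^ 2 by
      rw [sub_sub_cancel, mul_pow, jp_sq]; ring]
    exact Real.sqrt_sq (by positivity)
  have eg : gEV φ (-Real.log s) = 4 * Real.pi * ∫ p in (0:ℝ)..P, p ^ 2 * jp p * u p := by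
    have hc : Continuous fun η => φ η * (1 - η) ^ 2 * rt (-Real.log s) η := by
      have := rt_cont_right (-Real.log s); fun_prop
    rw [gEV_eq hpc, ← integral_cut hc hlog (fun η h1 h2 => by rw [rt_zero h1 h2, mul_zero]), ex1,
      hsub _ hc, ex2]
    rw [show 4 * Real.pi * (1 / s ^ 4) = 4 * Real.pi * (s ^ 4)⁻¹ by ring, mul_assoc]
    congr 1
    rw [← intervalIntegral.integral_const_mul]
    apply intervalIntegral.integral_congr
    intro p h
    rw [uIcc_of_le hP.le] at h
    have := hj0 p
    simp only [hrt p h.1, hu]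
    field_simp
    ring
  have eh : hEV φ (-Real.log s) = 4 * Real.pi / 3 * ∫ p in (0:ℝ)..P, p ^ 4 / jp p * u p := by
    have hc : Continuous fun η => φ η * rt (-Real.log s) η ^ 3 := by
      have := rt_cont_right (-Real.log s); fun_prop
    rw [hEV_eq hpc, ← integral_cut hc hlog (fun η h1 h2 => by rw [rt_zero h1 h2]; ring), ex1,
      hsub _ hc, ex2]
    rw [show 4 * Real.pi / 3 * (1 / s ^ 4) = 4 * Real.pi / 3 * (s ^ 4)⁻¹ by ring, mul_assoc]
    congr 1
    rw [← intervalIntegral.integral_const_mul]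
    apply intervalIntegral.integral_congr
    intro p h
    rw [uIcc_of_le hP.le] at h
    have := hj0 p
    simp only [hrt p h.1, hu]
    field_simp
  rw [e1, e2] at ibp
  rw [eg, eh]
  have : s * ∫ p in (0:ℝ)..P, p ^ 4 * deriv φ (1 - s * jp p) =
    3 * (∫ p in (0:ℝ)..P, p ^ 2 * jp p * u p) + ∫ p in (0:ℝ)..P, p ^ 4 / jp p * u p := by
    simp only [ne_eq, OfNat.ofNat_ne_zero, not_false_eq_true, zero_pow, zero_mul, mul_zero,
      sub_zero, zero_sub, neg_inj] at ibp
    exact ibp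
  rw [one_div, eq_inv_mul_iff_mul_eq₀ hs.ne']
  linear_combination (4 * Real.pi / 3) * this

end radial

/-! ### The weight `|φ'|` on phase space -/

/-- The normalised particle energy `E/E₀ = e^{-y(r)}⟨v⟩`. -/
def Sf (Y : ℝ → ℝ) (z : V3 × V3) : ℝ := Real.exp (-Y ‖z.1‖) * jap z.2

/-- The support set `{f > 0}` without the null set `x = 0`. -/
def Dp (Y : ℝ → ℝ) : Set (V3 × V3) := {z | z.1 ≠ 0 ∧ Sf Y z < 1}

/-- `|φ'(E)|` up to the factor `1/E₀`. -/
def psi (φ Y : ℝ → ℝ) (z : V3 × V3) : ℝ := deriv φ (1 - Sf Y z)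

/-- The qualitative properties of a steady state used in phase space. -/
structure Qual (φ Y : ℝ → ℝ) : Prop where
  hp : Prof φ
  c2 : ContDiffOn ℝ 2 Y (Ici 0)
  le1 : ∀ r, 0 ≤ r → Y r ≤ 1
  radius : ∃ R, 0 < R ∧ ∀ r, 0 ≤ r → 0 < Y r → r < R

lemma jap_eq (v : V3) : jap v = jp ‖v‖ := rfl
lemma jap_pos (v : V3) : 0 < jap v := jp_pos _
lemma one_le_jap (v : V3) : 1 ≤ jap v := one_le_jp _
lemma jap_sq (v : V3) : jap v ^ 2 = 1 + ‖v‖ ^ 2 := jp_sq _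
lemma norm_le_jap (v : V3) : ‖v‖ ≤ jap v := by
  apply Real.le_sqrt_of_sq_le; linarith
lemma jap_cont : Continuous jap := by unfold jap; fun_prop
lemma jap_contDiff {n : WithTop ℕ∞} : ContDiff ℝ n jap := by
  unfold jap
  apply ContDiff.sqrt
  · exact contDiff_const.add (contDiff_norm_sq ℝ)
  · intro x; positivity

section radialV
variable {φ : ℝ → ℝ} (hp : Prof φ) {s : ℝ} (hs : 0 < s) (hs1 : s < 1)

include hp in
lemma cut_zero {P : ℝ} (hs : 0 < s) (hP : 0 < P) (hPs : s * jp P = 1) {p : ℝ} (h : P ≤ p) :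
    deriv φ (1 - s * jp p) = 0 := by
  apply hp.deriv_zero
  have : jp P ≤ jp p := Real.sqrt_le_sqrt (by nlinarith)
  nlinarith

/-- `P` is the maximal momentum: `s⟨P⟩ = 1` is the cut-off energy. -/
lemma exists_P (hs : 0 < s) (hs1 : s < 1) :
    ∃ P, 0 < P ∧ s * jp P = 1 ∧ P ≤ 1 / s := by
  have h1 : 1 < 1 / s := by rw [lt_div_iff₀ hs]; linarith
  have h2 : 0 < (1 / s) ^ 2 - 1 := by nlinarith
  refine ⟨Real.sqrt ((1 / s) ^ 2 - 1), Real.sqrt_pos.2 h2, ?_, ?_⟩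
  · unfold jp
    rw [Real.sq_sqrt h2.le, add_sub_cancel, Real.sqrt_sq (by positivity)]
    field_simp
  · apply Real.sqrt_le_iff.2 ⟨by positivity, by linarith⟩

lemma ball_vol : (volume : Measure V3).real (Metric.ball 0 1) = 4 / 3 * Real.pi := by
  rw [Measure.real, EuclideanSpace.volume_ball_fin_three]
  rw [ENNReal.ofReal_one, one_pow, one_mul, ENNReal.toReal_ofReal (by positivity)]
  ring

include hp in
/-- Radial moments of `φ'` in polar coordinates; the integrand vanishes for `|v| > P`. -/
lemma polar {P : ℝ} (hs : 0 < s) (hP : 0 < P) (hPs : s * jp P = 1) (n : ℕ) :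
    ∫ v : V3, deriv φ (1 - s * jp ‖v‖) * ‖v‖ ^ n =
      4 * Real.pi * ∫ p in (0:ℝ)..P, p ^ (n + 2) * deriv φ (1 - s * jp p) := by
  have h := integral_fun_norm_addHaar (volume : Measure V3)
    (fun p => deriv φ (1 - s * jp p) * p ^ n)
  rw [h, ball_vol, finrank_euclideanSpace_fin]
  have : ∫ y in Ioi (0:ℝ), y ^ (3 - 1) • (deriv φ (1 - s * jp y) * y ^ n) =
      ∫ p in (0:ℝ)..P, p ^ (n + 2) * deriv φ (1 - s * jp p) := by
    rw [intervalIntegral.integral_of_le hP.le]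
    rw [← setIntegral_eq_of_subset_of_forall_sdiff_eq_zero measurableSet_Ioi
      (Ioc_subset_Ioi_self : Ioc 0 P ⊆ Ioi 0)]
    · apply integral_congr_ae; filter_upwards with p
      simp only [smul_eq_mul, Nat.add_one_sub_one]; ring
    · intro p hp'
      simp only [Set.mem_sdiff, mem_Ioi, mem_Ioc, not_and, not_le] at hp'
      rw [cut_zero hp hs hP hPs (hp'.2 hp'.1).le]; simp
  rw [this]
  simp only [nsmul_eq_mul, smul_eq_mul]; push_cast; ring

include hp in
lemma polar_int {P : ℝ} (hs : 0 < s) (hP : 0 < P) (hPs : s * jp P = 1) :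
    Integrable (fun v : V3 => deriv φ (1 - s * jp ‖v‖)) := by
  rw [integrable_fun_norm_addHaar (volume : Measure V3) (f := fun p => deriv φ (1 - s * jp p)),
    finrank_euclideanSpace_fin]
  have h1 : IntegrableOn (fun p => p ^ 2 * deriv φ (1 - s * jp p)) (Ioc 0 P) := by
    rw [← intervalIntegrable_iff_integrableOn_Ioc_of_le hP.le]
    exact rad_int hp hs hP hPs
  refine h1.of_forall_sdiff_eq_zero measurableSet_Ioi ?_
  intro p hp'
  simp only [Set.mem_sdiff, mem_Ioi, mem_Ioc, not_and, not_le] at hp'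
  simp [cut_zero hp hs hP hPs (hp'.2 hp'.1).le]

end radialV

namespace Qual
variable {φ Y : ℝ → ℝ} (q : Qual φ Y)
include q

lemma psi_nonneg (z : V3 × V3) : 0 ≤ psi φ Y z := q.hp.deriv_nonneg _

lemma psi_zero {z : V3 × V3} (h : 1 ≤ Sf Y z) : psi φ Y z = 0 :=
  q.hp.deriv_zero (by linarith)

lemma Ycont : Continuous (fun x : V3 => Y ‖x‖) :=
  q.c2.continuousOn.comp_continuous continuous_norm fun x => norm_nonneg x

lemma Sf_cont : Continuous (Sf Y) := by
  unfold Sf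
  have h1 : Continuous fun z : V3 × V3 => Y ‖z.1‖ := q.Ycont.comp continuous_fst
  exact (Real.continuous_exp.comp h1.neg).mul (jap_cont.comp continuous_snd)

lemma Dp_open : IsOpen (Dp Y) :=
  (isOpen_ne_fun continuous_fst continuous_const).inter (isOpen_lt q.Sf_cont continuous_const)

lemma psi_meas : Measurable (psi φ Y) :=
  (measurable_deriv φ).comp (measurable_const.sub q.Sf_cont.measurable)

lemma psi_contOn : ContinuousOn (psi φ Y) (Dp Y) := by
  unfold psi
  refine q.hp.deriv_c1.continuousOn.comp (by have := q.Sf_cont; fun_prop) ?_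
  intro z hz
  have := hz.2
  simp only [mem_Ioi]; linarith

omit q in
lemma Y_pos {z : V3 × V3} (hz : Sf Y z < 1) : 0 < Y ‖z.1‖ := by
  by_contra h
  have h1 : 1 ≤ Real.exp (-Y ‖z.1‖) := Real.one_le_exp (by linarith)
  have h2 := one_le_jap z.2
  unfold Sf at hz
  nlinarith

omit q in
lemma jap_lt {z : V3 × V3} (hz : Sf Y z < 1) : jap z.2 < Real.exp (Y ‖z.1‖) := by
  unfold Sf at hz
  rw [Real.exp_neg, inv_mul_lt_iff₀ (Real.exp_pos _), mul_one] at hz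
  exact hz

lemma jap_lt3 {z : V3 × V3} (hz : Sf Y z < 1) : jap z.2 < 3 := by
  have h1 := jap_lt hz
  have h2 : Real.exp (Y ‖z.1‖) ≤ Real.exp 1 := Real.exp_le_exp.2 (q.le1 _ (norm_nonneg _))
  have := Real.exp_one_lt_d9
  linarith

lemma norm_lt3 {z : V3 × V3} (hz : Sf Y z < 1) : ‖z.2‖ < 3 :=
  (norm_le_jap _).trans_lt (q.jap_lt3 hz)

lemma psi_v_int (x : V3) : Integrable (fun v => psi φ Y (x, v)) := by
  by_cases h : Y ‖x‖ ≤ 0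
  · have : (fun v => psi φ Y (x, v)) = fun _ => 0 := by
      funext v; apply q.psi_zero
      by_contra h'
      exact absurd (Y_pos (not_le.1 h')) (not_lt.2 h)
    rw [this]; exact integrable_zero _ _ _
  · have hs1 : Real.exp (-Y ‖x‖) < 1 := Real.exp_lt_one_iff.2 (by linarith [not_le.1 h])
    obtain ⟨P, hP, hPs, _⟩ := exists_P (Real.exp_pos _) hs1
    exact polar_int q.hp (Real.exp_pos _) hP hPs

/-- The velocity integral of the weight is bounded uniformly in `x`. -/
lemma psi_v_le (x : V3) : ∫ v, psi φ Y (x, v) ≤ 4 * Real.pi * (27 * φ 1) := by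
  have h0 := q.hp.nonneg 1
  by_cases h : Y ‖x‖ ≤ 0
  · have : (fun v => psi φ Y (x, v)) = fun _ => 0 := by
      funext v; apply q.psi_zero
      by_contra h'
      exact absurd (Y_pos (not_le.1 h')) (not_lt.2 h)
    rw [this, integral_zero]; positivity
  · have hs := Real.exp_pos (-Y ‖x‖)
    have hs1 : Real.exp (-Y ‖x‖) < 1 := Real.exp_lt_one_iff.2 (by linarith [not_le.1 h])
    obtain ⟨P, hP, hPs, hP'⟩ := exists_P (Real.exp_pos _) hs1
    have h1 := polar q.hp hs hP hPs 0
    simp only [pow_zero, mul_one, zero_add] at h1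
    have h2 : ∫ v, psi φ Y (x, v) = ∫ v : V3, deriv φ (1 - Real.exp (-Y ‖x‖) * jp ‖v‖) := rfl
    rw [h2, h1]
    have h3 := rad_le q.hp hs hP hPs
    have h4 : 1 / Real.exp (-Y ‖x‖) ≤ 3 := by
      rw [Real.exp_neg, one_div, inv_inv]
      have h2 : Real.exp (Y ‖x‖) ≤ Real.exp 1 := Real.exp_le_exp.2 (q.le1 _ (norm_nonneg _))
      have := Real.exp_one_lt_d9
      linarith
    have h5 : jp P = 1 / Real.exp (-Y ‖x‖) := by field_simp; linarith
    have h6 : P * jp P / Real.exp (-Y ‖x‖) * φ 1 ≤ 27 * φ 1 := by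
      apply mul_le_mul_of_nonneg_right _ h0
      rw [div_eq_mul_one_div, h5]
      have : 0 < 1 / Real.exp (-Y ‖x‖) := by positivity
      set t := 1 / Real.exp (-Y ‖x‖)
      have a1 : P * t ≤ 9 := by nlinarith
      nlinarith [mul_pos hP this]
    gcongr
    exact h3.trans h6

/-- The `v`-integral of `|φ'| |v|²` in terms of the macroscopic quantities of the steady state. -/
lemma psi_v4 (x : V3) (h : 0 < Y ‖x‖) : ∫ v, psi φ Y (x, v) * ‖v‖ ^ 2 =
    3 * (Real.exp (Y ‖x‖) * (gEV φ (Y ‖x‖) + hEV φ (Y ‖x‖))) := by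
  have hs := Real.exp_pos (-Y ‖x‖)
  have hs1 : Real.exp (-Y ‖x‖) < 1 := Real.exp_lt_one_iff.2 (by linarith)
  obtain ⟨P, hP, hPs, hP'⟩ := exists_P (Real.exp_pos _) hs1
  have h1 := polar q.hp hs hP hPs 2
  have h2 : ∫ v, psi φ Y (x, v) * ‖v‖ ^ 2 =
    ∫ v : V3, deriv φ (1 - Real.exp (-Y ‖x‖) * jp ‖v‖) * ‖v‖ ^ 2 := rfl
  rw [h2, h1]
  have h3 := rad4 q.hp hs hs1 hP hPs
  rw [Real.log_exp, neg_neg, one_div, ← Real.exp_neg, neg_neg] at h3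
  linarith

omit q in
lemma norm_rad_int (R : ℝ) : Integrable (fun x : V3 =>
    (Iio R).indicator (fun r : ℝ => 1 + 1 / r ^ 2) ‖x‖) := by
  rw [integrable_fun_norm_addHaar (volume : Measure V3)
    (f := (Iio R).indicator (fun r : ℝ => 1 + 1 / r ^ 2)), finrank_euclideanSpace_fin]
  have h1 : IntegrableOn (fun r : ℝ => r ^ 2 + 1) (Ioo 0 R) :=
    (Continuous.integrableOn_Icc (by fun_prop)).mono_set Ioo_subset_Icc_self
  have h2 : IntegrableOn (fun r : ℝ => r ^ (3 - 1) •
      (Iio R).indicator (fun r : ℝ => 1 + 1 / r ^ 2) r) (Ioo 0 R) := by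
    refine h1.congr_fun ?_ measurableSet_Ioo
    intro r hr
    have : r ≠ 0 := hr.1.ne'
    simp only [indicator_of_mem (show r ∈ Iio R from hr.2), smul_eq_mul]
    field_simp
  refine h2.of_forall_sdiff_eq_zero measurableSet_Ioi ?_
  intro r hr
  have : r ∉ Iio R := fun h => hr.2 ⟨hr.1, h⟩
  simp [indicator_of_notMem this]

/-- The dominating function for all integrals below; `1/|x|²` is integrable near `0` in `ℝ³`. -/
lemma maj_int : Integrable (fun z : V3 × V3 => psi φ Y z * (1 + 1 / ‖z.1‖ ^ 2)) := by
  obtain ⟨R, hR, hr⟩ := q.radius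
  have hm : AEStronglyMeasurable (fun z : V3 × V3 => psi φ Y z * (1 + 1 / ‖z.1‖ ^ 2))
      ((volume : Measure V3).prod volume) := by
    have := q.psi_meas
    apply Measurable.aestronglyMeasurable
    fun_prop
  show Integrable _ ((volume : Measure V3).prod volume)
  rw [integrable_prod_iff hm]
  refine ⟨Eventually.of_forall fun x => (q.psi_v_int x).mul_const (1 + 1 / ‖x‖ ^ 2), ?_⟩
  refine ((norm_rad_int R).const_mul (4 * Real.pi * (27 * φ 1))).mono'
    hm.norm.integral_prod_right' ?_
  refine Eventually.of_forall fun x => ?_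
  have e : (fun v => ‖psi φ Y (x, v) * (1 + 1 / ‖x‖ ^ 2)‖) =
      fun v => psi φ Y (x, v) * (1 + 1 / ‖x‖ ^ 2) := by
    funext v
    rw [Real.norm_of_nonneg (mul_nonneg (q.psi_nonneg _) (by positivity))]
  simp only [e]
  rw [integral_mul_const, Real.norm_of_nonneg (mul_nonneg
    (integral_nonneg fun v => q.psi_nonneg _) (by positivity))]
  by_cases h : 0 < Y ‖x‖
  · rw [indicator_of_mem (show ‖x‖ ∈ Iio R from hr _ (norm_nonneg _) h)]
    gcongr
    exact q.psi_v_le x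
  · have : (fun v => psi φ Y (x, v)) = fun _ => 0 := by
      funext v; apply q.psi_zero
      by_contra h'
      exact absurd (Y_pos (not_le.1 h')) h
    rw [this, integral_zero, zero_mul]
    have := q.hp.nonneg 1
    exact mul_nonneg (by positivity) (indicator_nonneg (fun r _ => by positivity) _)

omit q in
lemma null_x : ∀ᵐ z : V3 × V3, z.1 ≠ 0 := by
  have h1 : ∀ᵐ x : V3, x ≠ 0 := by
    rw [ae_iff]; simp
  exact (Measure.quasiMeasurePreserving_fst
    (μ := (volume : Measure V3)) (ν := (volume : Measure V3))).ae h1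

/-- Phase-space integrability: `|φ'|` is an integrable weight even against a singularity
`r⁻²`. -/
lemma integ {F : V3 × V3 → ℝ} (hF : AEMeasurable F (volume.restrict (Dp Y))) {C : ℝ}
    (hC : ∀ z ∈ Dp Y, |F z| ≤ C * (1 + 1 / ‖z.1‖ ^ 2)) :
    Integrable (fun z => psi φ Y z * F z) := by
  have e : (fun z => psi φ Y z * F z) =ᵐ[volume]
      (Dp Y).indicator (fun z => psi φ Y z * F z) := by
    filter_upwards [null_x] with z hz
    by_cases h : z ∈ Dp Y
    · rw [indicator_of_mem h]
    · rw [indicator_of_notMem h, q.psi_zero, zero_mul]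
      by_contra h'
      exact h ⟨hz, not_le.1 h'⟩
  have hm : AEStronglyMeasurable (fun z => psi φ Y z * F z) volume := by
    refine AEStronglyMeasurable.congr ?_ e.symm
    rw [aestronglyMeasurable_indicator_iff q.Dp_open.measurableSet]
    exact (q.psi_meas.aemeasurable.mul hF).aestronglyMeasurable
  refine (q.maj_int.const_mul C).mono' hm ?_
  filter_upwards [null_x] with z hz
  by_cases h : Sf Y z < 1
  · rw [norm_mul, Real.norm_of_nonneg (q.psi_nonneg z), Real.norm_eq_abs]
    have := mul_le_mul_of_nonneg_left (hC z ⟨hz, h⟩) (q.psi_nonneg z)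
    linarith
  · rw [q.psi_zero (not_lt.1 h)]; simp

end Qual

/-! ### Generating functions -/

/-- The properties of a generating function used below: it is `C¹` on `{f > 0}` with bounded
derivative, and its oddness and spherical symmetry force it to vanish linearly in `w`. -/
structure Gen (Y : ℝ → ℝ) (h : V3 × V3 → ℝ) (C : ℝ) : Prop where
  C0 : 0 ≤ C
  c1 : ContDiffOn ℝ 1 h (Dp Y)
  bw : ∀ z ∈ Dp Y, |h z| ≤ C * |wfun z|
  bd : ∀ z ∈ Dp Y, ‖fderiv ℝ h z‖ ≤ C

/-- A `C¹` function on the closure of a bounded open set has bounded derivative inside. No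
regularity of the boundary is needed: near a boundary point, any local extension of the derivative
agrees with the derivative in the interior. -/
lemma bdd_fderiv {E : Type*} [NormedAddCommGroup E] [NormedSpace ℝ E] {h : E → ℝ} {U : Set E}
    (hU : IsOpen U) (hc : IsCompact (closure U)) (hh : ContDiffOn ℝ 1 h (closure U)) :
    ∃ C, 0 ≤ C ∧ ∀ z ∈ U, ‖fderiv ℝ h z‖ ≤ C := by
  have key : ∃ C, ∀ z ∈ closure U, z ∈ U → ‖fderiv ℝ h z‖ ≤ C := by
    refine hc.induction_on (p := fun t => ∃ C, ∀ z ∈ t, z ∈ U → ‖fderiv ℝ h z‖ ≤ C)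
      ⟨0, by simp⟩ ?_ ?_ ?_
    · rintro s t hst ⟨C, hC⟩
      exact ⟨C, fun z hz => hC z (hst hz)⟩
    · rintro s t ⟨C, hC⟩ ⟨C', hC'⟩
      refine ⟨max C C', fun z hz hz' => ?_⟩
      rcases hz with hz | hz
      · exact (hC z hz hz').trans (le_max_left _ _)
      · exact (hC' z hz hz').trans (le_max_right _ _)
    · intro x hx
      have h1 := hh x hx
      rw [show (1 : WithTop ℕ∞) = 0 + 1 by norm_num,
        contDiffWithinAt_succ_iff_hasFDerivWithinAt (by simp)] at h1
      obtain ⟨u, hu, -, f', hf', hf'c⟩ := h1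
      rw [insert_eq_of_mem hx] at hu
      have hxu : x ∈ u := mem_of_mem_nhdsWithin hx hu
      have h2 : ∀ᶠ y in 𝓝[u] x, ‖f' y‖ < ‖f' x‖ + 1 :=
        hf'c.continuousWithinAt.norm.eventually_lt_const (by linarith)
      have h3 : ∀ᶠ y in 𝓝[closure U] x, ‖f' y‖ < ‖f' x‖ + 1 :=
        nhdsWithin_le_of_mem hu h2
      obtain ⟨V, hV, hxV, hVu⟩ := mem_nhdsWithin.1 (Filter.inter_mem hu h3)
      refine ⟨V ∩ closure U, mem_nhdsWithin.2 ⟨V, hV, hxV, Subset.rfl⟩, ‖f' x‖ + 1, ?_⟩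
      intro z hz hzU
      have hz' := hVu hz
      have hnb : u ∈ 𝓝 z := by
        filter_upwards [hV.mem_nhds hz.1, hU.mem_nhds hzU] with y h1 h2
        exact (hVu ⟨h1, subset_closure h2⟩).1
      rw [((hf' z hz'.1).hasFDerivAt hnb).fderiv]
      exact le_of_lt hz'.2
  obtain ⟨C, hC⟩ := key
  exact ⟨max C 0, le_max_right _ _, fun z hz =>
    (hC z (subset_closure hz) hz).trans (le_max_left _ _)⟩

/-- The half-turn about the axis `ℝx` is a rotation. -/
lemma halfturn_rot {x : V3} (hx : x ≠ 0) : IsRot (Submodule.reflection (ℝ ∙ x)) := by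
  unfold IsRot
  rw [Submodule.det_reflection]
  have h1 : Module.finrank ℝ (ℝ ∙ x) = 1 := finrank_span_singleton hx
  have h2 := Submodule.finrank_add_finrank_orthogonal (ℝ ∙ x)
  rw [h1, finrank_euclideanSpace_fin] at h2
  have h3 : Module.finrank ℝ (ℝ ∙ x)ᗮ = 2 := by omega
  rw [h3]; norm_num

lemma halfturn_apply {x : V3} (v : V3) :
    Submodule.reflection (ℝ ∙ x) v = (2 * ⟪x, v⟫ / ‖x‖ ^ 2) • x - v := by
  rw [Submodule.reflection_singleton_apply]
  simp only [RCLike.ofReal_real_eq_id, id_eq, two_smul, ← add_smul]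
  congr 2; ring

/-- Oddness and the half-turn about `x` make `h` odd under reflection in the plane `xᗮ`. -/
lemma odd_refl {h : V3 × V3 → ℝ} (hsym : SphSym h) (hodd : ∀ x v : V3, h (x, -v) = -h (x, v))
    {x : V3} (hx : x ≠ 0) (v : V3) :
    h (x, v - (2 * ⟪x, v⟫ / ‖x‖ ^ 2) • x) = -h (x, v) := by
  have h1 := hsym _ (halfturn_rot hx) x v
  rw [halfturn_apply, halfturn_apply, real_inner_self_eq_norm_sq] at h1
  have hx' : ‖x‖ ≠ 0 := norm_ne_zero_iff.2 hx
  rw [mul_div_assoc, div_self (by positivity), mul_one, two_smul, add_sub_cancel_right] at h1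
  rw [← h1, ← hodd]; congr 2; abel

/-- The half-turn about the axis `x` composed with `v ↦ -v` is the reflection in `xᗮ`. Hence `h` is
odd in the component of `v` along `x`, and the bound on its derivative gives `|h| ≤ C|w|`. -/
lemma gen_exists {φ Y : ℝ → ℝ} (q : Qual φ Y) {h : V3 × V3 → ℝ}
    (hh : ContDiffOn ℝ 1 h (closure {z | Sf Y z < 1})) (hsym : SphSym h)
    (hodd : ∀ x v : V3, h (x, -v) = -h (x, v)) : ∃ C, Gen Y h C := by
  have hU : IsOpen {z | Sf Y z < 1} := isOpen_lt q.Sf_cont continuous_const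
  have hb : Bornology.IsBounded {z | Sf Y z < 1} := by
    obtain ⟨R, hR, hr⟩ := q.radius
    rw [isBounded_iff_forall_norm_le]
    refine ⟨max R 3, fun z hz => ?_⟩
    rw [Prod.norm_def]
    exact max_le_max (hr _ (norm_nonneg _) (Qual.Y_pos hz)).le (q.norm_lt3 hz).le
  have hc : IsCompact (closure {z | Sf Y z < 1}) := hb.isCompact_closure
  obtain ⟨C, hC0, hC⟩ := bdd_fderiv hU hc hh
  have hsub : Dp Y ⊆ {z | Sf Y z < 1} := fun z hz => hz.2
  have hd : ∀ z, Sf Y z < 1 → DifferentiableAt ℝ h z := fun z hz =>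
    (hh.contDiffAt (mem_of_superset (hU.mem_nhds hz) subset_closure)).differentiableAt (by norm_num)
  refine ⟨C, hC0, hh.mono (hsub.trans subset_closure), ?_, fun z hz => hC z (hsub hz)⟩
  rintro ⟨x, v⟩ hz
  have hx : x ≠ 0 := hz.1
  have hx' : 0 < ‖x‖ := norm_pos_iff.2 hx
  have hS : ∀ u : V3, ‖u‖ ≤ ‖v‖ → Sf Y (x, u) < 1 := by
    intro u hu
    refine lt_of_le_of_lt ?_ hz.2
    simp only [Sf, jap]
    gcongr
  have hder : ∀ u ∈ Metric.closedBall (0:V3) ‖v‖, HasFDerivWithinAt (fun u => h (x, u))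
      ((fderiv ℝ h (x, u)).comp (ContinuousLinearMap.inr ℝ V3 V3))
      (Metric.closedBall (0:V3) ‖v‖) u := by
    intro u hu
    rw [mem_closedBall_zero_iff] at hu
    exact ((hd _ (hS u hu)).hasFDerivAt.comp u (hasFDerivAt_prodMk_right x u)).hasFDerivWithinAt
  have hbd : ∀ u ∈ Metric.closedBall (0:V3) ‖v‖,
      ‖(fderiv ℝ h (x, u)).comp (ContinuousLinearMap.inr ℝ V3 V3)‖ ≤ C := by
    intro u hu
    rw [mem_closedBall_zero_iff] at hu
    refine (ContinuousLinearMap.opNorm_comp_le _ _).trans ?_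
    have h1 := hC _ (hS u hu)
    have h2 := ContinuousLinearMap.norm_inr_le_one ℝ V3 V3
    nlinarith [norm_nonneg (fderiv ℝ h (x, u))]
  set v' := v - (2 * ⟪x, v⟫ / ‖x‖ ^ 2) • x with hv'
  have hnv : ‖v'‖ = ‖v‖ := by
    have h1 : v' = -(Submodule.reflection (ℝ ∙ x) v) := by rw [halfturn_apply, neg_sub]
    rw [h1, norm_neg, LinearIsometryEquiv.norm_map]
  have hmv := (convex_closedBall (0:V3) ‖v‖).norm_image_sub_le_of_norm_hasFDerivWithin_le hder hbd
    (mem_closedBall_zero_iff.2 hnv.le) (mem_closedBall_zero_iff.2 le_rfl)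
  rw [odd_refl hsym hodd hx v, hv', sub_sub_cancel, norm_smul, Real.norm_eq_abs, Real.norm_eq_abs,
    sub_neg_eq_add, ← two_mul, abs_mul, abs_two] at hmv
  have e : |2 * ⟪x, v⟫ / ‖x‖ ^ 2| * ‖x‖ = 2 * |wfun (x, v)| := by
    simp only [wfun, abs_div, abs_mul, abs_two, abs_pow, abs_norm]
    field_simp
  rw [e] at hmv
  linarith

/-- For every `x ≠ 0` some rotation maps `|x|e₁` to `x`. -/
lemma exists_rot {x : V3} : ∃ A : V3 ≃ₗᵢ[ℝ] V3, IsRot A ∧ A (‖x‖ • e1) = x := by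
  have hn : ‖‖x‖ • e1‖ = ‖x‖ := by
    rw [norm_smul, norm_norm, e1, PiLp.norm_single]; simp
  by_cases h0 : ‖x‖ • e1 + x = 0
  · let e2 : V3 := EuclideanSpace.single (1 : Fin 3) (1 : ℝ)
    have h2 : e2 ≠ 0 := by
      intro h
      have := congrArg norm h
      rw [PiLp.norm_single] at this
      simp at this
    refine ⟨_, halfturn_rot h2, ?_⟩
    rw [halfturn_apply]
    have : ⟪e2, ‖x‖ • e1⟫ = 0 := by
      rw [inner_smul_right]
      simp only [e2, e1, EuclideanSpace.inner_single_left]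
      simp
    rw [this, eq_neg_of_add_eq_zero_left h0, mul_zero, zero_div, zero_smul, zero_sub, neg_neg]
  · refine ⟨_, halfturn_rot h0, ?_⟩
    rw [halfturn_apply]
    have e1' : ⟪‖x‖ • e1 + x, ‖x‖ • e1⟫ = ‖x‖ ^ 2 + ⟪x, ‖x‖ • e1⟫ := by
      rw [inner_add_left, real_inner_self_eq_norm_sq, hn]
    have e2' : ‖‖x‖ • e1 + x‖ ^ 2 = 2 * (‖x‖ ^ 2 + ⟪x, ‖x‖ • e1⟫) := by
      rw [norm_add_sq_real, hn, real_inner_comm]; ring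
    rw [e1', ← e2', div_self, one_smul, add_sub_cancel_left]
    have := norm_pos_iff.2 h0
    positivity

/-! ### The Hamiltonian flow of the energy -/

/-- `α = s/⟨v⟩`, the `x`-velocity factor of the Hamiltonian flow of the energy, `s = e^{-y}`. -/
def al (Y : ℝ → ℝ) (z : V3 × V3) : ℝ := Real.exp (-Y ‖z.1‖) / jap z.2

/-- `β = sμ'⟨v⟩/r`, the force factor of the Hamiltonian flow of the energy. -/
def be (Y : ℝ → ℝ) (z : V3 × V3) : ℝ :=
  Real.exp (-Y ‖z.1‖) * (-deriv Y ‖z.1‖) * jap z.2 / ‖z.1‖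

/-- The Hamiltonian vector field of the normalised energy. -/
def X (Y : ℝ → ℝ) (z : V3 × V3) : V3 × V3 := (al Y z • z.2, -(be Y z • z.1))

/-- `x·v = rw`. -/
def ip (z : V3 × V3) : ℝ := ⟪z.1, z.2⟫

/-- `G = {rw, S}` for the normalised energy `S`. -/
def Gf (Y : ℝ → ℝ) (z : V3 × V3) : ℝ :=
  Sf Y z - Real.exp (-Y ‖z.1‖) ^ 2 / Sf Y z + ‖z.1‖ * deriv Y ‖z.1‖ * Sf Y z

/-- The potential produced by the integration by parts: `{G, S} = -rw Q`. -/
def Qf (Y : ℝ → ℝ) (z : V3 × V3) : ℝ :=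
  Real.exp (-Y ‖z.1‖) ^ 2 * (-(deriv (deriv Y) ‖z.1‖) - deriv Y ‖z.1‖ / ‖z.1‖
    - 2 * deriv Y ‖z.1‖ / ‖z.1‖ / jap z.2 ^ 2)

/-- `f` is differentiable at `z` with derivative `t` along the Hamiltonian vector field. -/
def TD (Y : ℝ → ℝ) (f : V3 × V3 → ℝ) (z : V3 × V3) (t : ℝ) : Prop :=
  ∃ L : V3 × V3 →L[ℝ] ℝ, HasFDerivAt f L z ∧ L (X Y z) = t

section TD
variable {Y : ℝ → ℝ} {f g : V3 × V3 → ℝ} {z : V3 × V3} {a b : ℝ}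

lemma TD.fderiv (h : TD Y f z a) : fderiv ℝ f z (X Y z) = a := by
  obtain ⟨L, h1, h2⟩ := h
  rw [h1.fderiv, h2]

lemma TD.of_diff (h : DifferentiableAt ℝ f z) : TD Y f z (_root_.fderiv ℝ f z (X Y z)) :=
  ⟨_, h.hasFDerivAt, rfl⟩

lemma TD.mul (hf : TD Y f z a) (hg : TD Y g z b) :
    TD Y (fun z => f z * g z) z (a * g z + f z * b) := by
  obtain ⟨L, h1, h2⟩ := hf
  obtain ⟨L', h1', h2'⟩ := hg
  refine ⟨_, h1.mul h1', ?_⟩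
  simp [h2, h2']; ring

lemma TD.add (hf : TD Y f z a) (hg : TD Y g z b) : TD Y (fun z => f z + g z) z (a + b) := by
  obtain ⟨L, h1, h2⟩ := hf
  obtain ⟨L', h1', h2'⟩ := hg
  exact ⟨_, h1.add h1', by simp [h2, h2']⟩

lemma TD.comp {u : ℝ → ℝ} {u' : ℝ} (hu : HasDerivAt u u' (f z)) (hf : TD Y f z a) :
    TD Y (fun z => u (f z)) z (u' * a) := by
  obtain ⟨L, h1, h2⟩ := hf
  exact ⟨_, hu.comp_hasFDerivAt z h1, by simp [h2]⟩

lemma TD.val (h : TD Y f z a) (e : a = b) : TD Y f z b := e ▸ h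

lemma norm_deriv {x : V3} (hx : x ≠ 0) :
    HasFDerivAt (fun x : V3 => ‖x‖) (‖x‖⁻¹ • innerSL ℝ x) x := by
  have h1 := (hasStrictFDerivAt_norm_sq x).hasFDerivAt.sqrt (by
    have := norm_pos_iff.2 hx; positivity)
  simp only [Real.sqrt_sq (norm_nonneg _)] at h1
  refine h1.congr_fderiv ?_
  ext v
  simp; ring

lemma jap_deriv (v : V3) : HasFDerivAt jap ((jap v)⁻¹ • innerSL ℝ v) v := by
  have h1 := ((hasStrictFDerivAt_norm_sq v).hasFDerivAt.const_add 1).sqrt (by positivity)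
  refine h1.congr_fderiv ?_
  ext w
  simp [jap]; ring

lemma td_r (hx : z.1 ≠ 0) : TD Y (fun z => ‖z.1‖) z (al Y z * ip z / ‖z.1‖) := by
  refine ⟨_, (norm_deriv hx).comp z hasFDerivAt_fst, ?_⟩
  simp [X, ip]; ring

lemma td_jap : TD Y (fun z => jap z.2) z (-(be Y z * ip z / jap z.2)) := by
  refine ⟨_, (jap_deriv z.2).comp z hasFDerivAt_snd, ?_⟩
  simp [X, ip, inner_smul_right, real_inner_comm]; ring

lemma td_s (hx : z.1 ≠ 0) (hY : DifferentiableAt ℝ Y ‖z.1‖) :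
    TD Y (fun z => Real.exp (-Y ‖z.1‖)) z
      (Real.exp (-Y ‖z.1‖) * -deriv Y ‖z.1‖ * (al Y z * ip z / ‖z.1‖)) :=
  TD.comp (u := fun r => Real.exp (-Y r)) hY.hasDerivAt.neg.exp (td_r hx)

/-- The energy is conserved along its own flow. -/
lemma td_S (hx : z.1 ≠ 0) (hY : DifferentiableAt ℝ Y ‖z.1‖) : TD Y (Sf Y) z 0 := by
  refine ((td_s hx hY).mul td_jap).val ?_
  have h1 := (jap_pos z.2).ne'
  have h2 := norm_ne_zero_iff.2 hx
  simp only [al, be]; field_simp; ring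

lemma Gf_eq (hx : z.1 ≠ 0) : Gf Y z = al Y z * ‖z.2‖ ^ 2 - be Y z * ‖z.1‖ ^ 2 := by
  have h1 := (jap_pos z.2).ne'
  have h2 := norm_ne_zero_iff.2 hx
  have h3 := jap_sq z.2
  have h4 := Real.exp_pos (-Y ‖z.1‖)
  simp only [al, be, Gf, Sf]; field_simp
  rw [h3]; ring

lemma td_ip (hx : z.1 ≠ 0) : TD Y ip z (Gf Y z) := by
  refine ⟨_, hasFDerivAt_fst.inner ℝ hasFDerivAt_snd, ?_⟩
  rw [Gf_eq hx]
  simp [X, inner_smul_right, inner_smul_left, fderivInnerCLM_apply]; ring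

/-- `{G, S} = -rw Q`: the second derivative of `rw` along the flow. -/
lemma td_G (hx : z.1 ≠ 0) (hY : DifferentiableAt ℝ Y ‖z.1‖)
    (hY' : DifferentiableAt ℝ (deriv Y) ‖z.1‖) : TD Y (Gf Y) z (-(ip z * Qf Y z)) := by
  have h1 := (jap_pos z.2)
  have h2 := norm_ne_zero_iff.2 hx
  have h4 := Real.exp_pos (-Y ‖z.1‖)
  have hS : Sf Y z ≠ 0 := (mul_pos h4 h1).ne'
  have hi : TD Y (fun z => (Sf Y z)⁻¹) z 0 :=
    ((td_S hx hY).comp (hasDerivAt_inv hS)).val (by simp)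
  have hs2 := (td_s hx hY).comp (hasDerivAt_pow 2 _)
  have hr : TD Y (fun z => ‖z.1‖ * deriv Y ‖z.1‖) z
      ((al Y z * ip z / ‖z.1‖) * deriv Y ‖z.1‖ +
        ‖z.1‖ * (deriv (deriv Y) ‖z.1‖ * (al Y z * ip z / ‖z.1‖))) :=
    (td_r hx).mul (TD.comp (u := deriv Y) hY'.hasDerivAt (td_r hx))
  have hh := ((td_S hx hY).add ((hs2.mul hi).comp (u := fun t => -t) (u' := -1)
    (hasDerivAt_neg _))).add (hr.mul (td_S hx hY))
  have e : Gf Y = fun z => Sf Y z + -(Real.exp (-Y ‖z.1‖) ^ 2 * (Sf Y z)⁻¹) +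
      ‖z.1‖ * deriv Y ‖z.1‖ * Sf Y z := by
    funext z; simp only [Gf]; ring
  rw [e]
  refine hh.val ?_
  simp only [al, Qf, Sf]
  field_simp
  ring

/-- The Poisson bracket with the energy is the derivative along the Hamiltonian vector field. -/
lemma pb_eq (c : ℝ) (hx : z.1 ≠ 0) (hY : DifferentiableAt ℝ Y ‖z.1‖)
    (hf : DifferentiableAt ℝ f z) :
    pbracket f (fun z => c * Sf Y z) z = c * fderiv ℝ f z (X Y z) := by
  have hj := jap_pos z.2
  have hr := norm_ne_zero_iff.2 hx
  have g1 : HasGradientAt (fun v => c * Sf Y (z.1, v)) ((c * al Y z) • z.2) z.2 := by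
    rw [hasGradientAt_iff_hasFDerivAt]
    refine ((jap_deriv z.2).const_mul (c * Real.exp (-Y ‖z.1‖))).congr_fderiv ?_
      |>.congr_of_eventuallyEq ?_
    · ext w
      simp [al]; ring
    · exact Eventually.of_forall fun v => by simp [Sf]; ring
  have g2 : HasGradientAt (fun x => c * Sf Y (x, z.2)) ((c * be Y z) • z.1) z.1 := by
    rw [hasGradientAt_iff_hasFDerivAt]
    have h1 : HasDerivAt (fun r => Real.exp (-Y r)) (Real.exp (-Y ‖z.1‖) * -deriv Y ‖z.1‖) ‖z.1‖ :=
      hY.hasDerivAt.neg.exp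
    refine ((h1.comp_hasFDerivAt z.1 (norm_deriv hx)).const_mul (c * jap z.2)).congr_fderiv ?_
      |>.congr_of_eventuallyEq ?_
    · ext w
      simp [be]; ring
    · exact Eventually.of_forall fun v => by simp [Sf]; ring
  have i1 : ∀ a : V3, ⟪gradient (fun x => f (x, z.2)) z.1, a⟫ = fderiv ℝ f z (a, 0) := by
    intro a
    have h1 : HasFDerivAt (fun x => f (x, z.2))
        ((fderiv ℝ f z).comp (ContinuousLinearMap.inl ℝ V3 V3)) z.1 :=
      hf.hasFDerivAt.comp z.1 (hasFDerivAt_prodMk_left z.1 z.2)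
    rw [gradient, h1.fderiv]
    simp
  have i2 : ∀ a : V3, ⟪gradient (fun v => f (z.1, v)) z.2, a⟫ = fderiv ℝ f z (0, a) := by
    intro a
    have h1 : HasFDerivAt (fun v => f (z.1, v))
        ((fderiv ℝ f z).comp (ContinuousLinearMap.inr ℝ V3 V3)) z.2 :=
      hf.hasFDerivAt.comp z.2 (hasFDerivAt_prodMk_right z.1 z.2)
    rw [gradient, h1.fderiv]
    simp
  rw [pbracket, g1.gradient, g2.gradient, i1, i2, ← map_sub]
  rw [show c * fderiv ℝ f z (X Y z) = fderiv ℝ f z (c • X Y z) by rw [map_smul, smul_eq_mul]]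
  congr 1
  ext1
  · simp [X, mul_smul]
  · simp [X, mul_smul]

lemma pb_antisymm (f g : V3 × V3 → ℝ) (z : V3 × V3) : pbracket f g z = -pbracket g f z := by
  simp only [pbracket, real_inner_comm]; ring

lemma ip_eq (z : V3 × V3) : ‖z.1‖ * wfun z = ip z := by
  by_cases hx : z.1 = 0
  · simp [ip, hx]
  · have hr := norm_ne_zero_iff.2 hx
    simp only [ip, wfun]; field_simp

/-- `(rw)²{S, h/(rw)}² ≤ ({h,S} − hG/(rw))²`, with equality where `rw ≠ 0`. -/
lemma pb_quot (c : ℝ) (hx : z.1 ≠ 0) (hY : DifferentiableAt ℝ Y ‖z.1‖)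
    (hf : DifferentiableAt ℝ f z) :
    (‖z.1‖ * wfun z) ^ 2 *
      (pbracket (fun z => c * Sf Y z) (fun z' => f z' / (‖z'.1‖ * wfun z')) z) ^ 2 ≤
    c ^ 2 * (fderiv ℝ f z (X Y z) - f z / ip z * Gf Y z) ^ 2 := by
  simp only [ip_eq]
  by_cases hp : ip z = 0
  · rw [hp]; simp; positivity
  · have ht := (TD.of_diff (Y := Y) hf).mul ((td_ip hx).comp (hasDerivAt_inv hp))
    have hd : DifferentiableAt ℝ (fun z' => f z' / ip z') z := by
      obtain ⟨L, hL, _⟩ := ht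
      exact hL.differentiableAt
    rw [pb_antisymm, pb_eq c hx hY hd]
    have e : (fun z' => f z' / ip z') = fun z' => f z' * (ip z')⁻¹ := by
      funext z'; rw [div_eq_mul_inv]
    rw [e, ht.fderiv]
    apply le_of_eq
    field_simp
    ring

end TD

/-! ### Vanishing of phase-space divergence integrals -/

/-- Differentiability on the topological support suffices, since a function vanishes near every
other point. -/
lemma cd_of_tsupport {F : V3 × V3 → ℝ} (h : ∀ z ∈ tsupport F, ContDiffAt ℝ 1 F z) :
    ContDiff ℝ 1 F := by
  rw [contDiff_iff_contDiffAt]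
  intro z
  by_cases hz : z ∈ tsupport F
  · exact h z hz
  · exact contDiffAt_const.congr_of_eventuallyEq (notMem_tsupport_iff_eventuallyEq.1 hz)

section divergence
variable {K : V3 × V3 → ℝ} (hK : ContDiff ℝ 1 K) (hc : HasCompactSupport K)
include hK hc

/-- A directional derivative against a function constant in that direction integrates to zero. -/
lemma int_dir (g : V3 × V3 →L[ℝ] ℝ) (e : V3 × V3) (hg : g e = 0) :
    Integrable (fun z => fderiv ℝ K z e * g z) ∧ ∫ z, fderiv ℝ K z e * g z = 0 := by
  have : (volume : Measure (V3 × V3)).IsAddHaarMeasure := by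
    show ((volume : Measure V3).prod volume).IsAddHaarMeasure; infer_instance
  have hdc : Continuous fun z => fderiv ℝ K z e :=
    (hK.continuous_fderiv (by norm_num)).clm_apply continuous_const
  have hds : HasCompactSupport fun z => fderiv ℝ K z e := hc.fderiv_apply (𝕜 := ℝ) e
  have i1 : Integrable (fun z => fderiv ℝ K z e * g z) :=
    (hdc.mul g.continuous).integrable_of_hasCompactSupport hds.mul_right
  refine ⟨i1, ?_⟩
  have h := integral_mul_fderiv_eq_neg_fderiv_mul_of_integrable (μ := (volume : Measure (V3 × V3)))
    (f := K) (g := g) (v := e) i1 (by simp [hg])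
    ((hK.continuous.mul g.continuous).integrable_of_hasCompactSupport hc.mul_right)
    (fun z _ => (hK.differentiable (by norm_num)) z) (fun z _ => g.differentiableAt)
  simp [hg] at h
  exact h

omit hK hc in
lemma sum_coord (v : V3) : v = ∑ i, v i • EuclideanSpace.single i (1:ℝ) := by
  ext j
  simp [Pi.single_apply]

/-- The `x`-divergence part of the flow integrates to zero: integrate by parts in each coordinate. -/
lemma int_x : Integrable (fun z : V3 × V3 => fderiv ℝ K z (z.2, 0)) ∧
    ∫ z : V3 × V3, fderiv ℝ K z (z.2, 0) = 0 := by
  have e : (fun z : V3 × V3 => fderiv ℝ K z (z.2, 0)) = fun z => ∑ i,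
      fderiv ℝ K z (EuclideanSpace.single i (1:ℝ), 0) *
        (((EuclideanSpace.proj i).comp (ContinuousLinearMap.snd ℝ V3 V3)) : V3 × V3 →L[ℝ] ℝ) z := by
    funext z
    have : ((z.2, 0) : V3 × V3) = ∑ i, z.2 i • ((EuclideanSpace.single i (1:ℝ), 0) : V3 × V3) := by
      ext1
      · simp only [Prod.fst_sum, Prod.smul_fst]; exact sum_coord z.2
      · simp [Prod.snd_sum]
    rw [this, map_sum]
    refine Finset.sum_congr rfl fun i _ => ?_
    rw [map_smul, smul_eq_mul, mul_comm]
    rfl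
  have h := fun i => int_dir hK hc
    ((EuclideanSpace.proj i).comp (ContinuousLinearMap.snd ℝ V3 V3))
    (EuclideanSpace.single i (1:ℝ), 0) (by simp)
  rw [e]
  refine ⟨integrable_finsetSum _ fun i _ => (h i).1, ?_⟩
  rw [integral_finsetSum _ fun i _ => (h i).1]
  exact Finset.sum_eq_zero fun i _ => (h i).2

lemma int_v : Integrable (fun z : V3 × V3 => fderiv ℝ K z (0, z.1)) ∧
    ∫ z : V3 × V3, fderiv ℝ K z (0, z.1) = 0 := by
  have e : (fun z : V3 × V3 => fderiv ℝ K z (0, z.1)) = fun z => ∑ i,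
      fderiv ℝ K z (0, EuclideanSpace.single i (1:ℝ)) *
        (((EuclideanSpace.proj i).comp (ContinuousLinearMap.fst ℝ V3 V3)) : V3 × V3 →L[ℝ] ℝ) z := by
    funext z
    have : ((0, z.1) : V3 × V3) = ∑ i, z.1 i • ((0, EuclideanSpace.single i (1:ℝ)) : V3 × V3) := by
      ext1
      · simp [Prod.fst_sum]
      · simp only [Prod.snd_sum, Prod.smul_snd]; exact sum_coord z.1
    rw [this, map_sum]
    refine Finset.sum_congr rfl fun i _ => ?_
    rw [map_smul, smul_eq_mul, mul_comm]
    rfl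
  have h := fun i => int_dir hK hc
    ((EuclideanSpace.proj i).comp (ContinuousLinearMap.fst ℝ V3 V3))
    (0, EuclideanSpace.single i (1:ℝ)) (by simp)
  rw [e]
  refine ⟨integrable_finsetSum _ fun i _ => (h i).1, ?_⟩
  rw [integral_finsetSum _ fun i _ => (h i).1]
  exact Finset.sum_eq_zero fun i _ => (h i).2

end divergence

namespace Qual
variable {φ Y : ℝ → ℝ} (q : Qual φ Y)
include q

lemma Yc2 {r : ℝ} (hr : 0 < r) : ContDiffAt ℝ 2 Y r := q.c2.contDiffAt (Ici_mem_nhds hr)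

lemma Yd {r : ℝ} (hr : 0 < r) : DifferentiableAt ℝ Y r := (q.Yc2 hr).differentiableAt (by norm_num)

lemma Y'c1 {r : ℝ} (hr : 0 < r) : ContDiffAt ℝ 1 (deriv Y) r :=
  ((q.c2.mono Ioi_subset_Ici_self).deriv_of_isOpen isOpen_Ioi (m := 1) (by norm_num)).contDiffAt
    (Ioi_mem_nhds hr)

lemma Y'd {r : ℝ} (hr : 0 < r) : DifferentiableAt ℝ (deriv Y) r :=
  (q.Y'c1 hr).differentiableAt (by norm_num)

/-- Bounds on `y'` and `y''` over the support; these extend continuously to `r = 0`. -/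
lemma Y_bdd : ∃ R B, 0 < R ∧ 0 ≤ B ∧ (∀ r, 0 ≤ r → 0 < Y r → r < R) ∧
    ∀ r, 0 < r → 0 < Y r → |deriv Y r| ≤ B ∧ |deriv (deriv Y) r| ≤ B := by
  obtain ⟨R, hR, hr⟩ := q.radius
  have hcl : closure (Ioo 0 R) = Icc 0 R := closure_Ioo hR.ne
  have h1 : ContDiffOn ℝ 1 Y (closure (Ioo 0 R)) := by
    rw [hcl]; exact (q.c2.mono Icc_subset_Ici_self).of_le (by norm_num)
  have h2 : ContDiffOn ℝ 1 (derivWithin Y (Ici 0)) (closure (Ioo 0 R)) := by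
    rw [hcl]
    exact (q.c2.derivWithin (uniqueDiffOn_Ici 0) (by norm_num)).mono Icc_subset_Ici_self
  obtain ⟨C1, hC1, H1⟩ := bdd_fderiv isOpen_Ioo (by rw [hcl]; exact isCompact_Icc) h1
  obtain ⟨C2, hC2, H2⟩ := bdd_fderiv isOpen_Ioo (by rw [hcl]; exact isCompact_Icc) h2
  refine ⟨R, max C1 C2, hR, le_max_of_le_left hC1, hr, fun r h0 hY => ?_⟩
  have hm : r ∈ Ioo 0 R := ⟨h0, hr r h0.le hY⟩
  constructor
  · have := H1 r hm
    rw [← norm_deriv_eq_norm_fderiv] at this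
    exact this.trans (le_max_left _ _)
  · have := H2 r hm
    rw [← norm_deriv_eq_norm_fderiv] at this
    have e : derivWithin Y (Ici 0) =ᶠ[𝓝 r] deriv Y := by
      filter_upwards [Ioi_mem_nhds h0] with t ht
      exact derivWithin_of_mem_nhds (Ici_mem_nhds ht)
    rw [e.deriv_eq] at this
    exact this.trans (le_max_right _ _)

section c1
variable {z : V3 × V3} (hx : z.1 ≠ 0)
include hx

omit q in
lemma cd_r : ContDiffAt ℝ 2 (fun z : V3 × V3 => ‖z.1‖) z :=
  contDiffAt_fst.norm ℝ hx

lemma cd_s : ContDiffAt ℝ 2 (fun z : V3 × V3 => Real.exp (-Y ‖z.1‖)) z :=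
  (((q.Yc2 (norm_pos_iff.2 hx)).comp z (cd_r hx)).neg).exp

omit q hx in
lemma cd_jap : ContDiffAt ℝ 2 (fun z : V3 × V3 => jap z.2) z :=
  jap_contDiff.contDiffAt.comp z contDiffAt_snd

lemma cd_S : ContDiffAt ℝ 2 (Sf Y) z := (q.cd_s hx).mul (cd_jap)

lemma cd_Y' : ContDiffAt ℝ 1 (fun z : V3 × V3 => deriv Y ‖z.1‖) z :=
  (q.Y'c1 (norm_pos_iff.2 hx)).comp z ((cd_r hx).of_le (by norm_num))

lemma cd_al : ContDiffAt ℝ 1 (al Y) z :=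
  ((q.cd_s hx).div (cd_jap) (jap_pos _).ne').of_le (by norm_num)

lemma cd_be : ContDiffAt ℝ 1 (be Y) z :=
  (((((q.cd_s hx).of_le (by norm_num)).mul (q.cd_Y' hx).neg).mul
    ((cd_jap).of_le (by norm_num))).div ((cd_r hx).of_le (by norm_num))
    (norm_ne_zero_iff.2 hx))

lemma cd_G : ContDiffAt ℝ 1 (Gf Y) z := by
  have h1 := (q.cd_s hx).of_le (show (1 : WithTop ℕ∞) ≤ 2 by norm_num)
  have h2 := (q.cd_S hx).of_le (show (1 : WithTop ℕ∞) ≤ 2 by norm_num)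
  have h3 := (cd_r hx).of_le (show (1 : WithTop ℕ∞) ≤ 2 by norm_num)
  exact ((h2.sub ((h1.pow 2).div h2 (mul_pos (Real.exp_pos _) (jap_pos _)).ne')).add
    ((h3.mul (q.cd_Y' hx)).mul h2))

end c1

/-- The Hamiltonian vector field is divergence free. -/
lemma int_X {F : V3 × V3 → ℝ} (hF : ContDiff ℝ 1 F) (hc : HasCompactSupport F)
    (hs : ∀ z ∈ tsupport F, z.1 ≠ 0) :
    ∫ z, fderiv ℝ F z (X Y z) = 0 := by
  have hA : ContDiff ℝ 1 (fun z => F z * al Y z) := by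
    apply cd_of_tsupport
    intro z hz
    exact hF.contDiffAt.mul (q.cd_al (hs z (tsupport_mul_subset_left hz)))
  have hB : ContDiff ℝ 1 (fun z => F z * be Y z) := by
    apply cd_of_tsupport
    intro z hz
    exact hF.contDiffAt.mul (q.cd_be (hs z (tsupport_mul_subset_left hz)))
  obtain ⟨i1, e1⟩ := int_x hA hc.mul_right
  obtain ⟨i2, e2⟩ := int_v hB hc.mul_right
  have e3 := integral_sub i1 i2
  rw [e1, e2, sub_zero] at e3
  rw [← e3]
  congr 1
  funext z
  by_cases hz : z ∈ tsupport F
  · have hx := hs z hz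
    have hr := norm_pos_iff.2 hx
    have hFd := (hF.differentiable (by norm_num) z).hasFDerivAt
    have h1 := (norm_deriv hx).comp z (hasFDerivAt_fst (𝕜 := ℝ) (p := z))
    have h2 := (jap_deriv z.2).comp z (hasFDerivAt_snd (𝕜 := ℝ) (p := z))
    have hsd : HasFDerivAt (fun z : V3 × V3 => Real.exp (-Y ‖z.1‖)) _ z :=
      HasDerivAt.comp_hasFDerivAt (h₂ := fun r => Real.exp (-Y r)) z
        (q.Yd hr).hasDerivAt.neg.exp h1
    have hla := hFd.mul (hsd.mul ((hasDerivAt_inv (jap_pos z.2).ne').comp_hasFDerivAt z h2))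
    have hY'd : HasFDerivAt (fun z : V3 × V3 => Real.exp (-Y ‖z.1‖) * (-deriv Y ‖z.1‖) / ‖z.1‖)
        _ z := HasDerivAt.comp_hasFDerivAt
          (h₂ := fun r => Real.exp (-Y r) * (-deriv Y r) / r) z
          (((q.Yd hr).hasDerivAt.neg.exp.mul (q.Y'd hr).hasDerivAt.neg).div (hasDerivAt_id _)
            hr.ne') h1
    have hlb := hFd.mul (hY'd.mul h2)
    have ea : (fun z => F z * al Y z) =
      fun z => F z * (Real.exp (-Y ‖z.1‖) * (jap z.2)⁻¹) := by
      funext z; simp only [al, div_eq_mul_inv]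
    have eb : (fun z => F z * be Y z) =
      fun z => F z * (Real.exp (-Y ‖z.1‖) * (-deriv Y ‖z.1‖) / ‖z.1‖ * jap z.2) := by
      funext z; simp only [be]; ring
    have hj := (jap_pos z.2).ne'
    have hr' := hr.ne'
    have fa : fderiv ℝ (fun z => F z * al Y z) z (z.2, 0) = al Y z * fderiv ℝ F z (z.2, 0) +
        F z * (Real.exp (-Y ‖z.1‖) * -deriv Y ‖z.1‖ * ip z / (‖z.1‖ * jap z.2)) := by
      rw [ea]
      have h := hla.fderiv
      simp only [Pi.mul_def, Function.comp_apply] at h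
      rw [h]
      simp [al, ip]
      field_simp
      ring
    have fb : fderiv ℝ (fun z => F z * be Y z) z (0, z.1) = be Y z * fderiv ℝ F z (0, z.1) +
        F z * (Real.exp (-Y ‖z.1‖) * -deriv Y ‖z.1‖ * ip z / (‖z.1‖ * jap z.2)) := by
      rw [eb]
      have h := hlb.fderiv
      simp only [Pi.mul_def, Function.comp_apply] at h
      rw [h]
      simp [be, ip, real_inner_comm]
      field_simp
      ring
    rw [fa, fb]
    have eX : X Y z = al Y z • (z.2, 0) - be Y z • (0, z.1) := by
      ext1 <;> simp [X]
    rw [eX, map_sub, map_smul, map_smul, smul_eq_mul, smul_eq_mul]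
    ring
  · have h0 : ∀ g : V3 × V3 → ℝ, fderiv ℝ (fun z => F z * g z) z = 0 := by
      intro g
      have : (fun z => F z * g z) =ᶠ[𝓝 z] fun _ => 0 := by
        filter_upwards [notMem_tsupport_iff_eventuallyEq.1 hz] with y hy
        simp [hy]
      rw [this.fderiv_eq]; simp
    have h00 : fderiv ℝ F z = 0 := by
      have := h0 (fun _ => 1)
      simpa using this
    rw [h0, h0, h00]; simp

end Qual

/-! ### Integration by parts along the flow -/

section cutoff

lemma sig_deriv (t : ℝ) : HasDerivAt Real.smoothTransition (deriv Real.smoothTransition t) t :=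
  ((Real.smoothTransition.contDiff (n := 1)).differentiable (by norm_num) t).hasDerivAt

lemma sig_deriv_zero {t : ℝ} (h : 1 < t) : deriv Real.smoothTransition t = 0 := by
  have : Real.smoothTransition =ᶠ[𝓝 t] fun _ => 1 := by
    filter_upwards [Ioi_mem_nhds h] with u hu
    exact Real.smoothTransition.one_of_one_le (le_of_lt hu)
  rw [this.deriv_eq]; simp

lemma sig_deriv_zero' {t : ℝ} (h : t < 0) : deriv Real.smoothTransition t = 0 := by
  have : Real.smoothTransition =ᶠ[𝓝 t] fun _ => 0 := by
    filter_upwards [Iio_mem_nhds h] with u hu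
    exact Real.smoothTransition.zero_of_nonpos (le_of_lt hu)
  rw [this.deriv_eq]; simp

lemma sig_bdd : ∃ C, 0 ≤ C ∧ ∀ t, |deriv Real.smoothTransition t| ≤ C := by
  have hc : Continuous (deriv Real.smoothTransition) :=
    (Real.smoothTransition.contDiff (n := 1)).continuous_deriv (by norm_num)
  obtain ⟨C, hC⟩ := isCompact_Icc.exists_bound_of_continuousOn (s := Icc (0:ℝ) 1) hc.continuousOn
  refine ⟨max C 0, le_max_right _ _, fun t => ?_⟩
  rcases lt_or_ge t 0 with h | h
  · rw [sig_deriv_zero' h]; simp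
  rcases lt_or_ge 1 t with h' | h'
  · rw [sig_deriv_zero h']; simp
  · exact (hC t ⟨h, h'⟩).trans (le_max_left _ _)

/-- A smooth approximation of `1/t` vanishing near `t = 0`. -/
def th (n t : ℝ) : ℝ := Real.smoothTransition (n ^ 2 * t ^ 2 - 1) * t⁻¹

/-- `t²` times the derivative of `th n`. -/
def thA (n t : ℝ) : ℝ :=
  deriv Real.smoothTransition (n ^ 2 * t ^ 2 - 1) * (2 * (n ^ 2 * t ^ 2)) -
    Real.smoothTransition (n ^ 2 * t ^ 2 - 1)

lemma th_deriv (n : ℝ) {t : ℝ} (ht : t ≠ 0) : HasDerivAt (th n) (thA n t / t ^ 2) t := by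
  have h1 : HasDerivAt (fun t => n ^ 2 * t ^ 2 - 1) (n ^ 2 * (2 * t)) t := by
    simpa using ((hasDerivAt_pow 2 t).const_mul (n ^ 2)).sub_const 1
  have h2 := ((sig_deriv _).comp t h1).mul (hasDerivAt_inv ht)
  refine h2.congr_deriv ?_
  simp only [thA, Function.comp]
  field_simp
  ring

lemma th_cd (n : ℝ) {t : ℝ} (ht : t ≠ 0) : ContDiffAt ℝ 1 (th n) t := by
  apply ContDiffAt.mul
  · exact Real.smoothTransition.contDiff.contDiffAt.comp t (by fun_prop)
  · exact contDiffAt_inv ℝ ht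

lemma thA_bdd : ∃ C, 0 ≤ C ∧ ∀ n t, |thA n t| ≤ C := by
  obtain ⟨C, hC, h⟩ := sig_bdd
  refine ⟨4 * C + 1, by positivity, fun n t => ?_⟩
  unfold thA
  have h0 : 0 ≤ n ^ 2 * t ^ 2 := by positivity
  set u := n ^ 2 * t ^ 2
  have h1 : |Real.smoothTransition (u - 1)| ≤ 1 := by
    rw [abs_of_nonneg (Real.smoothTransition.nonneg _)]
    exact Real.smoothTransition.le_one _
  have h2 : |deriv Real.smoothTransition (u - 1) * (2 * u)| ≤ 4 * C := by
    rcases lt_or_ge 2 u with h' | h'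
    · rw [sig_deriv_zero (by linarith)]; simp; exact hC
    · rw [abs_mul, abs_of_nonneg (by linarith : 0 ≤ 2 * u)]
      nlinarith [h (u - 1), abs_nonneg (deriv Real.smoothTransition (u - 1))]
  exact (abs_sub _ _).trans (add_le_add h2 h1)

/-- Away from `rw = 0` the inner cut-off is eventually inactive. -/
lemma cut_lim {t : ℝ} (ht : t ≠ 0) :
    ∀ᶠ n : ℕ in atTop, 2 < (n + 1 : ℝ) ^ 2 * t ^ 2 := by
  have h1 : Tendsto (fun n : ℕ => (n + 1 : ℝ) ^ 2 * t ^ 2) atTop atTop := by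
    apply Tendsto.atTop_mul_const (by positivity)
    exact (tendsto_pow_atTop (by norm_num)).comp
      (tendsto_atTop_add_const_right _ _ tendsto_natCast_atTop_atTop)
  exact h1.eventually_gt_atTop 2

/-- The truncated integrand: `|φ'| G h²/(rw)`, cut off near `S = 1` and near `rw = 0`. -/
def Fn (φ Y : ℝ → ℝ) (h : V3 × V3 → ℝ) (n : ℝ) (z : V3 × V3) : ℝ :=
  deriv φ (1 - Sf Y z) * Real.smoothTransition (n * (1 - Sf Y z) - 1) * th n (ip z) *
    Gf Y z * (h z * h z)

namespace Qual
variable {φ Y : ℝ → ℝ} (q : Qual φ Y)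
include q

lemma X_meas : Measurable (al Y) ∧ Measurable (be Y) := by
  have h1 : Measurable fun z : V3 × V3 => Real.exp (-Y ‖z.1‖) :=
    (Real.continuous_exp.comp (q.Ycont.comp continuous_fst).neg).measurable
  have h2 : Measurable fun z : V3 × V3 => deriv Y ‖z.1‖ :=
    (measurable_deriv Y).comp measurable_fst.norm
  have h3 : Measurable fun z : V3 × V3 => jap z.2 := (jap_cont.comp continuous_snd).measurable
  exact ⟨h1.div h3, ((h1.mul h2.neg).mul h3).div measurable_fst.norm⟩

omit q in
lemma X_split (z : V3 × V3) : X Y z = al Y z • (z.2, 0) - be Y z • (0, z.1) := by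
  ext1 <;> simp [X]

/-- `X` and `G` are bounded on the support, while `Q` is allowed the singularity of `y'/r`. -/
lemma bounds : ∃ K, 0 ≤ K ∧ ∀ z ∈ Dp Y, ‖X Y z‖ ≤ K ∧ |Gf Y z| ≤ K ∧
    |Qf Y z| ≤ K * (1 + 1 / ‖z.1‖ ^ 2) := by
  obtain ⟨R, B, hR, hB, hr, hb⟩ := q.Y_bdd
  refine ⟨3 + 3 * B + (2 + R * B) + 10 * B, by positivity, fun z hz => ?_⟩
  have hx := hz.1
  have hp := norm_pos_iff.2 hx
  have hY := Y_pos hz.2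
  obtain ⟨b1, b2⟩ := hb _ hp hY
  have hrR := hr _ hp.le hY
  have hs0 := Real.exp_pos (-Y ‖z.1‖)
  have hs1 : Real.exp (-Y ‖z.1‖) < 1 := Real.exp_lt_one_iff.2 (by linarith)
  have hj1 := one_le_jap z.2
  have hj3 := q.jap_lt3 hz.2
  have hv3 := q.norm_lt3 hz.2
  have hv0 := norm_nonneg z.2
  set s := Real.exp (-Y ‖z.1‖)
  have hRB : 0 ≤ R * B := by positivity
  have d1 := abs_nonneg (deriv Y ‖z.1‖)
  have d2 := abs_nonneg (deriv (deriv Y) ‖z.1‖)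
  refine ⟨?_, ?_, ?_⟩
  · rw [Prod.norm_def]
    apply max_le
    · simp only [X, norm_smul, al, Real.norm_eq_abs, abs_div, Real.abs_exp, abs_of_pos (jap_pos _)]
      have : s / jap z.2 ≤ 1 := by rw [div_le_one (jap_pos _)]; linarith
      have : s / jap z.2 * ‖z.2‖ ≤ 1 * 3 := by gcongr
      change s / jap z.2 * ‖z.2‖ ≤ _
      linarith
    · have e : ‖(X Y z).2‖ = s * |deriv Y ‖z.1‖| * jap z.2 := by
        simp only [X, norm_neg, norm_smul, be, Real.norm_eq_abs, abs_div, abs_mul, abs_neg,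
          Real.abs_exp, abs_of_pos (jap_pos z.2), abs_norm]
        change s * |deriv Y ‖z.1‖| * jap z.2 / ‖z.1‖ * ‖z.1‖ = _
        field_simp
      rw [e]
      have : s * |deriv Y ‖z.1‖| * jap z.2 ≤ 1 * B * 3 := by gcongr
      linarith
  · have hS0 : 0 < Sf Y z := mul_pos hs0 (jap_pos _)
    have a1 : s ^ 2 / Sf Y z ≤ 1 := by
      rw [div_le_one hS0]; simp only [Sf]; nlinarith
    have a1' : 0 ≤ s ^ 2 / Sf Y z := by positivity
    have a2 : |‖z.1‖ * deriv Y ‖z.1‖ * Sf Y z| ≤ R * B * 1 := by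
      rw [abs_mul, abs_mul, abs_norm, abs_of_pos hS0]
      gcongr
      exact hz.2.le
    have a3 := abs_le.1 a2
    have := hz.2
    unfold Gf
    rw [abs_le]
    constructor <;> linarith
  · have hi : 0 < 1 / ‖z.1‖ := by positivity
    have hi2 : 1 / ‖z.1‖ ≤ 1 + 1 / ‖z.1‖ ^ 2 := by
      rw [show 1 / ‖z.1‖ ^ 2 = (1 / ‖z.1‖) ^ 2 by rw [div_pow, one_pow]]
      nlinarith [sq_nonneg (1 / ‖z.1‖ - 1)]
    have c1 : |deriv Y ‖z.1‖ / ‖z.1‖| ≤ B * (1 / ‖z.1‖) := by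
      rw [abs_div, abs_norm, div_eq_mul_one_div]; gcongr
    have c2 : |2 * deriv Y ‖z.1‖ / ‖z.1‖ / jap z.2 ^ 2| ≤ 2 * (B * (1 / ‖z.1‖)) := by
      rw [show 2 * deriv Y ‖z.1‖ / ‖z.1‖ / jap z.2 ^ 2 =
        2 * (deriv Y ‖z.1‖ / ‖z.1‖) / jap z.2 ^ 2 by ring, abs_div, abs_mul, abs_two,
        abs_of_pos (by have := jap_pos z.2; positivity : 0 < jap z.2 ^ 2)]
      rw [div_le_iff₀ (by have := jap_pos z.2; positivity)]
      have : 1 ≤ jap z.2 ^ 2 := by nlinarith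
      have : 0 ≤ B * (1 / ‖z.1‖) := by positivity
      nlinarith
    unfold Qf
    rw [abs_mul, abs_of_pos (by positivity)]
    have c3 : |-(deriv (deriv Y) ‖z.1‖) - deriv Y ‖z.1‖ / ‖z.1‖
        - 2 * deriv Y ‖z.1‖ / ‖z.1‖ / jap z.2 ^ 2| ≤ B + 3 * (B * (1 / ‖z.1‖)) := by
      rw [abs_le] at *
      constructor <;> linarith [c1.1, c1.2, c2.1, c2.2, b2.1, b2.2]
    have c4 : s ^ 2 ≤ 1 := by nlinarith
    have c5 : B * (1 / ‖z.1‖) ≤ B * (1 + 1 / ‖z.1‖ ^ 2) := by gcongr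
    have c6 : B ≤ B * (1 + 1 / ‖z.1‖ ^ 2) := by
      have : 0 ≤ 1 / ‖z.1‖ ^ 2 := by positivity
      nlinarith
    have c7 : 0 ≤ 1 + 1 / ‖z.1‖ ^ 2 := by positivity
    calc s ^ 2 * _ ≤ 1 * (B + 3 * (B * (1 / ‖z.1‖))) := by gcongr
      _ ≤ 10 * B * (1 + 1 / ‖z.1‖ ^ 2) := by nlinarith
      _ ≤ _ := by gcongr; nlinarith

variable {h : V3 × V3 → ℝ} {C : ℝ} (g : Gen Y h C)
include g

omit q in
/-- `h/(rw)` is bounded by `C/r`. -/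
lemma quot_le {z : V3 × V3} (hz : z ∈ Dp Y) : |h z / ip z| ≤ C * (1 / ‖z.1‖) ∧
    h z = h z / ip z * ip z := by
  have hp := norm_pos_iff.2 hz.1
  have hw := g.bw z hz
  have hi : |wfun z| = |ip z| / ‖z.1‖ := by
    rw [← ip_eq, abs_mul, abs_norm]; field_simp
  rw [hi] at hw
  by_cases h0 : ip z = 0
  · rw [h0] at hw ⊢
    simp only [abs_zero, zero_div, mul_zero] at hw
    have := abs_nonpos_iff.1 hw
    rw [this]; simp; exact mul_nonneg g.C0 (by positivity)
  · refine ⟨?_, by field_simp⟩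
    rw [abs_div, div_le_iff₀ (abs_pos.2 h0)]
    calc |h z| ≤ _ := hw
      _ = _ := by ring

lemma h_diff {z : V3 × V3} (hz : z ∈ Dp Y) : ContDiffAt ℝ 1 h z :=
  g.c1.contDiffAt (q.Dp_open.mem_nhds hz)

omit q in
/-- The derivative of `h` along the flow is bounded. -/
lemma tau_le {K : ℝ} {z : V3 × V3} (hz : z ∈ Dp Y) (hK : ‖X Y z‖ ≤ K) :
    |fderiv ℝ h z (X Y z)| ≤ C * K := by
  refine ((fderiv ℝ h z).le_opNorm _).trans ?_
  exact mul_le_mul (g.bd z hz) hK (norm_nonneg _) g.C0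

omit g

/-- The cut-offs keep the truncated integrand away from the boundary `S = 1` and from `rw = 0`. -/
lemma Fn_supp {n : ℝ} (hn : 0 < n) : tsupport (Fn φ Y h n) ⊆
    {z | Sf Y z ≤ 1 - 1 / n ∧ 1 / n ≤ |ip z|} := by
  apply closure_minimal
  · intro z hz
    rw [Function.mem_support, Fn] at hz
    constructor
    · by_contra hcon
      rw [not_le] at hcon
      apply hz
      rw [Real.smoothTransition.zero_of_nonpos (x := n * (1 - Sf Y z) - 1)]
      · simp
      · have : n * (1 - Sf Y z) ≤ n * (1 / n) := by gcongr; linarith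
        rw [mul_one_div_cancel hn.ne'] at this
        linarith
    · by_contra hcon
      rw [not_le] at hcon
      apply hz
      rw [th, Real.smoothTransition.zero_of_nonpos (x := n ^ 2 * ip z ^ 2 - 1)]
      · simp
      · have h1 : n * |ip z| ≤ n * (1 / n) := by gcongr
        rw [mul_one_div_cancel hn.ne'] at h1
        have h2 : (n * |ip z|) ^ 2 ≤ 1 := pow_le_one₀ (by positivity) h1
        rw [mul_pow, sq_abs] at h2
        linarith
  · have h1 : Continuous ip := by unfold ip; fun_prop
    exact (isClosed_le q.Sf_cont continuous_const).inter (isClosed_le continuous_const h1.abs)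

omit q in
lemma supp_Dp {n : ℝ} (hn : 0 < n) {z : V3 × V3} (hz : Sf Y z ≤ 1 - 1 / n ∧ 1 / n ≤ |ip z|) :
    z ∈ Dp Y ∧ ip z ≠ 0 := by
  have h1 : 0 < 1 / n := by positivity
  have h2 : ip z ≠ 0 := abs_pos.1 (h1.trans_le hz.2)
  refine ⟨⟨fun h => h2 ?_, by linarith [hz.1]⟩, h2⟩
  simp [ip, h]

include g

lemma Fn_cd {n : ℝ} (hn : 0 < n) : ContDiff ℝ 1 (Fn φ Y h n) := by
  apply cd_of_tsupport
  intro z hz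
  obtain ⟨hD, hi⟩ := supp_Dp hn (q.Fn_supp hn hz)
  have hS := (q.cd_S hD.1).of_le (show (1 : WithTop ℕ∞) ≤ 2 by norm_num)
  have h1 : ContDiffAt ℝ 1 (fun z => deriv φ (1 - Sf Y z)) z :=
    ContDiffAt.comp z (q.hp.deriv_c1.contDiffAt (Ioi_mem_nhds (by linarith [hD.2])))
      (contDiffAt_const.sub hS)
  have h2 : ContDiffAt ℝ 1 (fun z => Real.smoothTransition (n * (1 - Sf Y z) - 1)) z :=
    ContDiffAt.comp z Real.smoothTransition.contDiff.contDiffAt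
      ((contDiffAt_const.mul (contDiffAt_const.sub hS)).sub contDiffAt_const)
  have h3 : ContDiffAt ℝ 1 (fun z => th n (ip z)) z :=
    ContDiffAt.comp z (th_cd n hi) (contDiffAt_fst.inner ℝ contDiffAt_snd)
  have h4 := q.h_diff g hD
  exact (((h1.mul h2).mul h3).mul (q.cd_G hD.1)).mul (h4.mul h4)

omit g in
lemma Fn_cs {n : ℝ} (hn : 0 < n) : HasCompactSupport (Fn φ Y h n) := by
  obtain ⟨R, hR, hr⟩ := q.radius
  refine Metric.isCompact_of_isClosed_isBounded (isClosed_tsupport _) ?_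
  rw [isBounded_iff_forall_norm_le]
  refine ⟨max R 3, fun z hz => ?_⟩
  have hD := (supp_Dp hn (q.Fn_supp hn hz)).1.2
  rw [Prod.norm_def]
  exact max_le_max (hr _ (norm_nonneg _) (Y_pos hD)).le (q.norm_lt3 hD).le

/-- The derivative of the truncated integrand along the flow. -/
lemma Fn_T {n : ℝ} (hn : 0 < n) {z : V3 × V3} (hx : z.1 ≠ 0) :
    fderiv ℝ (Fn φ Y h n) z (X Y z) = psi φ Y z * (Real.smoothTransition (n * (1 - Sf Y z) - 1) *
      (thA n (ip z) * Gf Y z ^ 2 * (h z / ip z) ^ 2 +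
        Real.smoothTransition (n ^ 2 * ip z ^ 2 - 1) *
          (2 * fderiv ℝ h z (X Y z) * (h z / ip z) * Gf Y z - h z ^ 2 * Qf Y z))) := by
  by_cases hD : z ∈ Dp Y
  swap
  · have hS : 1 ≤ Sf Y z := by by_contra hc; exact hD ⟨hx, not_le.1 hc⟩
    rw [q.psi_zero hS, zero_mul]
    rw [fderiv_of_notMem_tsupport]; · simp
    intro hz
    exact hD (supp_Dp hn (q.Fn_supp hn hz)).1
  by_cases hi : ip z = 0
  · obtain ⟨-, h1⟩ := quot_le g hD
    rw [fderiv_of_notMem_tsupport]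
    · rw [hi] at h1; simp only [mul_zero] at h1
      rw [h1]; simp
    · intro hz
      exact (supp_Dp hn (q.Fn_supp hn hz)).2 hi
  have hr := norm_pos_iff.2 hx
  have tS := td_S hx (q.Yd hr)
  have t1 : TD Y (fun z => deriv φ (1 - Sf Y z)) z 0 := by
    have hd : HasDerivAt (fun t => deriv φ (1 - t)) _ (Sf Y z) :=
      HasDerivAt.comp (h₂ := deriv φ) _ (((q.hp.deriv_c1.contDiffAt
        (Ioi_mem_nhds (by linarith [hD.2] : 0 < 1 - Sf Y z))).differentiableAt
          (by norm_num)).hasDerivAt) ((hasDerivAt_id _).const_sub 1)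
    exact (tS.comp hd).val (by simp)
  have t2 : TD Y (fun z => Real.smoothTransition (n * (1 - Sf Y z) - 1)) z 0 := by
    have hd : HasDerivAt (fun t => Real.smoothTransition (n * (1 - t) - 1)) _ (Sf Y z) :=
      HasDerivAt.comp (h₂ := Real.smoothTransition) _ (sig_deriv _)
        ((((hasDerivAt_id _).const_sub 1).const_mul n).sub_const 1)
    exact (tS.comp hd).val (by simp)
  have t3 := (td_ip (Y := Y) hx).comp (th_deriv n hi)
  have t4 := td_G hx (q.Yd hr) (q.Y'd hr)
  have t5 := TD.of_diff (Y := Y) ((q.h_diff g hD).differentiableAt (by norm_num))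
  have tt := ((((t1.mul t2).mul t3).mul t4).mul (t5.mul t5)).fderiv
  unfold Fn
  rw [tt]
  simp only [psi, th]
  field_simp
  ring

/-- The divergence integral vanishes for the truncated integrand; dominated convergence removes the
cut-offs. -/
lemma ibp_aux : ∫ z, psi φ Y z * (2 * fderiv ℝ h z (X Y z) * (h z / ip z) * Gf Y z -
    (h z / ip z) ^ 2 * Gf Y z ^ 2 - h z ^ 2 * Qf Y z) = 0 := by
  obtain ⟨K, hK, hb⟩ := q.bounds
  obtain ⟨A, hA, hA'⟩ := thA_bdd
  have hC := g.C0
  have lim := tendsto_integral_of_dominated_convergence (μ := (volume : Measure (V3 × V3)))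
    (F := fun (n : ℕ) z => fderiv ℝ (Fn φ Y h (n + 1)) z (X Y z))
    (f := fun z => psi φ Y z * (2 * fderiv ℝ h z (X Y z) * (h z / ip z) * Gf Y z -
    (h z / ip z) ^ 2 * Gf Y z ^ 2 - h z ^ 2 * Qf Y z))
    (fun z => (A * K ^ 2 * C ^ 2 + 4 * C ^ 2 * K ^ 2 + C ^ 2 * 9 * K) *
      (psi φ Y z * (1 + 1 / ‖z.1‖ ^ 2))) ?_ (q.maj_int.const_mul _) ?_ ?_
  · have e : ∀ n : ℕ, ∫ z, fderiv ℝ (Fn φ Y h (n + 1)) z (X Y z) = 0 := fun n =>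
      q.int_X (q.Fn_cd g (by positivity)) (q.Fn_cs (by positivity)) fun z hz =>
        (supp_Dp (by positivity) (q.Fn_supp (by positivity) hz)).1.1
    simp only [e] at lim
    exact tendsto_nhds_unique lim tendsto_const_nhds |>.symm ▸ rfl
  · intro n
    have hc := (q.Fn_cd g (n := (n + 1 : ℝ)) (by positivity)).continuous_fderiv (by norm_num)
    simp only [X_split, map_sub, map_smul, smul_eq_mul]
    have c1 : Continuous fun z : V3 × V3 => fderiv ℝ (Fn φ Y h (n + 1)) z (z.2, 0) :=
      hc.clm_apply (by fun_prop)
    have c2 : Continuous fun z : V3 × V3 => fderiv ℝ (Fn φ Y h (n + 1)) z (0, z.1) :=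
      hc.clm_apply (by fun_prop)
    exact ((q.X_meas.1.mul c1.measurable).sub (q.X_meas.2.mul c2.measurable)).aestronglyMeasurable
  · intro n
    filter_upwards [null_x] with z hx
    rw [q.Fn_T g (by positivity) hx]
    by_cases hD : z ∈ Dp Y
    swap
    · have hS : 1 ≤ Sf Y z := by by_contra hc; exact hD ⟨hx, not_le.1 hc⟩
      rw [q.psi_zero hS]; simp
    obtain ⟨b1, b2, b3⟩ := hb z hD
    obtain ⟨b4, b5⟩ := quot_le g hD
    have b6 := tau_le g hD b1
    have b7 : |h z| ≤ C * 3 := by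
      refine (g.bw z hD).trans ?_
      have : |wfun z| ≤ ‖z.2‖ := by
        rw [wfun, abs_div, abs_norm, div_le_iff₀ (norm_pos_iff.2 hx), mul_comm]
        exact abs_real_inner_le_norm _ _
      have := q.norm_lt3 hD.2
      gcongr; linarith
    rw [norm_mul, Real.norm_of_nonneg (q.psi_nonneg z), mul_left_comm]
    apply mul_le_mul_of_nonneg_left _ (q.psi_nonneg z)
    have s1 := Real.smoothTransition.nonneg ((n + 1 : ℝ) * (1 - Sf Y z) - 1)
    have s2 := Real.smoothTransition.le_one ((n + 1 : ℝ) * (1 - Sf Y z) - 1)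
    have s3 := Real.smoothTransition.nonneg ((n + 1 : ℝ) ^ 2 * ip z ^ 2 - 1)
    have s4 := Real.smoothTransition.le_one ((n + 1 : ℝ) ^ 2 * ip z ^ 2 - 1)
    have s5 := hA' (n + 1) (ip z)
    set σ1 := Real.smoothTransition ((n + 1 : ℝ) * (1 - Sf Y z) - 1)
    set σ2 := Real.smoothTransition ((n + 1 : ℝ) ^ 2 * ip z ^ 2 - 1)
    set A1 := thA (n + 1) (ip z)
    set r1 := 1 / ‖z.1‖ with hr1
    have hr1' : 0 < r1 := by have := norm_pos_iff.2 hx; positivity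
    rw [show 1 / ‖z.1‖ ^ 2 = r1 ^ 2 by rw [hr1, div_pow, one_pow]] at b3 ⊢
    have e1 : |A1 * Gf Y z ^ 2 * (h z / ip z) ^ 2| ≤ A * K ^ 2 * (C * r1) ^ 2 := by
      rw [abs_mul, abs_mul, abs_pow, abs_pow]; gcongr
    have e2 : |2 * fderiv ℝ h z (X Y z) * (h z / ip z) * Gf Y z| ≤ 2 * (C * K) * (C * r1) * K := by
      rw [abs_mul, abs_mul, abs_mul, abs_two]; gcongr
    have e3 : |h z ^ 2 * Qf Y z| ≤ (C * 3) ^ 2 * (K * (1 + r1 ^ 2)) := by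
      rw [abs_mul, abs_pow]; gcongr
    have e4 : |σ2 * (2 * fderiv ℝ h z (X Y z) * (h z / ip z) * Gf Y z - h z ^ 2 * Qf Y z)| ≤
        1 * (2 * (C * K) * (C * r1) * K + (C * 3) ^ 2 * (K * (1 + r1 ^ 2))) := by
      rw [abs_mul, abs_of_nonneg s3]
      exact mul_le_mul s4 ((abs_sub _ _).trans (add_le_add e2 e3)) (abs_nonneg _) one_pos.le
    rw [Real.norm_eq_abs, abs_mul, abs_of_nonneg s1]
    refine (mul_le_mul s2 ((abs_add_le _ _).trans (add_le_add e1 e4)) (abs_nonneg _)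
      one_pos.le).trans ?_
    have f1 : r1 ≤ 1 + r1 ^ 2 := by nlinarith [sq_nonneg (r1 - 1)]
    have f2 : 0 ≤ C ^ 2 * K ^ 2 := by positivity
    have f3 : 0 ≤ A * K ^ 2 * C ^ 2 := by positivity
    nlinarith [mul_le_mul_of_nonneg_left f1 f2, mul_nonneg f2 (sq_nonneg r1)]
  · filter_upwards [null_x] with z hx
    by_cases hD : z ∈ Dp Y
    swap
    · have hS : 1 ≤ Sf Y z := by by_contra hc; exact hD ⟨hx, not_le.1 hc⟩
      have e : ∀ n : ℕ, fderiv ℝ (Fn φ Y h (n + 1)) z (X Y z) = 0 := fun n => by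
        rw [q.Fn_T g (by positivity) hx, q.psi_zero hS, zero_mul]
      simp only [e, q.psi_zero hS, zero_mul]
      exact tendsto_const_nhds
    by_cases hi : ip z = 0
    · obtain ⟨-, h1⟩ := quot_le g hD
      rw [hi] at h1; simp only [mul_zero] at h1
      have e : ∀ n : ℕ, fderiv ℝ (Fn φ Y h (n + 1)) z (X Y z) = 0 := fun n => by
        rw [q.Fn_T g (by positivity) hx, h1]; simp
      simp only [e, h1]; simp
    · apply tendsto_const_nhds.congr'
      have ev : ∀ᶠ n : ℕ in atTop, 2 < (n + 1 : ℝ) * (1 - Sf Y z) := by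
        have h1 : Tendsto (fun n : ℕ => (n + 1 : ℝ) * (1 - Sf Y z)) atTop atTop :=
          Tendsto.atTop_mul_const (by linarith [hD.2])
            (tendsto_atTop_add_const_right _ _ tendsto_natCast_atTop_atTop)
        exact h1.eventually_gt_atTop 2
      filter_upwards [cut_lim hi, ev] with n h1 h2
      rw [q.Fn_T g (by positivity) hx, thA, sig_deriv_zero (by linarith),
        Real.smoothTransition.one_of_one_le (by linarith),
        Real.smoothTransition.one_of_one_le (by linarith)]
      ring

end Qual
end cutoff

/-! ### The metric perturbation `λ_h` -/

section field

/-- The `v`-second moment of a radial weight is isotropic. -/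
lemma isotropic {f : ℝ → ℝ} (hf : ∀ u : V3, Integrable fun v : V3 => f ‖v‖ * ⟪u, v⟫ ^ 2)
    {u : V3} (hu : ‖u‖ = 1) :
    ∫ v : V3, f ‖v‖ * ‖v‖ ^ 2 = 3 * ∫ v : V3, f ‖v‖ * ⟪u, v⟫ ^ 2 := by
  have h1 : ∀ i : Fin 3, ∫ v : V3, f ‖v‖ * ⟪EuclideanSpace.single i (1 : ℝ), v⟫ ^ 2 =
      ∫ v : V3, f ‖v‖ * ⟪u, v⟫ ^ 2 := by
    intro i
    set e : V3 := EuclideanSpace.single i (1 : ℝ) with he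
    have hn : ‖e‖ = ‖u‖ := by rw [hu, he, PiLp.norm_single]; simp
    set A := (ℝ ∙ (e - u))ᗮ.reflection
    have hA : A e = u := Submodule.reflection_sub hn
    rw [← A.measurePreserving.integral_comp A.toHomeomorph.measurableEmbedding
      (fun v => f ‖v‖ * ⟪u, v⟫ ^ 2)]
    congr 1; funext v
    simp only [A.norm_map]
    rw [← hA, A.inner_map_map]
  have h2 : ∀ v : V3, f ‖v‖ * ‖v‖ ^ 2 =
      ∑ i : Fin 3, f ‖v‖ * ⟪EuclideanSpace.single i (1 : ℝ), v⟫ ^ 2 := by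
    intro v
    rw [EuclideanSpace.real_norm_sq_eq, Finset.mul_sum]
    simp [EuclideanSpace.inner_single_left]
  simp only [h2]
  rw [integral_finsetSum _ fun i _ => hf _]
  simp only [h1, Finset.sum_const, Finset.card_univ, Fintype.card_fin]
  simp

/-- The metric perturbation `λ_h`, with the normalising factor `E₀` cancelled. -/
def Lam (φ Y lf : ℝ → ℝ) (h : V3 × V3 → ℝ) (x : V3) : ℝ :=
  -(4 * Real.pi * ‖x‖ * (Real.exp (-Y ‖x‖) / Real.exp (-lf ‖x‖)) *
    ∫ v : V3, psi φ Y (x, v) * h (x, v) * wfun (x, v))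

lemma wfun_le (z : V3 × V3) : |wfun z| ≤ ‖z.2‖ := by
  rcases eq_or_ne z.1 0 with hx | hx
  · simp [wfun, hx]
  · rw [wfun, abs_div, abs_norm, div_le_iff₀ (norm_pos_iff.2 hx), mul_comm]
    exact abs_real_inner_le_norm _ _

lemma wfun_meas : Measurable wfun := by
  unfold wfun
  exact (continuous_fst.inner continuous_snd).measurable.div measurable_fst.norm

/-- `λ_h` is a radial function. -/
lemma Lam_rot {φ Y lf : ℝ → ℝ} {h : V3 × V3 → ℝ} (hsym : SphSym h) (x : V3) :
    Lam φ Y lf h (‖x‖ • e1) = Lam φ Y lf h x := by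
  obtain ⟨A, hA, hAx⟩ := exists_rot (x := x)
  have hn : ‖‖x‖ • e1‖ = ‖x‖ := by rw [← A.norm_map, hAx]
  unfold Lam
  rw [hn, ← A.measurePreserving.integral_comp A.toHomeomorph.measurableEmbedding
    (fun v => psi φ Y (x, v) * h (x, v) * wfun (x, v))]
  congr 2
  congr 1; funext v
  have h1 : h (x, A v) = h (‖x‖ • e1, v) := by
    conv_lhs => rw [← hAx]
    exact hsym A hA _ _
  have h2 : wfun (x, A v) = wfun (‖x‖ • e1, v) := by
    simp only [wfun, hn]
    conv_lhs => rw [← hAx]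
    rw [A.inner_map_map, A.norm_map, hn]
  have h3 : psi φ Y (x, A v) = psi φ Y (‖x‖ • e1, v) := by
    simp only [psi, Sf, hn, jap, A.norm_map]
  rw [h1, h2, h3]

namespace Qual
variable {φ Y : ℝ → ℝ} (q : Qual φ Y)
include q

/-- Away from the support the weight vanishes on the whole `v`-fibre. -/
lemma psi_fib {x : V3} (hx : Y ‖x‖ ≤ 0) (v : V3) : psi φ Y (x, v) = 0 := by
  apply q.psi_zero
  by_contra h'
  exact absurd (Y_pos (not_le.1 h')) (not_lt.2 hx)

lemma psi_w2_int (x u : V3) : Integrable fun v => psi φ Y (x, v) * ⟪u, v⟫ ^ 2 := by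
  refine ((q.psi_v_int x).mul_const ((‖u‖ * 3) ^ 2)).mono' ?_ ?_
  · exact ((q.psi_meas.comp measurable_prodMk_left).mul
      (by fun_prop : Continuous fun v : V3 => ⟪u, v⟫ ^ 2).measurable).aestronglyMeasurable
  · refine Eventually.of_forall fun v => ?_
    by_cases hS : Sf Y (x, v) < 1
    · rw [norm_mul, Real.norm_of_nonneg (q.psi_nonneg _)]
      apply mul_le_mul_of_nonneg_left _ (q.psi_nonneg _)
      rw [norm_pow]
      have : ‖⟪u, v⟫‖ ≤ ‖u‖ * ‖v‖ := norm_inner_le_norm _ _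
      have h3 := (q.norm_lt3 hS).le
      gcongr
      exact this.trans (by gcongr)
    · rw [q.psi_zero (not_lt.1 hS)]; simp

/-- `∫ |φ'| w² dv` in terms of the macroscopic quantities of the steady state. -/
lemma psi_w2 {x : V3} (hx : x ≠ 0) (h : 0 < Y ‖x‖) : ∫ v, psi φ Y (x, v) * wfun (x, v) ^ 2 =
    Real.exp (Y ‖x‖) * (gEV φ (Y ‖x‖) + hEV φ (Y ‖x‖)) := by
  have h4 := q.psi_v4 x h
  have hu : ‖(‖x‖⁻¹ • x : V3)‖ = 1 := by
    rw [norm_smul, norm_inv, norm_norm, inv_mul_cancel₀ (norm_ne_zero_iff.2 hx)]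
  have h5 := isotropic (f := fun t => deriv φ (1 - Real.exp (-Y ‖x‖) * Real.sqrt (1 + t ^ 2)))
    (fun u => q.psi_w2_int x u) hu
  have h6 : ∀ v, wfun (x, v) = ⟪(‖x‖⁻¹ • x : V3), v⟫ := fun v => by
    rw [real_inner_smul_left, wfun, inv_mul_eq_div]
  simp only [h6]
  have h7 : ∫ v, psi φ Y (x, v) * ‖v‖ ^ 2 = 3 * ∫ v, psi φ Y (x, v) *
    ⟪(‖x‖⁻¹ • x : V3), v⟫ ^ 2 := h5
  linarith

variable {h : V3 × V3 → ℝ} {C : ℝ} (g : Gen Y h C)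
include g

lemma h_le {z : V3 × V3} (hz : z ∈ Dp Y) : |h z| ≤ C * 3 := by
  refine (g.bw z hz).trans ?_
  have h1 := q.norm_lt3 hz.2
  have h2 := wfun_le z
  have := g.C0
  gcongr; linarith

lemma h_aem : AEMeasurable h (volume.restrict (Dp Y)) :=
  g.c1.continuousOn.aemeasurable q.Dp_open.measurableSet

lemma tau_aem : AEMeasurable (fun z => fderiv ℝ h z (X Y z)) (volume.restrict (Dp Y)) := by
  have hc : ContinuousOn (fderiv ℝ h) (Dp Y) :=
    g.c1.continuousOn_fderiv_of_isOpen q.Dp_open le_rfl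
  simp only [X_split, map_sub, map_smul, smul_eq_mul]
  have c1 : ContinuousOn (fun z : V3 × V3 => fderiv ℝ h z (z.2, 0)) (Dp Y) :=
    hc.clm_apply (by fun_prop)
  have c2 : ContinuousOn (fun z : V3 × V3 => fderiv ℝ h z (0, z.1)) (Dp Y) :=
    hc.clm_apply (by fun_prop)
  exact (q.X_meas.1.aemeasurable.mul (c1.aemeasurable q.Dp_open.measurableSet)).sub
    (q.X_meas.2.aemeasurable.mul (c2.aemeasurable q.Dp_open.measurableSet))

lemma quot_aem : AEMeasurable (fun z => h z / ip z) (volume.restrict (Dp Y)) :=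
  (q.h_aem g).div (continuous_fst.inner continuous_snd).measurable.aemeasurable

omit g in
lemma G_meas : Measurable (Gf Y) := by
  unfold Gf
  have h1 : Measurable fun z : V3 × V3 => Real.exp (-Y ‖z.1‖) :=
    (Real.continuous_exp.comp (q.Ycont.comp continuous_fst).neg).measurable
  have h2 : Measurable fun z : V3 × V3 => deriv Y ‖z.1‖ :=
    (measurable_deriv Y).comp measurable_fst.norm
  have h3 := q.Sf_cont.measurable
  exact (h3.sub ((h1.pow_const 2).div h3)).add ((measurable_fst.norm.mul h2).mul h3)

omit g in
lemma Q_meas : Measurable (Qf Y) := by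
  unfold Qf
  have h1 : Measurable fun z : V3 × V3 => Real.exp (-Y ‖z.1‖) :=
    (Real.continuous_exp.comp (q.Ycont.comp continuous_fst).neg).measurable
  have h2 : Measurable fun z : V3 × V3 => deriv Y ‖z.1‖ :=
    (measurable_deriv Y).comp measurable_fst.norm
  have h3 : Measurable fun z : V3 × V3 => deriv (deriv Y) ‖z.1‖ :=
    (measurable_deriv (deriv Y)).comp measurable_fst.norm
  have h4 : Measurable fun z : V3 × V3 => jap z.2 := (jap_cont.comp continuous_snd).measurable
  have h5 : Measurable fun z : V3 × V3 => ‖z.1‖ := measurable_fst.norm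
  exact (h1.pow_const 2).mul ((h3.neg.sub (h2.div h5)).sub
    (((h2.const_mul 2).div h5).div (h4.pow_const 2)))

omit g in
/-- Bounded measurable phase-space functions are integrable against `|φ'|`. -/
lemma integ_b {F : V3 × V3 → ℝ} (hF : AEMeasurable F (volume.restrict (Dp Y))) {B : ℝ}
    (hB : ∀ z ∈ Dp Y, |F z| ≤ B) : Integrable (fun z => psi φ Y z * F z) := by
  refine q.integ hF (C := |B|) fun z hz => (hB z hz).trans ((le_abs_self B).trans ?_)
  have : 0 ≤ 1 / ‖z.1‖ ^ 2 := by positivity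
  nlinarith [abs_nonneg B]

lemma int_hh : Integrable (fun z => psi φ Y z * h z ^ 2) :=
  q.integ_b ((q.h_aem g).pow_const 2) (B := (C * 3) ^ 2) fun z hz => by
    rw [abs_pow]; have := q.h_le g hz; gcongr

lemma int_hw : Integrable (fun z => psi φ Y z * (h z * wfun z)) :=
  q.integ_b ((q.h_aem g).mul wfun_meas.aemeasurable) (B := (C * 3) * 3) fun z hz => by
    rw [abs_mul]; have := q.h_le g hz
    have h2 := (wfun_le z).trans (q.norm_lt3 hz.2).le
    have := g.C0
    gcongr

omit g in
lemma int_ww : Integrable (fun z => psi φ Y z * wfun z ^ 2) :=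
  q.integ_b (wfun_meas.pow_const 2).aemeasurable (B := 3 ^ 2) fun z hz => by
    rw [abs_pow]; have h2 := (wfun_le z).trans (q.norm_lt3 hz.2).le; gcongr

/-- Cauchy–Schwarz for the `v`-average defining `λ_h`. -/
lemma cs : ∀ᵐ x : V3, (∫ v, psi φ Y (x, v) * h (x, v) * wfun (x, v)) ^ 2 ≤
    (∫ v, psi φ Y (x, v) * h (x, v) ^ 2) * ∫ v, psi φ Y (x, v) * wfun (x, v) ^ 2 := by
  filter_upwards [(q.int_hh g).prod_right_ae, (q.int_hw g).prod_right_ae,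
    (q.int_ww).prod_right_ae] with x h1 h2 h3
  have key : ∀ t : ℝ, 0 ≤ (∫ v, psi φ Y (x, v) * wfun (x, v) ^ 2) * (t * t) +
      (-2 * ∫ v, psi φ Y (x, v) * (h (x, v) * wfun (x, v))) * t +
      ∫ v, psi φ Y (x, v) * h (x, v) ^ 2 := by
    intro t
    have : 0 ≤ ∫ v, (psi φ Y (x, v) * wfun (x, v) ^ 2 * (t * t) +
      psi φ Y (x, v) * (h (x, v) * wfun (x, v)) * (-2 * t) + psi φ Y (x, v) * h (x, v) ^ 2) := by
      apply integral_nonneg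
      intro v
      have := mul_nonneg (q.psi_nonneg (x, v)) (sq_nonneg (h (x, v) - t * wfun (x, v)))
      simp only [Pi.zero_apply]
      nlinarith
    have e1 := integral_add ((h3.mul_const (t * t)).add (h2.mul_const (-2 * t))) h1
    have e2 := integral_add (h3.mul_const (t * t)) (h2.mul_const (-2 * t))
    simp only [Pi.add_apply] at e1
    rw [e1, e2, integral_mul_const, integral_mul_const] at this
    linarith
  have := discrim_le_zero key
  unfold discrim at this
  simp only [mul_assoc] at this ⊢
  nlinarith

variable {lf : ℝ → ℝ} (hl : Measurable fun x : V3 => lf ‖x‖)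
  (hl2 : ∀ r, 0 < r → 0 < Y r → 1 / 2 ≤ Real.exp (-lf r))

include hl in
lemma Lam_aem : AEMeasurable (fun z : V3 × V3 => Lam φ Y lf h z.1) := by
  have h1 : AEStronglyMeasurable (fun x : V3 => ∫ v, psi φ Y (x, v) * h (x, v) * wfun (x, v)) := by
    refine AEStronglyMeasurable.integral_prod_right'
      (f := fun z => psi φ Y z * h z * wfun z) (μ := volume) (ν := volume) ?_
    have := (q.int_hw g).aestronglyMeasurable
    simp only [← mul_assoc] at this
    exact this
  have h2 : Measurable fun x : V3 => 4 * Real.pi * ‖x‖ *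
      (Real.exp (-Y ‖x‖) / Real.exp (-lf ‖x‖)) :=
    (measurable_norm.const_mul _).mul
      ((Real.continuous_exp.comp q.Ycont.neg).measurable.div hl.neg.exp)
  exact ((h2.aemeasurable.mul h1.aemeasurable).neg).comp_quasiMeasurePreserving
    Measure.quasiMeasurePreserving_fst

include hl2 in
/-- `λ_h = O(r)`, so `λ_h/r` is bounded and the integrals involving it converge. -/
lemma Lam_bdd : ∃ B, 0 ≤ B ∧ ∀ z ∈ Dp Y, |Lam φ Y lf h z.1| ≤ B * ‖z.1‖ := by
  have hC := g.C0
  have hφ1 := q.hp.nonneg 1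
  refine ⟨4 * Real.pi * 2 * (4 * Real.pi * (27 * φ 1) * (C * 3 * 3)), by positivity,
    fun z hz => ?_⟩
  have hx := norm_pos_iff.2 hz.1
  have hY := Y_pos hz.2
  have h1 : |∫ v, psi φ Y (z.1, v) * h (z.1, v) * wfun (z.1, v)| ≤
      4 * Real.pi * (27 * φ 1) * (C * 3 * 3) := by
    rw [← Real.norm_eq_abs]
    refine (norm_integral_le_of_norm_le ((q.psi_v_int z.1).mul_const (C * 3 * 3))
      (Eventually.of_forall fun v => ?_)).trans ?_
    · by_cases hS : Sf Y (z.1, v) < 1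
      · have hD : (z.1, v) ∈ Dp Y := ⟨hz.1, hS⟩
        rw [norm_mul, norm_mul, Real.norm_of_nonneg (q.psi_nonneg _), mul_assoc]
        apply mul_le_mul_of_nonneg_left _ (q.psi_nonneg _)
        have a1 := q.h_le g hD
        have a2 := (wfun_le (z.1, v)).trans (q.norm_lt3 hS).le
        rw [Real.norm_eq_abs, Real.norm_eq_abs]
        gcongr
      · rw [q.psi_zero (not_lt.1 hS)]; simp
    · rw [integral_mul_const]
      have := q.psi_v_le z.1
      gcongr
  have h2 : Real.exp (-Y ‖z.1‖) / Real.exp (-lf ‖z.1‖) ≤ 2 := by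
    rw [div_le_iff₀ (Real.exp_pos _)]
    have := hl2 _ hx hY
    have : Real.exp (-Y ‖z.1‖) < 1 := Real.exp_lt_one_iff.2 (by linarith)
    linarith
  have h3 : 0 < Real.exp (-Y ‖z.1‖) / Real.exp (-lf ‖z.1‖) := by positivity
  unfold Lam
  rw [abs_neg, abs_mul, abs_of_nonneg (by positivity)]
  calc _ ≤ 4 * Real.pi * ‖z.1‖ * 2 * (4 * Real.pi * (27 * φ 1) * (C * 3 * 3)) := by gcongr
    _ = _ := by ring

/-- The metric perturbation is controlled by the `L²` density of `h`. -/
lemma Lam_sq : ∀ᵐ x : V3, 0 < Y ‖x‖ → Lam φ Y lf h x ^ 2 ≤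
    16 * Real.pi ^ 2 * ‖x‖ ^ 2 * Real.exp (-Y ‖x‖) / Real.exp (-lf ‖x‖) ^ 2 *
      (gEV φ (Y ‖x‖) + hEV φ (Y ‖x‖)) * ∫ v, psi φ Y (x, v) * h (x, v) ^ 2 := by
  have h0 : ∀ᵐ x : V3, x ≠ 0 := by rw [ae_iff]; simp
  filter_upwards [q.cs g, h0] with x h1 hx hY
  rw [q.psi_w2 hx hY] at h1
  have e : Real.exp (-Y ‖x‖) * Real.exp (Y ‖x‖) = 1 := by rw [← Real.exp_add]; simp
  unfold Lam
  have hb := Real.exp_pos (-lf ‖x‖)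
  have hs := Real.exp_pos (-Y ‖x‖)
  set I := ∫ v, psi φ Y (x, v) * h (x, v) * wfun (x, v)
  set s := Real.exp (-Y ‖x‖)
  set b := Real.exp (-lf ‖x‖)
  set H := ∫ v, psi φ Y (x, v) * h (x, v) ^ 2
  calc _ = 16 * Real.pi ^ 2 * ‖x‖ ^ 2 * s ^ 2 / b ^ 2 * I ^ 2 := by ring
    _ ≤ 16 * Real.pi ^ 2 * ‖x‖ ^ 2 * s ^ 2 / b ^ 2 *
      (H * (Real.exp (Y ‖x‖) * (gEV φ (Y ‖x‖) + hEV φ (Y ‖x‖)))) := by gcongr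
    _ = 16 * Real.pi ^ 2 * ‖x‖ ^ 2 * s / b ^ 2 * (s * Real.exp (Y ‖x‖)) *
      (gEV φ (Y ‖x‖) + hEV φ (Y ‖x‖)) * H := by ring
    _ = _ := by rw [e, mul_one]

end Qual
end field

/-! ### Pointwise estimates at small redshift -/

/-- The small-redshift regime: quantitative bounds on the steady state together with the
smallness of `κ`; `e^{-λ}` is within `Mκ` of `1` inside the support. -/
structure Regime (φ : ℝ → ℝ) (κ M c N : ℝ) (Y : ℝ → ℝ) (yinf : ℝ) (lf : ℝ → ℝ) : Prop where
  sb : SteadyBounds φ κ M c N Y yinf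
  κ0 : 0 < κ
  κ1 : κ ≤ 1 / 60
  M1 : 1 ≤ M
  Mκ : M * κ ≤ 1 / 2
  N0 : 0 < N
  c0 : 0 < c
  lm : Measurable fun x : V3 => lf ‖x‖
  lb : ∀ r, 0 < r → 0 < Y r → 1 - M * κ ≤ Real.exp (-lf r) ∧ Real.exp (-lf r) ≤ 1

/-- The metric part `s λ_h w² / (e^{-λ}⟨v⟩)` of the perturbation `f_h`. -/
def cf (φ Y lf : ℝ → ℝ) (h : V3 × V3 → ℝ) (z : V3 × V3) : ℝ :=
  Real.exp (-Y ‖z.1‖) * Lam φ Y lf h z.1 * wfun z ^ 2 / (Real.exp (-lf ‖z.1‖) * jap z.2)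

namespace Regime
variable {φ Y lf : ℝ → ℝ} {κ M c N yinf : ℝ} (S : Regime φ κ M c N Y yinf lf)
include S

lemma lb2 : ∀ r, 0 < r → 0 < Y r → 1 / 2 ≤ Real.exp (-lf r) := fun r h1 h2 => by
  linarith [(S.lb r h1 h2).1, S.Mκ]

lemma jap2 {z : V3 × V3} (hz : z ∈ Dp Y) : jap z.2 ^ 2 ≤ 1 + 4 * κ := by
  have h1 := Qual.jap_lt hz.2
  have h2 : Real.exp (Y ‖z.1‖) ≤ Real.exp κ := Real.exp_le_exp.2 (S.sb.Y_le _ (norm_nonneg _))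
  have h3 : Real.exp κ * Real.exp κ = Real.exp (2 * κ) := by rw [← Real.exp_add]; ring_nf
  have h4 : Real.exp (2 * κ) * (1 - 2 * κ) ≤ 1 := by
    have := Real.one_sub_le_exp_neg (2 * κ)
    calc _ ≤ Real.exp (2 * κ) * Real.exp (-(2 * κ)) := by gcongr
      _ = 1 := by rw [← Real.exp_add]; simp
  have h5 : jap z.2 ^ 2 ≤ Real.exp (2 * κ) := by
    rw [← h3, sq]; have := jap_pos z.2; gcongr <;> linarith
  have := S.κ0
  have := S.κ1
  have h6 : Real.exp (2 * κ) ≤ 1 + 4 * κ := by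
    by_contra hc
    rw [not_le] at hc
    nlinarith
  linarith

/-- Velocities in the support are of order `√κ`. -/
lemma v2 {z : V3 × V3} (hz : z ∈ Dp Y) : ‖z.2‖ ^ 2 ≤ 4 * κ := by
  have := S.jap2 hz
  rw [jap_sq] at this; linarith

lemma s_mem {z : V3 × V3} (hz : z ∈ Dp Y) : 1 / 2 ≤ Real.exp (-Y ‖z.1‖) ^ 2 ∧
    Real.exp (-Y ‖z.1‖) < 1 := by
  have hY := Qual.Y_pos hz.2
  refine ⟨?_, Real.exp_lt_one_iff.2 (by linarith)⟩
  have h1 := S.sb.Y_le _ (norm_nonneg z.1)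
  have h2 := Real.one_sub_le_exp_neg (Y ‖z.1‖)
  have := S.κ1
  nlinarith

/-- `G` is of size `κ`. -/
lemma G_le {z : V3 × V3} (hz : z ∈ Dp Y) : |Gf Y z| ≤ 5 * M * κ := by
  have hr := norm_pos_iff.2 hz.1
  have hY := Qual.Y_pos hz.2
  have hv := S.v2 hz
  obtain ⟨-, s1⟩ := S.s_mem hz
  have s0 := Real.exp_pos (-Y ‖z.1‖)
  have hS1 := hz.2
  have hS0 : 0 < Sf Y z := mul_pos s0 (jap_pos _)
  have m1 := S.sb.mu'_nonneg _ hr hY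
  have m2 := S.sb.mu'_le _ hr hY
  have e : Sf Y z - Real.exp (-Y ‖z.1‖) ^ 2 / Sf Y z =
      Real.exp (-Y ‖z.1‖) * ‖z.2‖ ^ 2 / jap z.2 := by
    have := jap_sq z.2
    have := jap_pos z.2
    unfold Sf
    field_simp
    linarith
  have u1 : Real.exp (-Y ‖z.1‖) * ‖z.2‖ ^ 2 / jap z.2 ≤ 4 * κ := by
    rw [div_le_iff₀ (jap_pos _)]
    have := one_le_jap z.2
    have := S.κ0
    calc _ ≤ 1 * (4 * κ) := by gcongr
      _ ≤ _ := by nlinarith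
  have u0 : 0 ≤ Real.exp (-Y ‖z.1‖) * ‖z.2‖ ^ 2 / jap z.2 := by
    have := jap_pos z.2; positivity
  have w0 : 0 ≤ -(‖z.1‖ * deriv Y ‖z.1‖) := by nlinarith
  unfold Gf
  rw [e, abs_le]
  have := S.κ0
  have := S.M1
  constructor <;> nlinarith

/-- The potential `Q` exceeds the density term by a positive multiple of the mean density. -/
lemma Q_ge {z : V3 × V3} (hz : z ∈ Dp Y) :
    4 * Real.pi * Real.exp (-Y ‖z.1‖) ^ 2 * gEV φ (Y ‖z.1‖) + c / 4 * N - M * κ * N ≤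
      Qf Y z := by
  have hr := norm_pos_iff.2 hz.1
  have hY := Qual.Y_pos hz.2
  obtain ⟨s2, s1⟩ := S.s_mem hz
  have s0 := Real.exp_pos (-Y ‖z.1‖)
  have m1 := S.sb.mu''_ge _ hr hY
  have m2 := S.sb.mu'_ge _ hr hY
  have hj := S.jap2 hz
  have hj0 := jap_pos z.2
  have hκ0 := S.κ0
  have hκ1 := S.κ1
  have hM := S.M1
  have hN := S.N0
  have hc := S.c0
  unfold Qf
  set s := Real.exp (-Y ‖z.1‖)
  set ν := -deriv Y ‖z.1‖ / ‖z.1‖ with hν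
  have hν1 : c * N ≤ ν := by rw [hν, le_div_iff₀ hr]; exact m2
  have e : -(deriv (deriv Y) ‖z.1‖) - deriv Y ‖z.1‖ / ‖z.1‖ -
      2 * deriv Y ‖z.1‖ / ‖z.1‖ / jap z.2 ^ 2 =
      -(deriv (deriv Y) ‖z.1‖ + 2 * deriv Y ‖z.1‖ / ‖z.1‖) + ν * (2 / jap z.2 ^ 2 - 1) := by
    rw [hν]; field_simp; ring
  have hj2 : 1 / 2 ≤ 2 / jap z.2 ^ 2 - 1 := by
    rw [le_sub_iff_add_le, le_div_iff₀ (by positivity)]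
    nlinarith
  rw [e]
  have h1 : c * N * (1 / 2) ≤ ν * (2 / jap z.2 ^ 2 - 1) := by
    have : 0 < c * N := by positivity
    exact mul_le_mul hν1 hj2 (by norm_num) (by linarith)
  have h2 : s ^ 2 * (4 * Real.pi * gEV φ (Y ‖z.1‖) - M * κ * N + c * N * (1 / 2)) ≤
    s ^ 2 * (-(deriv (deriv Y) ‖z.1‖ + 2 * deriv Y ‖z.1‖ / ‖z.1‖) +
      ν * (2 / jap z.2 ^ 2 - 1)) := by
    apply mul_le_mul_of_nonneg_left _ (by positivity)
    linarith
  have h3 : s ^ 2 ≤ 1 := by nlinarith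
  have h4 : 0 < c * N := by positivity
  have h5 : 0 < M * κ * N := by positivity
  nlinarith

/-- The cross terms involving the metric perturbation are small. -/
lemma err_ge {h : V3 × V3 → ℝ} {C : ℝ} (g : Gen Y h C) {z : V3 × V3} (hz : z ∈ Dp Y) :
    -(26 * M * κ * (N * h z ^ 2 + wfun z ^ 2 * ((Lam φ Y lf h z.1 / ‖z.1‖) ^ 2 / N))) ≤
      2 * (h z / ip z) * Gf Y z * cf φ Y lf h z - cf φ Y lf h z ^ 2 := by
  have hr := norm_pos_iff.2 hz.1
  have hY := Qual.Y_pos hz.2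
  obtain ⟨-, s1⟩ := S.s_mem hz
  have s0 := Real.exp_pos (-Y ‖z.1‖)
  have b0 := Real.exp_pos (-lf ‖z.1‖)
  have b2 := S.lb2 _ hr hY
  have hj := one_le_jap z.2
  have hG := S.G_le hz
  have hκ0 := S.κ0
  have hM := S.M1
  have hN := S.N0
  have hr2 := S.sb.r2_le _ hr hY
  have hw2 : wfun z ^ 2 ≤ 4 * κ := by
    refine le_trans ?_ (S.v2 hz)
    rw [← sq_abs]; have := wfun_le z; gcongr
  obtain ⟨-, hq⟩ := Qual.quot_le g hz
  rw [← ip_eq] at hq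
  unfold cf
  rw [← ip_eq]
  set L := Lam φ Y lf h z.1 / ‖z.1‖ with hL
  have hLr : Lam φ Y lf h z.1 = L * ‖z.1‖ := by rw [hL]; field_simp
  rw [hLr]
  set r := ‖z.1‖
  set w := wfun z
  set qq := h z / (r * w)
  set k := Real.exp (-Y r) / (Real.exp (-lf r) * jap z.2) with hk
  have hk0 : 0 ≤ k := by have := jap_pos z.2; positivity
  have hk2 : k ≤ 2 := by
    rw [hk, div_le_iff₀ (by have := jap_pos z.2; positivity)]
    nlinarith
  have ec : Real.exp (-Y r) * (L * r) * w ^ 2 / (Real.exp (-lf r) * jap z.2) =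
      k * (L * r * w ^ 2) := by rw [hk]; ring
  rw [ec]
  have e1 : 2 * qq * Gf Y z * (k * (L * r * w ^ 2)) = 2 * k * Gf Y z * (h z * (w * L)) := by
    rw [hq]; ring
  rw [e1]
  -- weighted arithmetic-geometric mean inequality, with weight `N`
  have hAG : 2 * |h z * (w * L)| ≤ N * h z ^ 2 + w ^ 2 * (L ^ 2 / N) := by
    have h1 : w ^ 2 * (L ^ 2 / N) = (|w * L|) ^ 2 / N := by rw [sq_abs]; ring
    rw [h1, abs_mul, ← sq_abs (h z)]
    have h2 : 0 ≤ (N * |h z| - |w * L|) ^ 2 / N := by positivity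
    have h3 : (N * |h z| - |w * L|) ^ 2 / N =
      N * |h z| ^ 2 + |w * L| ^ 2 / N - 2 * (|h z| * |w * L|) := by field_simp; ring
    linarith
  set T := N * h z ^ 2 + w ^ 2 * (L ^ 2 / N) with hT
  have hA : |2 * k * Gf Y z * (h z * (w * L))| ≤ 10 * M * κ * T := by
    rw [abs_mul, abs_mul, abs_mul, abs_two, abs_of_nonneg hk0]
    calc 2 * k * |Gf Y z| * |h z * (w * L)| ≤ 2 * 2 * (5 * M * κ) * |h z * (w * L)| := by gcongr
      _ = 10 * M * κ * (2 * |h z * (w * L)|) := by ring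
      _ ≤ _ := by gcongr
  have hB : (k * (L * r * w ^ 2)) ^ 2 ≤ 16 * M * κ * T := by
    have h1 : r ^ 2 ≤ M * κ / N := by rw [le_div_iff₀ hN]; linarith
    calc (k * (L * r * w ^ 2)) ^ 2 = k ^ 2 * (L ^ 2 * w ^ 2) * r ^ 2 * w ^ 2 := by ring
      _ ≤ 2 ^ 2 * (L ^ 2 * w ^ 2) * (M * κ / N) * (4 * κ) := by gcongr
      _ = 16 * M * κ * (w ^ 2 * (L ^ 2 / N)) * κ := by ring
      _ ≤ 16 * M * κ * T * 1 := by
        have : 0 ≤ w ^ 2 * (L ^ 2 / N) := by positivity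
        have : 0 ≤ N * h z ^ 2 := by positivity
        have := S.κ1
        gcongr <;> linarith
      _ = _ := by ring
  have := (abs_le.1 hA).1
  linarith

/-- Completing squares: the first integrand of the quadratic form from below. -/
lemma first_ge {h : V3 × V3 → ℝ} {C : ℝ} (g : Gen Y h C) {z : V3 × V3} (hz : z ∈ Dp Y) (τ : ℝ) :
    (1 - M * κ) * (1 / 2 * (τ - h z / ip z * Gf Y z) ^ 2 + (2 * τ * (h z / ip z) * Gf Y z -
      (h z / ip z) ^ 2 * Gf Y z ^ 2 - h z ^ 2 * Qf Y z) + h z ^ 2 * Qf Y z -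
      26 * M * κ * (N * h z ^ 2 + wfun z ^ 2 * ((Lam φ Y lf h z.1 / ‖z.1‖) ^ 2 / N))) ≤
    Real.exp (-lf ‖z.1‖) * (τ + cf φ Y lf h z) ^ 2 := by
  have hr := norm_pos_iff.2 hz.1
  have hY := Qual.Y_pos hz.2
  have h1 := S.err_ge g hz
  have h2 := (S.lb _ hr hY).1
  have h3 := S.Mκ
  set T := 26 * M * κ * (N * h z ^ 2 + wfun z ^ 2 * ((Lam φ Y lf h z.1 / ‖z.1‖) ^ 2 / N))
  set qq := h z / ip z
  set G := Gf Y z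
  set d := cf φ Y lf h z
  have h4 : 1 / 2 * (τ - qq * G) ^ 2 + (2 * τ * qq * G - qq ^ 2 * G ^ 2 - h z ^ 2 * Qf Y z) +
      h z ^ 2 * Qf Y z - T ≤ (τ + d) ^ 2 := by
    nlinarith [sq_nonneg (τ - qq * G + 2 * d)]
  calc _ ≤ (1 - M * κ) * (τ + d) ^ 2 := by
        apply mul_le_mul_of_nonneg_left h4; linarith
    _ ≤ _ := by gcongr

/-- The density term of the quadratic form is dominated by the potential `Q`. -/
lemma dens_le {z : V3 × V3} (hz : z ∈ Dp Y) :
    4 * Real.pi * Real.exp (-Y ‖z.1‖) ^ 2 * gEV φ (Y ‖z.1‖) + 160 * M ^ 2 * κ * N ≤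
    (1 - M * κ) * Qf Y z - c / 8 * N + 200 * M ^ 2 * κ * N := by
  have h1 := S.Q_ge hz
  have h2 := S.Mκ
  have hκ0 := S.κ0
  have hM := S.M1
  have hN := S.N0
  have hc := S.c0
  obtain ⟨s2, s1⟩ := S.s_mem hz
  have s0 := Real.exp_pos (-Y ‖z.1‖)
  have g1 := S.sb.g_le _ (S.sb.Y_le _ (norm_nonneg z.1))
  have g0 := S.sb.g_nonneg (Y ‖z.1‖)
  have hpi := Real.pi_pos
  have hpi4 := Real.pi_le_four
  set s := Real.exp (-Y ‖z.1‖)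
  set G := gEV φ (Y ‖z.1‖)
  have h3 : (1 - M * κ) * (4 * Real.pi * s ^ 2 * G + c / 4 * N - M * κ * N) ≤
    (1 - M * κ) * Qf Y z := mul_le_mul_of_nonneg_left h1 (by linarith)
  have h4 : 4 * Real.pi * s ^ 2 * G ≤ 16 * (M * N) := by
    have : s ^ 2 ≤ 1 := by nlinarith
    calc 4 * Real.pi * s ^ 2 * G ≤ 4 * 4 * 1 * (M * N) := by gcongr
      _ = _ := by ring
  have h5 : M * κ * (4 * Real.pi * s ^ 2 * G) ≤ M * κ * (16 * (M * N)) := by gcongr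
  have h6 : 0 < c * N := by positivity
  have h7 : 0 < M * κ * N := by positivity
  have h8 : M * κ * N ≤ M ^ 2 * κ * N := by
    have : M ≤ M ^ 2 := by nlinarith
    gcongr
  nlinarith

variable {h : V3 × V3 → ℝ} {C : ℝ} (q : Qual φ Y) (g : Gen Y h C)
include q g

/-- The second term of the quadratic form, as an integrand over physical space. -/
lemma second_le : ∀ᵐ x : V3, 0 < Y ‖x‖ →
    Real.exp (-Y ‖x‖) * Real.exp (-lf ‖x‖) * (1 - 2 * ‖x‖ * deriv Y ‖x‖) *
      Lam φ Y lf h x ^ 2 / (4 * Real.pi * ‖x‖ ^ 2) ≤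
    (4 * Real.pi * Real.exp (-Y ‖x‖) ^ 2 * gEV φ (Y ‖x‖) + 160 * M ^ 2 * κ * N) *
      ∫ v, psi φ Y (x, v) * h (x, v) ^ 2 := by
  have h0 : ∀ᵐ x : V3, x ≠ 0 := by rw [ae_iff]; simp
  filter_upwards [q.Lam_sq g (lf := lf), h0] with x h1 hx hY
  have h1 := h1 hY
  have hr := norm_pos_iff.2 hx
  have hH : 0 ≤ ∫ v, psi φ Y (x, v) * h (x, v) ^ 2 :=
    integral_nonneg fun v => mul_nonneg (q.psi_nonneg _) (sq_nonneg _)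
  have hκ0 := S.κ0
  have hM := S.M1
  have hN := S.N0
  have hMκ := S.Mκ
  have s0 := Real.exp_pos (-Y ‖x‖)
  have s1 : Real.exp (-Y ‖x‖) < 1 := Real.exp_lt_one_iff.2 (by linarith)
  have b0 := Real.exp_pos (-lf ‖x‖)
  obtain ⟨b1, b2⟩ := S.lb _ hr hY
  have m1 := S.sb.mu'_nonneg _ hr hY
  have m2 := S.sb.mu'_le _ hr hY
  have g1 := S.sb.g_le _ (S.sb.Y_le _ hr.le)
  have g2 := S.sb.h_le _ (S.sb.Y_le _ hr.le)
  have g0 := S.sb.g_nonneg (Y ‖x‖)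
  have g0' := S.sb.h_nonneg (Y ‖x‖)
  have hpi := Real.pi_pos
  have hpi4 := Real.pi_le_four
  set H := ∫ v, psi φ Y (x, v) * h (x, v) ^ 2
  set s := Real.exp (-Y ‖x‖)
  set b := Real.exp (-lf ‖x‖)
  set D := gEV φ (Y ‖x‖)
  set P := hEV φ (Y ‖x‖)
  set L := Lam φ Y lf h x
  set r := ‖x‖
  have e1 : 1 - 2 * r * deriv Y r ≤ 1 + 2 * (M * κ) := by linarith
  have e0 : 0 ≤ 1 - 2 * r * deriv Y r := by nlinarith
  have e2 : 1 / b ≤ 1 + 2 * (M * κ) := by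
    rw [div_le_iff₀ b0]
    have : 0 < M * κ := by positivity
    nlinarith
  set t := M * κ with ht
  have ht0 : 0 < t := by positivity
  have e3 : (1 + 2 * t) * (1 + 2 * t) ≤ 1 + 6 * t := by nlinarith
  calc _ ≤ s * b * (1 + 2 * t) * (16 * Real.pi ^ 2 * r ^ 2 * s / b ^ 2 * (D + P) * H) /
        (4 * Real.pi * r ^ 2) := by gcongr
    _ = 4 * Real.pi * s ^ 2 * ((1 / b) * (1 + 2 * t)) * (D + P) * H := by field_simp; ring
    _ ≤ 4 * Real.pi * s ^ 2 * (1 + 6 * t) * (D + P) * H := by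
        have : (1 / b) * (1 + 2 * t) ≤ 1 + 6 * t := le_trans (by gcongr) e3
        gcongr
    _ ≤ _ := by
        apply mul_le_mul_of_nonneg_right _ hH
        have f1 : 4 * Real.pi * s ^ 2 ≤ 16 := by
          have : s ^ 2 ≤ 1 := by nlinarith
          calc 4 * Real.pi * s ^ 2 ≤ 4 * 4 * 1 := by gcongr
            _ = _ := by ring
        have f2 : 6 * t * D + (1 + 6 * t) * P ≤ 10 * M ^ 2 * κ * N := by
          have a1 : t * D ≤ t * (M * N) := by gcongr
          have a2 : (1 + 6 * t) * P ≤ 4 * (t * N) := by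
            have : 1 + 6 * t ≤ 4 := by linarith
            gcongr
          have a3 : t * N ≤ M ^ 2 * κ * N := by
            rw [ht]; have : M ≤ M ^ 2 := by nlinarith
            gcongr
          rw [ht] at *
          nlinarith
        have f3 : 0 ≤ 6 * t * D + (1 + 6 * t) * P := by positivity
        have f4 : 4 * Real.pi * s ^ 2 * (6 * t * D + (1 + 6 * t) * P) ≤
          16 * (10 * M ^ 2 * κ * N) := by gcongr
        linarith

/-- The weighted `w²`-moment of the metric perturbation. -/
lemma moment_le : ∀ᵐ x : V3, 0 < Y ‖x‖ →
    (Lam φ Y lf h x / ‖x‖) ^ 2 / N * (∫ v, psi φ Y (x, v) * wfun (x, v) ^ 2) ≤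
    4096 * M ^ 2 * N * ∫ v, psi φ Y (x, v) * h (x, v) ^ 2 := by
  have h0 : ∀ᵐ x : V3, x ≠ 0 := by rw [ae_iff]; simp
  filter_upwards [q.Lam_sq g (lf := lf), h0] with x h1 hx hY
  have h1 := h1 hY
  have hr := norm_pos_iff.2 hx
  rw [q.psi_w2 hx hY]
  have hH : 0 ≤ ∫ v, psi φ Y (x, v) * h (x, v) ^ 2 :=
    integral_nonneg fun v => mul_nonneg (q.psi_nonneg _) (sq_nonneg _)
  have hκ0 := S.κ0
  have hκ1 := S.κ1
  have hM := S.M1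
  have hN := S.N0
  have b2 := S.lb2 _ hr hY
  have g1 := S.sb.g_le _ (S.sb.Y_le _ hr.le)
  have g2 := S.sb.h_le _ (S.sb.Y_le _ hr.le)
  have g0 := S.sb.g_nonneg (Y ‖x‖)
  have g0' := S.sb.h_nonneg (Y ‖x‖)
  have hpi := Real.pi_pos
  have hpi4 := Real.pi_le_four
  have e : Real.exp (-Y ‖x‖) * Real.exp (Y ‖x‖) = 1 := by rw [← Real.exp_add]; simp
  have b0 := Real.exp_pos (-lf ‖x‖)
  set H := ∫ v, psi φ Y (x, v) * h (x, v) ^ 2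
  set s := Real.exp (-Y ‖x‖)
  set b := Real.exp (-lf ‖x‖)
  set D := gEV φ (Y ‖x‖)
  set P := hEV φ (Y ‖x‖)
  set L := Lam φ Y lf h x
  set r := ‖x‖
  have eY := Real.exp_pos (Y r)
  have f1 : D + P ≤ 2 * M * N := by
    have : M * κ * N ≤ M * 1 * N := by gcongr; linarith
    linarith
  have f2 : 1 / b ^ 2 ≤ 4 := by
    rw [div_le_iff₀ (by positivity)]; nlinarith
  calc (L / r) ^ 2 / N * (Real.exp (Y r) * (D + P)) =
      L ^ 2 / r ^ 2 / N * (Real.exp (Y r) * (D + P)) := by rw [div_pow]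
    _ ≤ (16 * Real.pi ^ 2 * r ^ 2 * s / b ^ 2 * (D + P) * H) / r ^ 2 / N *
        (Real.exp (Y r) * (D + P)) := by gcongr
    _ = 16 * Real.pi ^ 2 * (s * Real.exp (Y r)) * (1 / b ^ 2) * (D + P) ^ 2 / N * H := by
        field_simp
    _ = 16 * Real.pi ^ 2 * (1 / b ^ 2) * (D + P) ^ 2 / N * H := by rw [e, mul_one]
    _ ≤ 16 * 4 ^ 2 * 4 * (2 * M * N) ^ 2 / N * H := by gcongr
    _ = _ := by field_simp; ring

end Regime

/-! ### Coercivity of the normalised quadratic form -/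

section core
variable {φ Y lf : ℝ → ℝ} {κ M c N yinf : ℝ} (S : Regime φ κ M c N Y yinf lf)
  {h : V3 × V3 → ℝ} {C : ℝ} (q : Qual φ Y) (g : Gen Y h C)

namespace Qual
include q g

/-- `{h,S} − hG/(rw)` is square integrable against `|φ'|`. -/
lemma int_W : Integrable fun z =>
    psi φ Y z * (fderiv ℝ h z (X Y z) - h z / ip z * Gf Y z) ^ 2 := by
  obtain ⟨K, hK, hb⟩ := q.bounds
  have hC := g.C0
  refine q.integ (((q.tau_aem g).sub ((q.quot_aem g).mul q.G_meas.aemeasurable)).pow_const 2)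
    (C := 2 * (C * K) ^ 2) fun z hz => ?_
  obtain ⟨b1, b2, -⟩ := hb z hz
  have b3 := tau_le g hz b1
  have b4 := (quot_le g hz).1
  have r0 : 0 ≤ 1 / ‖z.1‖ := by positivity
  rw [show 1 / ‖z.1‖ ^ 2 = (1 / ‖z.1‖) ^ 2 by rw [div_pow, one_pow], abs_pow]
  have b5 : |fderiv ℝ h z (X Y z) - h z / ip z * Gf Y z| ≤ C * K + C * (1 / ‖z.1‖) * K := by
    refine (abs_sub _ _).trans (add_le_add b3 ?_)
    rw [abs_mul]; gcongr
  calc _ ≤ (C * K + C * (1 / ‖z.1‖) * K) ^ 2 := by gcongr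
    _ = (C * K) ^ 2 * (1 + 1 / ‖z.1‖) ^ 2 := by ring
    _ ≤ (C * K) ^ 2 * (2 * (1 + (1 / ‖z.1‖) ^ 2)) := by
      gcongr; nlinarith [sq_nonneg (1 - 1 / ‖z.1‖)]
    _ = _ := by ring

lemma int_tau : Integrable fun z => psi φ Y z * (fderiv ℝ h z (X Y z)) ^ 2 := by
  obtain ⟨K, hK, hb⟩ := q.bounds
  refine q.integ_b ((q.tau_aem g).pow_const 2) (B := (C * K) ^ 2) fun z hz => ?_
  rw [abs_pow]
  have := tau_le g hz (hb z hz).1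
  gcongr

lemma int_HQ : Integrable fun z => psi φ Y z * (h z ^ 2 * Qf Y z) := by
  obtain ⟨K, hK, hb⟩ := q.bounds
  refine q.integ (((q.h_aem g).pow_const 2).mul q.Q_meas.aemeasurable)
    (C := (C * 3) ^ 2 * K) fun z hz => ?_
  rw [abs_mul, abs_pow, mul_assoc]
  have := q.h_le g hz
  have := (hb z hz).2.2
  gcongr

/-- The integrated form of `{h,S}² = (rw)²{S,h/(rw)}² + h²Q + div`. -/
lemma ibp : ∫ z, psi φ Y z * (fderiv ℝ h z (X Y z)) ^ 2 =
    (∫ z, psi φ Y z * (fderiv ℝ h z (X Y z) - h z / ip z * Gf Y z) ^ 2) +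
      ∫ z, psi φ Y z * (h z ^ 2 * Qf Y z) := by
  have h1 := q.ibp_aux g
  have h2 := integral_sub ((q.int_tau g).sub (q.int_W g)) (q.int_HQ g)
  have h3 := integral_sub (q.int_tau g) (q.int_W g)
  simp only [Pi.sub_apply] at h2
  rw [h3] at h2
  have h4 : ∀ z, psi φ Y z * (2 * fderiv ℝ h z (X Y z) * (h z / ip z) * Gf Y z -
      (h z / ip z) ^ 2 * Gf Y z ^ 2 - h z ^ 2 * Qf Y z) =
      psi φ Y z * (fderiv ℝ h z (X Y z)) ^ 2 -
        psi φ Y z * (fderiv ℝ h z (X Y z) - h z / ip z * Gf Y z) ^ 2 -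
        psi φ Y z * (h z ^ 2 * Qf Y z) := fun z => by ring
  simp only [h4] at h1
  linarith

end Qual

namespace Regime
include S q g

/-- The weighted metric perturbation is integrable. -/
lemma int_D : Integrable fun z =>
    psi φ Y z * (wfun z ^ 2 * ((Lam φ Y lf h z.1 / ‖z.1‖) ^ 2 / N)) := by
  obtain ⟨B, hB, hb⟩ := q.Lam_bdd g S.lb2
  have hN := S.N0
  refine q.integ_b ((wfun_meas.pow_const 2).aemeasurable.mul
    ((((q.Lam_aem g S.lm).restrict.div measurable_fst.norm.aemeasurable).pow_const 2).div_const N))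
    (B := 3 ^ 2 * (B ^ 2 / N)) fun z hz => ?_
  have h1 := (wfun_le z).trans (q.norm_lt3 hz.2).le
  have h2 : |Lam φ Y lf h z.1 / ‖z.1‖| ≤ B := by
    rw [abs_div, abs_norm, div_le_iff₀ (norm_pos_iff.2 hz.1)]; exact hb z hz
  rw [abs_mul, abs_div, abs_pow, abs_pow, abs_of_pos hN]
  gcongr

lemma int_first : Integrable fun z =>
    psi φ Y z * (Real.exp (-lf ‖z.1‖) * (fderiv ℝ h z (X Y z) + cf φ Y lf h z) ^ 2) := by
  obtain ⟨B, hB, hb⟩ := q.Lam_bdd g S.lb2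
  obtain ⟨K, hK, hbd⟩ := q.bounds
  obtain ⟨R, hR, hr⟩ := q.radius
  have hC := g.C0
  have mb : Measurable fun z : V3 × V3 => Real.exp (-lf ‖z.1‖) :=
    (S.lm.comp measurable_fst).neg.exp
  have ms : Measurable fun z : V3 × V3 => Real.exp (-Y ‖z.1‖) :=
    (Real.continuous_exp.comp (q.Ycont.comp continuous_fst).neg).measurable
  have mj : Measurable fun z : V3 × V3 => jap z.2 := (jap_cont.comp continuous_snd).measurable
  have mc : AEMeasurable (cf φ Y lf h) (volume.restrict (Dp Y)) :=
    ((ms.aemeasurable.mul (q.Lam_aem g S.lm).restrict).mul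
      (wfun_meas.pow_const 2).aemeasurable).div (mb.mul mj).aemeasurable
  refine q.integ_b (mb.aemeasurable.mul (((q.tau_aem g).add mc).pow_const 2))
    (B := 1 * (C * K + 1 * (B * R) * 3 ^ 2 / (1 / 2)) ^ 2) fun z hz => ?_
  have hx := norm_pos_iff.2 hz.1
  have hY := Qual.Y_pos hz.2
  have hrR := hr _ hx.le hY
  have h1 := Qual.tau_le g hz (hbd z hz).1
  have h2 := (wfun_le z).trans (q.norm_lt3 hz.2).le
  have h3 : |Lam φ Y lf h z.1| ≤ B * R := (hb z hz).trans (by gcongr)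
  have h4 := S.lb2 _ hx hY
  have h5 := (S.lb _ hx hY).2
  have h6 := (S.s_mem hz).2
  have h7 := one_le_jap z.2
  have h8 : |cf φ Y lf h z| ≤ 1 * (B * R) * 3 ^ 2 / (1 / 2) := by
    unfold cf
    rw [abs_div, abs_mul, abs_mul, abs_mul, abs_pow, Real.abs_exp, Real.abs_exp,
      abs_of_pos (jap_pos _)]
    have : 1 / 2 ≤ Real.exp (-lf ‖z.1‖) * jap z.2 := by nlinarith
    gcongr
  rw [abs_mul, Real.abs_exp, abs_pow]
  have h9 := (abs_add_le _ _).trans (add_le_add h1 h8)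
  gcongr

/-- Integrating `λ_h²/r²` against `|φ'|w²` costs one more factor of the density. -/
lemma D_le : ∫ z, psi φ Y z * (wfun z ^ 2 * ((Lam φ Y lf h z.1 / ‖z.1‖) ^ 2 / N)) ≤
    4096 * M ^ 2 * N * ∫ z, psi φ Y z * h z ^ 2 := by
  have i1 := S.int_D q g
  have i2 := q.int_hh g
  have e1 := integral_prod _ i1
  have e2 := integral_prod _ i2
  rw [Measure.volume_eq_prod, e1, e2, ← integral_const_mul]
  refine integral_mono_ae i1.integral_prod_left (i2.integral_prod_left.const_mul _) ?_
  filter_upwards [S.moment_le q g] with x hx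
  by_cases hY : 0 < Y ‖x‖
  · refine le_trans (le_of_eq ?_) (hx hY)
    rw [← integral_const_mul]
    congr 1; funext v; ring
  · simp [q.psi_fib (not_lt.1 hY)]

/-- The negative part of the quadratic form, moved to phase space. -/
lemma second_int (hsym : SphSym h) :
    ∫ r in Ioi (0 : ℝ), Real.exp (-Y r) * Real.exp (-lf r) * (1 - 2 * r * deriv Y r) *
      Lam φ Y lf h (r • e1) ^ 2 ≤
    (1 - M * κ) * (∫ z, psi φ Y z * (h z ^ 2 * Qf Y z)) -
      (c / 8 - 200 * M ^ 2 * κ) * N * ∫ z, psi φ Y z * h z ^ 2 := by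
  set Bf : ℝ → ℝ := fun r => Real.exp (-Y r) * Real.exp (-lf r) * (1 - 2 * r * deriv Y r) *
      Lam φ Y lf h (r • e1) ^ 2
  have hpi := Real.pi_pos
  have e0 : ∫ r in Ioi (0 : ℝ), Bf r = ∫ x : V3, Bf ‖x‖ / (4 * Real.pi * ‖x‖ ^ 2) := by
    rw [integral_fun_norm_addHaar volume (fun r => Bf r / (4 * Real.pi * r ^ 2)), ball_vol]
    simp only [finrank_euclideanSpace, Fintype.card_fin, nsmul_eq_mul, smul_eq_mul]
    have : ∫ r in Ioi (0 : ℝ), r ^ (3 - 1) * (Bf r / (4 * Real.pi * r ^ 2)) =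
        ∫ r in Ioi (0 : ℝ), (4 * Real.pi)⁻¹ * Bf r := by
      apply setIntegral_congr_fun measurableSet_Ioi
      intro r hr
      have : r ≠ 0 := ne_of_gt hr
      simp only [Nat.reduceSub]
      field_simp
    rw [this, integral_const_mul]
    push_cast
    field_simp
  have i1 := (q.int_HQ g).const_mul (1 - M * κ)
  have i2 := (q.int_hh g).const_mul ((c / 8 - 200 * M ^ 2 * κ) * N)
  have i3 := i1.sub i2
  have e1 := integral_sub i1 i2
  rw [integral_const_mul, integral_const_mul] at e1
  rw [e0, ← e1]
  have e2 := integral_prod _ i3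
  simp only [Pi.sub_apply] at e2
  rw [Measure.volume_eq_prod, e2]
  have h0 : ∀ᵐ x : V3, x ≠ 0 := by rw [ae_iff]; simp
  have bf : ∀ x : V3, Bf ‖x‖ = Real.exp (-Y ‖x‖) * Real.exp (-lf ‖x‖) *
      (1 - 2 * ‖x‖ * deriv Y ‖x‖) * Lam φ Y lf h x ^ 2 := fun x => by
    simp only [Bf, Lam_rot hsym]
  have lam0 : ∀ x : V3, ¬ 0 < Y ‖x‖ → Lam φ Y lf h x = 0 := fun x hx => by
    simp [Lam, q.psi_fib (not_lt.1 hx)]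
  refine integral_mono_of_nonneg ?_ i3.integral_prod_left ?_
  · filter_upwards [h0] with x hx
    rw [Pi.zero_apply, bf]
    by_cases hY : 0 < Y ‖x‖
    · have m1 := S.sb.mu'_nonneg _ (norm_pos_iff.2 hx) hY
      have : 0 ≤ 1 - 2 * ‖x‖ * deriv Y ‖x‖ := by nlinarith [norm_nonneg x]
      positivity
    · simp [lam0 x hY]
  · filter_upwards [S.second_le q g, h0, i2.prod_right_ae, i3.prod_right_ae,
      (q.int_hh g).prod_right_ae] with x hx hx0 j2 j3 j4
    simp only [bf]
    by_cases hY : 0 < Y ‖x‖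
    · refine (hx hY).trans ?_
      rw [← integral_const_mul]
      refine integral_mono (j4.const_mul _) j3 fun v => ?_
      simp only
      by_cases hS : Sf Y (x, v) < 1
      · have h1 := S.dens_le (z := (x, v)) ⟨hx0, hS⟩
        have h2 : 0 ≤ psi φ Y (x, v) * h (x, v) ^ 2 :=
          mul_nonneg (q.psi_nonneg _) (sq_nonneg _)
        have h3 := mul_le_mul_of_nonneg_right h1 h2
        simp only at h3
        linarith
      · rw [q.psi_zero (not_lt.1 hS)]; simp
    · simp [lam0 x hY, q.psi_fib (not_lt.1 hY)]

/-- The integrated form of `first_ge`, in which the divergence term drops out by `ibp`. -/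
lemma first_int :
    (1 - M * κ) * (1 / 2 * (∫ z, psi φ Y z *
        (fderiv ℝ h z (X Y z) - h z / ip z * Gf Y z) ^ 2) +
      (∫ z, psi φ Y z * (h z ^ 2 * Qf Y z)) -
      26 * M * κ * (1 + 4096 * M ^ 2) * N * ∫ z, psi φ Y z * h z ^ 2) ≤
    ∫ z, psi φ Y z * (Real.exp (-lf ‖z.1‖) * (fderiv ℝ h z (X Y z) + cf φ Y lf h z) ^ 2) := by
  have hκ0 := S.κ0
  have hM := S.M1
  have hMκ := S.Mκ
  have i1 := q.int_tau g
  have i2 := (q.int_W g).const_mul (1 / 2)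
  have i3 := (q.int_hh g).const_mul (26 * M * κ * N)
  have i4 := (S.int_D q g).const_mul (26 * M * κ)
  have i5 := ((i1.sub i2).sub i3).sub i4
  have e5 := integral_sub ((i1.sub i2).sub i3) i4
  have e4 := integral_sub (i1.sub i2) i3
  have e3 := integral_sub i1 i2
  simp only [Pi.sub_apply, integral_const_mul] at e5 e4 e3
  have main := integral_mono_ae (i5.const_mul (1 - M * κ)) (S.int_first q g) (by
    filter_upwards [Qual.null_x] with z hx
    by_cases hS : Sf Y z < 1
    · have h1 := S.first_ge g ⟨hx, hS⟩ (fderiv ℝ h z (X Y z))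
      have h2 := mul_le_mul_of_nonneg_left h1 (q.psi_nonneg z)
      simp only [Pi.sub_apply]
      linarith
    · simp [q.psi_zero (not_lt.1 hS)])
  rw [integral_const_mul] at main
  simp only [Pi.sub_apply] at main
  rw [e5, e4, e3, q.ibp g] at main
  refine le_trans (mul_le_mul_of_nonneg_left ?_ (by linarith)) main
  have h3 : 26 * M * κ * ∫ z, psi φ Y z * (wfun z ^ 2 *
      ((Lam φ Y lf h z.1 / ‖z.1‖) ^ 2 / N)) ≤
    26 * M * κ * (4096 * M ^ 2 * N * ∫ z, psi φ Y z * h z ^ 2) :=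
    mul_le_mul_of_nonneg_left (S.D_le q g) (by positivity)
  linarith

/-- The coercivity estimate in normalised form. -/
lemma core (hsym : SphSym h) (hsm : 2000000 * M ^ 3 * κ ≤ c) :
    1 / 8 * (∫ z, psi φ Y z * (fderiv ℝ h z (X Y z) - h z / ip z * Gf Y z) ^ 2) +
      c / 32 * N * (∫ z, psi φ Y z * h z ^ 2) ≤
    1 / 2 * (∫ z, psi φ Y z *
      (Real.exp (-lf ‖z.1‖) * (fderiv ℝ h z (X Y z) + cf φ Y lf h z) ^ 2)) -
    1 / 2 * ∫ r in Ioi (0 : ℝ), Real.exp (-Y r) * Real.exp (-lf r) *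
      (1 - 2 * r * deriv Y r) * Lam φ Y lf h (r • e1) ^ 2 := by
  have h1 := S.first_int q g
  have h2 := S.second_int q g hsym
  have hκ0 := S.κ0
  have hM := S.M1
  have hMκ := S.Mκ
  have hN := S.N0
  have W0 : 0 ≤ ∫ z, psi φ Y z * (fderiv ℝ h z (X Y z) - h z / ip z * Gf Y z) ^ 2 :=
    integral_nonneg fun z => mul_nonneg (q.psi_nonneg z) (sq_nonneg _)
  have H0 : 0 ≤ N * ∫ z, psi φ Y z * h z ^ 2 :=
    mul_nonneg hN.le (integral_nonneg fun z => mul_nonneg (q.psi_nonneg z) (sq_nonneg _))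
  set W := ∫ z, psi φ Y z * (fderiv ℝ h z (X Y z) - h z / ip z * Gf Y z) ^ 2
  set HQ := ∫ z, psi φ Y z * (h z ^ 2 * Qf Y z)
  set H := ∫ z, psi φ Y z * h z ^ 2
  have h3 : 1 / 2 * W ≤ (1 - M * κ) * W := by gcongr; linarith
  have m1 : M ≤ M ^ 3 := by
    nlinarith [sq_nonneg M, mul_pos (by linarith : 0 < M) (by linarith : 0 < M)]
  have m2 : M ^ 2 ≤ M ^ 3 := by
    have : 0 < M ^ 2 := by positivity
    nlinarith
  have h4 : 26 * M * κ * (1 + 4096 * M ^ 2) ≤ 110000 * (M ^ 3 * κ) := by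
    have : M * κ ≤ M ^ 3 * κ := by gcongr
    nlinarith
  have h5 : 200 * M ^ 2 * κ ≤ 200 * (M ^ 3 * κ) := by
    have : M ^ 2 * κ ≤ M ^ 3 * κ := by gcongr
    linarith
  have h6 : (1 - M * κ) * (26 * M * κ * (1 + 4096 * M ^ 2) * N * H) ≤
      110000 * (M ^ 3 * κ) * (N * H) := by
    have a1 : 0 ≤ 26 * M * κ * (1 + 4096 * M ^ 2) * (N * H) := by positivity
    have a2 : 1 - M * κ ≤ 1 := by nlinarith
    have a3 := mul_le_mul_of_nonneg_right h4 H0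
    nlinarith
  have h7 : (c / 8 - 200 * (M ^ 3 * κ)) * (N * H) ≤ (c / 8 - 200 * M ^ 2 * κ) * (N * H) :=
    mul_le_mul_of_nonneg_right (by linarith) H0
  have h8 : (c / 32) * (N * H) ≤
      (1 / 2 * (c / 8 - 200 * (M ^ 3 * κ)) - 1 / 2 * (110000 * (M ^ 3 * κ))) * (N * H) := by
    apply mul_le_mul_of_nonneg_right _ H0
    have : 0 < M ^ 3 * κ := by positivity
    linarith
  linarith

end Regime
end core

/-! ### Translation to the energy–Casimir functional -/

lemma Epart_eq (Y : ℝ → ℝ) (yinf : ℝ) :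
    Epart (fun r => yinf - Y r) = fun z => Real.exp yinf * Sf Y z := by
  funext z
  simp only [Epart, Sf, sub_eq_add_neg, Real.exp_add]
  ring

/-- The derivative `φ'(E)` carries a factor `1/E₀` from the normalisation of the energy. -/
lemma phiE_eq (φ Y : ℝ → ℝ) (yinf : ℝ) (z : V3 × V3) :
    phiE φ (Real.exp yinf) (Epart (fun r => yinf - Y r) z) = -(psi φ Y z / Real.exp yinf) := by
  have h0 := Real.exp_pos yinf
  have e : (fun s => φ (1 - s / Real.exp yinf)) =
      fun s => (fun t => φ (1 - t)) ((Real.exp yinf)⁻¹ * s) := by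
    funext s; simp only [div_eq_inv_mul]
  rw [phiE, e, deriv_comp_mul_left (Real.exp yinf)⁻¹ (fun t => φ (1 - t)), deriv_comp_const_sub,
    Epart_eq, psi, inv_mul_cancel_left₀ h0.ne', smul_eq_mul]
  ring

lemma lamh_eq (φ Y lf : ℝ → ℝ) (yinf : ℝ) (h : V3 × V3 → ℝ) (x : V3) :
    lamh (fun r => yinf - Y r) lf (Real.exp yinf) φ h x = Lam φ Y lf h x := by
  have h0 := Real.exp_pos yinf
  have e : ∀ v : V3, phiE φ (Real.exp yinf) (Epart (fun r => yinf - Y r) (x, v)) *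
      h (x, v) * wfun (x, v) = -(Real.exp yinf)⁻¹ * (psi φ Y (x, v) * h (x, v) * wfun (x, v)) := by
    intro v
    rw [phiE_eq]
    ring
  simp only [lamh, Lam, e, integral_const_mul]
  rw [show yinf - Y ‖x‖ + lf ‖x‖ = yinf + (-Y ‖x‖) - (-lf ‖x‖) by ring, Real.exp_sub,
    Real.exp_add]
  field_simp

lemma supp_eq (φ Y : ℝ → ℝ) (hp : Prof φ) (yinf : ℝ) :
    {z : V3 × V3 | 0 < φ (1 - Epart (fun r => yinf - Y r) z / Real.exp yinf)} =
      {z | Sf Y z < 1} := by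
  ext z
  simp only [mem_ofPred_eq, Epart_eq]
  rw [mul_div_cancel_left₀ _ (Real.exp_pos yinf).ne']
  constructor
  · intro h
    by_contra h'
    exact h.ne' (hp.zero _ (by linarith))
  · intro h
    exact hp.pos _ (by linarith)

/-- The second variation in terms of the normalised quantities `psi`, `X`, `cf`, `Lam`. -/
lemma Aform_eq {φ Y lf : ℝ → ℝ} {h : V3 × V3 → ℝ} {C : ℝ} (q : Qual φ Y) (g : Gen Y h C)
    (yinf : ℝ) :
    Aform (fun r => yinf - Y r) lf (Real.exp yinf) φ
      (fh (fun r => yinf - Y r) lf (Real.exp yinf) φ h)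
      (fun r => lamh (fun r => yinf - Y r) lf (Real.exp yinf) φ h (r • e1)) =
    Real.exp yinf * (1 / 2 * (∫ z, psi φ Y z *
      (Real.exp (-lf ‖z.1‖) * (fderiv ℝ h z (X Y z) + cf φ Y lf h z) ^ 2)) -
    1 / 2 * ∫ r in Ioi (0 : ℝ), Real.exp (-Y r) * Real.exp (-lf r) *
      (1 - 2 * r * deriv Y r) * Lam φ Y lf h (r • e1) ^ 2) := by
  have h0 := Real.exp_pos yinf
  have e1 : ∫ z : V3 × V3, Real.exp (lf ‖z.1‖) *
      (fh (fun r => yinf - Y r) lf (Real.exp yinf) φ h z) ^ 2 /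
        |phiE φ (Real.exp yinf) (Epart (fun r => yinf - Y r) z)| =
      Real.exp yinf * ∫ z, psi φ Y z *
        (Real.exp (-lf ‖z.1‖) * (fderiv ℝ h z (X Y z) + cf φ Y lf h z) ^ 2) := by
    rw [← integral_const_mul]
    refine integral_congr_ae ?_
    filter_upwards [Qual.null_x] with z hx
    have hp := q.psi_nonneg z
    simp only [fh]
    rw [phiE_eq, abs_neg, abs_of_nonneg (by positivity), lamh_eq]
    rcases hp.eq_or_lt with hz | hz
    · rw [← hz]; simp
    have hD : z ∈ Dp Y := ⟨hx, by
      by_contra h'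
      exact hz.ne' (q.psi_zero (not_lt.1 h'))⟩
    have hj := jap_pos z.2
    have hl := Real.exp_pos (lf ‖z.1‖)
    rw [Epart_eq, pb_eq _ hx (q.Yd (norm_pos_iff.2 hx))
      ((q.h_diff g hD).differentiableAt (by norm_num)), sub_eq_add_neg yinf, Real.exp_add, cf,
      Real.exp_neg (lf ‖z.1‖)]
    field_simp
  have e2 : ∫ r in Ioi (0 : ℝ), Real.exp (yinf - Y r - lf r) *
      (2 * r * deriv (fun r => yinf - Y r) r + 1) *
        (lamh (fun r => yinf - Y r) lf (Real.exp yinf) φ h (r • _root_.e1)) ^ 2 =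
      Real.exp yinf * ∫ r in Ioi (0 : ℝ), Real.exp (-Y r) * Real.exp (-lf r) *
        (1 - 2 * r * deriv Y r) * Lam φ Y lf h (r • _root_.e1) ^ 2 := by
    rw [← integral_const_mul]
    refine integral_congr_ae (ae_of_all _ fun r => ?_)
    simp only [lamh_eq, deriv_const_sub]
    rw [sub_eq_add_neg, sub_eq_add_neg yinf, Real.exp_add, Real.exp_add]
    ring
  rw [Aform, e1, e2]
  ring

/-- The coercivity bound in terms of the normalised quantities. -/
lemma rhs_le {φ Y : ℝ → ℝ} {h : V3 × V3 → ℝ} {C N : ℝ} (q : Qual φ Y) (g : Gen Y h C)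
    {yinf : ℝ} (hy : -1 ≤ yinf) (hN : 0 < N) :
    ∫ z : V3 × V3, |phiE φ (Real.exp yinf) (Epart (fun r => yinf - Y r) z)| *
      ((‖z.1‖ * wfun z) ^ 2 * (pbracket (Epart (fun r => yinf - Y r))
        (fun z' => h z' / (‖z'.1‖ * wfun z')) z) ^ 2 + N * (h z) ^ 2) ≤
    Real.exp yinf * ((∫ z, psi φ Y z * (fderiv ℝ h z (X Y z) - h z / ip z * Gf Y z) ^ 2) +
      9 * N * ∫ z, psi φ Y z * h z ^ 2) := by
  have h0 := Real.exp_pos yinf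
  have h1 : 1 ≤ 9 * Real.exp yinf ^ 2 := by
    have a1 : Real.exp 1 ≤ 3 := Real.exp_one_lt_three.le
    have a2 : Real.exp (-1) ≤ Real.exp yinf := Real.exp_le_exp.2 hy
    have a3 : Real.exp (-1) * Real.exp 1 = 1 := by rw [← Real.exp_add]; simp
    have a4 := mul_le_mul_of_nonneg_left a1 (Real.exp_pos (-1)).le
    have a5 : 1 ≤ 3 * Real.exp yinf := by linarith
    nlinarith
  have i1 := (q.int_W g).const_mul (Real.exp yinf)
  have i2 := (q.int_hh g).const_mul (Real.exp yinf * (9 * N))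
  have e := integral_add i1 i2
  rw [integral_const_mul, integral_const_mul] at e
  rw [mul_add, ← mul_assoc (Real.exp yinf) (9 * N), ← e]
  refine integral_mono_of_nonneg (ae_of_all _ fun z => by positivity) (i1.add i2) ?_
  filter_upwards [Qual.null_x] with z hx
  have hp := q.psi_nonneg z
  rw [phiE_eq, abs_neg, abs_of_nonneg (by positivity)]
  rcases hp.eq_or_lt with hz | hz
  · rw [← hz]; simp
  have hD : z ∈ Dp Y := ⟨hx, by
    by_contra h'
    exact hz.ne' (q.psi_zero (not_lt.1 h'))⟩
  rw [Epart_eq]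
  have b1 := pb_quot (Real.exp yinf) hx (q.Yd (norm_pos_iff.2 hx))
      ((q.h_diff g hD).differentiableAt (by norm_num))
  have b2 : N * h z ^ 2 ≤ Real.exp yinf ^ 2 * (9 * N * h z ^ 2) := by
    have : 0 ≤ N * h z ^ 2 := by positivity
    nlinarith
  calc _ ≤ psi φ Y z / Real.exp yinf * (Real.exp yinf ^ 2 *
        (fderiv ℝ h z (X Y z) - h z / ip z * Gf Y z) ^ 2 +
        Real.exp yinf ^ 2 * (9 * N * h z ^ 2)) := by gcongr
    _ = _ := by
      field_simp

/-- The regime holds for `e^{2λ} = (1 - 2m/r)⁻¹`, because `2m/r = O(κ)` inside the support. -/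
lemma regime_of_bounds {φ Y : ℝ → ℝ} {κ M c N yinf : ℝ} (hφcont : Continuous φ)
    (hs : IsEVSteady φ κ Y) (sb : SteadyBounds φ κ M c N Y yinf) (κ0 : 0 < κ)
    (κ1 : κ ≤ 1 / 60) (M1 : 1 ≤ M) (Mκ : M * κ ≤ 1 / 2) (N0 : 0 < N) (c0 : 0 < c) :
    Regime φ κ M c N Y yinf (fun r => -(1 / 2) * Real.log (1 - 2 * mEV φ Y r / r)) where
  sb := sb
  κ0 := κ0
  κ1 := κ1
  M1 := M1
  Mκ := Mκ
  N0 := N0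
  c0 := c0
  lm := by
    have h1 : Continuous fun x : V3 => mEV φ Y ‖x‖ :=
      (m_contOn hφcont hs).comp_continuous continuous_norm fun x => norm_nonneg x
    have h2 := h1.measurable
    fun_prop
  lb := fun r hr hY => by
    have hb := b_pos hs hr
    have h1 := sb.m_nonneg r hr
    have h2 := sb.m_le r hr hY
    set b := 1 - 2 * mEV φ Y r / r with hbd
    set t := Real.exp (-(-(1 / 2) * Real.log b)) with ht
    have e : t ^ 2 = b := by
      rw [ht, ← Real.exp_nat_mul]
      rw [show ((2 : ℕ) : ℝ) * -(-(1 / 2) * Real.log b) = Real.log b by push_cast; ring,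
        Real.exp_log hb]
    have t0 : 0 < t := Real.exp_pos _
    have hMκ : 0 < M * κ := by positivity
    have t1 : t ≤ 1 := by nlinarith
    refine ⟨?_, t1⟩
    nlinarith

/-- **Energy–Casimir coercivity estimate for the Einstein–Vlasov system with small
central redshift.**  For `0 < κ ≤ κ*` and every spherically symmetric, odd-in-`v`
generating function `h ∈ C¹(D̄)`,
`A(f_h,f_h) ≥ C* ∬ |φ'(E)| ((rw)²|{E,h/(rw)}|² + κ^{1+2a}|h|²) dv dx`. -/
theorem stmt_18 (φ : ℝ → ℝ) (hφcont : Continuous φ)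
    (hφC2 : ContDiffOn ℝ 2 φ (Ioi 0))
    (hφ0 : ∀ η : ℝ, η ≤ 0 → φ η = 0) (hφpos : ∀ η : ℝ, 0 < η → 0 < φ η)
    (hφ' : ∀ η : ℝ, 0 < η → 0 < deriv φ η)
    (Cc k δ : ℝ) (hCc : 0 < Cc) (hk : 0 < k) (hk' : k < 3 / 2) (hδ : 0 < δ)
    (hO : ∃ C₁ : ℝ, 0 < C₁ ∧ ∃ η₁ : ℝ, 0 < η₁ ∧
      ∀ η : ℝ, 0 < η → η < η₁ → |φ η - Cc * η ^ k| ≤ C₁ * η ^ (k + δ))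
    (a : ℝ) (ha : a = (k + 1 / 2) / 2) :
    ∃ Cstar κstar : ℝ, 0 < Cstar ∧ 0 < κstar ∧
      ∀ κ : ℝ, 0 < κ → κ ≤ κstar →
        ∀ Y : ℝ → ℝ, IsEVSteady φ κ Y →
        ∀ yinf : ℝ, Tendsto Y atTop (nhds yinf) →
        ∀ μf lamf : ℝ → ℝ, ∀ E0 : ℝ,
          μf = (fun r => yinf - Y r) →
          lamf = (fun r => -(1 / 2) * Real.log (1 - 2 * mEV φ Y r / r)) →
          E0 = Real.exp yinf →
        ∀ h : V3 × V3 → ℝ,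
          ContDiffOn ℝ 1 h (closure {z : V3 × V3 | 0 < φ (1 - Epart μf z / E0)}) →
          SphSym h → (∀ x v : V3, h (x, -v) = -h (x, v)) →
          Aform μf lamf E0 φ (fh μf lamf E0 φ h) (fun r => lamh μf lamf E0 φ h (r • e1)) ≥
            Cstar * ∫ z : V3 × V3, |phiE φ E0 (Epart μf z)| *
              ((‖z.1‖ * wfun z) ^ 2 *
                  (pbracket (Epart μf)
                    (fun z' => h z' / (‖z'.1‖ * wfun z')) z) ^ 2 +
                κ ^ (1 + 2 * a) * (h z) ^ 2) := by
  obtain ⟨M, c, κ0, hM, hc, hκ0, -, hsb⟩ :=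
    steady_bounds φ hφcont hφ0 hφpos Cc k δ hCc hk hk' hδ hO a ha
  have hM0 : 0 < M := by linarith
  refine ⟨min (1 / 8) (c / 32) / 9,
    min (min κ0 (1 / 60)) (min (1 / (2 * M)) (c / (2000000 * M ^ 3))), by positivity,
    by positivity, ?_⟩
  rintro κ hκ hκs Y hY yinf hlim μf lamf E0 rfl rfl rfl h hh hsym hodd
  have k1 := hκs.trans ((min_le_left _ _).trans (min_le_left _ _))
  have k2 := hκs.trans ((min_le_left _ _).trans (min_le_right _ _))
  have k3 := hκs.trans ((min_le_right _ _).trans (min_le_left _ _))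
  have k4 := hκs.trans ((min_le_right _ _).trans (min_le_right _ _))
  rw [le_div_iff₀ (by positivity)] at k3 k4
  have sb := hsb κ hκ k1 Y hY yinf hlim
  have hN : 0 < κ ^ (1 + 2 * a) := Real.rpow_pos_of_pos hκ _
  have S := regime_of_bounds hφcont hY sb hκ k2 hM (by linarith) hN hc
  have hp : Prof φ := ⟨hφcont, hφC2, hφ0, hφpos, hφ'⟩
  have q : Qual φ Y := ⟨hp, hY.1, fun r hr => (sb.Y_le r hr).trans (by linarith), sb.radius⟩
  rw [supp_eq φ Y hp] at hh
  obtain ⟨C, g⟩ := gen_exists q hh hsym hodd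
  have core := S.core q g hsym (by linarith)
  -- the factor `9` in `rhs_le`, and in the constant, bounds `E₀⁻²`, as `E₀ ≥ e^{-1}`
  have r1 := rhs_le q g sb.yinf_ge hN
  have hE := Real.exp_pos yinf
  have W0 : 0 ≤ ∫ z, psi φ Y z * (fderiv ℝ h z (X Y z) - h z / ip z * Gf Y z) ^ 2 :=
    integral_nonneg fun z => mul_nonneg (q.psi_nonneg z) (sq_nonneg _)
  have H0 : 0 ≤ κ ^ (1 + 2 * a) * ∫ z, psi φ Y z * h z ^ 2 :=
    mul_nonneg hN.le (integral_nonneg fun z => mul_nonneg (q.psi_nonneg z) (sq_nonneg _))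
  rw [Aform_eq q g, ge_iff_le]
  have hm1 : min (1 / 8) (c / 32) ≤ 1 / 8 := min_le_left _ _
  have hm2 : min (1 / 8) (c / 32) ≤ c / 32 := min_le_right _ _
  have hm0 : 0 < min (1 / 8) (c / 32) := by positivity
  set m := min (1 / 8) (c / 32)
  refine (mul_le_mul_of_nonneg_left r1 (by positivity)).trans ?_
  rw [mul_left_comm]
  refine mul_le_mul_of_nonneg_left (le_trans ?_ core) hE.le
  nlinarith [mul_le_mul_of_nonneg_right hm1 W0, mul_le_mul_of_nonneg_right hm2 H0,
    mul_nonneg hm0.le W0]
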